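/- arXiv:2506.23970 — 2 statements merged into one kernel-verified Lean document; each statement's English description precedes it below -/
import Mathlib

section
/- Let p : ℕ → [0,1] satisfy n·p(n)/log n → ∞ as n → ∞. Then for every ε > 0, with high probability the Erdős–Rényi random graph G ~ G(n, p(n)) has the following property: for every vertex r of G, there exist at least ⌊(1-ε)·n·p(n)⌋ independent spanning trees of G rooted at r. -/
open Filter

/-- The spanning trees `T 0, …, T (t-1)` of `G` are independent spanning trees rooted at `r`:
each `T i` is a spanning tree of `G` (a tree on the whole vertex set, all of whose edges lie
in `G`), and for every vertex `v ≠ r`, the paths from `v` to `r` in any two distinct trees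
share only the vertices `v` and `r`. -/
def IsIST {n : ℕ} (G : SimpleGraph (Fin n)) (r : Fin n) {t : ℕ}
    (T : Fin t → SimpleGraph (Fin n)) : Prop :=
  (∀ i, T i ≤ G ∧ (T i).IsTree) ∧
  ∀ v : Fin n, v ≠ r → ∀ i j : Fin t, i ≠ j →
    ∀ p : (T i).Walk v r, ∀ q : (T j).Walk v r, p.IsPath → q.IsPath →
      ∀ x : Fin n, x ∈ p.support → x ∈ q.support → x = v ∨ x = r

/-- `G` contains (at least) `t` independent spanning trees rooted at `r`. -/
def HasISTs {n : ℕ} (G : SimpleGraph (Fin n)) (r : Fin n) (t : ℕ) : Prop :=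
  ∃ T : Fin t → SimpleGraph (Fin n), IsIST G r T

open Classical in
/-- Probability that the Erdős–Rényi random graph `G(n,p)` satisfies the property `A`:
each graph `G` on `[n]` receives probability `p^{e(G)} (1-p)^{C(n,2)-e(G)}`. -/
noncomputable def erProb (n : ℕ) (p : ℝ) (A : SimpleGraph (Fin n) → Prop) : ℝ :=
  ∑ G : SimpleGraph (Fin n),
    if A G then p ^ (Nat.card G.edgeSet) * (1 - p) ^ (n.choose 2 - Nat.card G.edgeSet)
    else 0


section Prob
open Classical

/-- The weight of a graph. -/
noncomputable def wt (n : ℕ) (p : ℝ) (G : SimpleGraph (Fin n)) : ℝ :=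
  p ^ (Nat.card G.edgeSet) * (1 - p) ^ (n.choose 2 - Nat.card G.edgeSet)

lemma wt_nonneg {n : ℕ} {p : ℝ} (h0 : 0 ≤ p) (h1 : p ≤ 1) (G : SimpleGraph (Fin n)) :
    0 ≤ wt n p G := by
  unfold wt
  have : 0 ≤ 1 - p := by linarith
  positivity

lemma card_edgeSet_eq {n : ℕ} (G : SimpleGraph (Fin n)) :
    Nat.card G.edgeSet = G.edgeFinset.card := by
  rw [Nat.card_eq_fintype_card, SimpleGraph.edgeFinset_card]

lemma erProb_eq (n : ℕ) (p : ℝ) (A : SimpleGraph (Fin n) → Prop) :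
    erProb n p A = ∑ G : SimpleGraph (Fin n), if A G then wt n p G else 0 := by
  unfold erProb wt
  refine Finset.sum_congr rfl fun G _ => ?_
  congr

lemma mgf (n : ℕ) (p x : ℝ) (F : Finset (Sym2 (Fin n))) (hF : ∀ e ∈ F, ¬ e.IsDiag) :
    ∑ G : SimpleGraph (Fin n), wt n p G * x ^ (F.filter (fun e => e ∈ G.edgeSet)).card
      = (1 - p + p * x) ^ F.card := by
  set E : Finset (Sym2 (Fin n)) := (⊤ : SimpleGraph (Fin n)).edgeFinset with hE
  have hEc : E.card = n.choose 2 := by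
    have := SimpleGraph.card_edgeFinset_top_eq_card_choose_two (V := Fin n)
    rw [Fintype.card_fin] at this
    rw [← this, hE]
  have hEm : ∀ e, e ∈ E ↔ ¬ e.IsDiag := by
    intro e; simp [hE]
  have hFE : F ⊆ E := fun e he => (hEm e).2 (hF e he)
  have key := Finset.prod_add (fun e => p * (if e ∈ F then x else 1)) (fun _ => 1 - p) E
  have h1 : ∏ e ∈ E, (p * (if e ∈ F then x else 1) + (1 - p)) = (1 - p + p * x) ^ F.card := by
    have : ∀ e ∈ E, (p * (if e ∈ F then x else 1) + (1 - p))
        = if e ∈ F then (1 - p + p * x) else 1 := by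
      intro e _; split_ifs <;> ring
    rw [Finset.prod_congr rfl this, Finset.prod_ite_mem, Finset.inter_eq_right.2 hFE,
      Finset.prod_const]
  rw [← h1, key]
  refine Finset.sum_bij' (fun G _ => G.edgeFinset)
    (fun S _ => SimpleGraph.fromEdgeSet (S : Set (Sym2 (Fin n)))) ?_ ?_ ?_ ?_ ?_
  · intro G _
    rw [Finset.mem_powerset]
    intro e he
    rw [hEm]
    exact G.not_isDiag_of_mem_edgeFinset he
  · intro S _; simp
  · intro G _; simp
  · intro S hS
    rw [Finset.mem_powerset] at hS
    ext e
    simp only [SimpleGraph.mem_edgeFinset, SimpleGraph.edgeSet_fromEdgeSet]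
    constructor
    · intro h; exact h.1
    · intro h; exact ⟨h, by simpa using (hEm e).1 (hS h)⟩
  · intro G _
    have hGE : G.edgeFinset ⊆ E := by
      intro e he
      rw [hEm]
      exact G.not_isDiag_of_mem_edgeFinset he
    rw [Finset.prod_mul_distrib, Finset.prod_const, Finset.prod_const,
      Finset.prod_ite_mem, Finset.prod_const, Finset.card_sdiff_of_subset hGE, hEc]
    unfold wt
    rw [card_edgeSet_eq]
    have : F.filter (fun e => e ∈ G.edgeSet) = G.edgeFinset ∩ F := by
      ext e; simp [and_comm]
    rw [this]; ring

lemma wt_sum (n : ℕ) (p : ℝ) : ∑ G : SimpleGraph (Fin n), wt n p G = 1 := by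
  have := mgf n p 1 ∅ (by simp)
  simpa using this

lemma erProb_mono {n : ℕ} {p : ℝ} (h0 : 0 ≤ p) (h1 : p ≤ 1) {A B : SimpleGraph (Fin n) → Prop}
    (h : ∀ G, A G → B G) : erProb n p A ≤ erProb n p B := by
  rw [erProb_eq, erProb_eq]
  refine Finset.sum_le_sum fun G _ => ?_
  have := wt_nonneg h0 h1 G
  by_cases hA : A G
  · simp [hA, h G hA]
  · simp only [hA, if_false]; split_ifs <;> simp [this]

lemma erProb_not (n : ℕ) (p : ℝ) (A : SimpleGraph (Fin n) → Prop) :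
    erProb n p A = 1 - erProb n p (fun G => ¬ A G) := by
  rw [erProb_eq, erProb_eq, ← wt_sum n p, ← Finset.sum_sub_distrib]
  refine Finset.sum_congr rfl fun G _ => ?_
  by_cases hA : A G <;> simp [hA]

lemma erProb_nonneg {n : ℕ} {p : ℝ} (h0 : 0 ≤ p) (h1 : p ≤ 1) (A : SimpleGraph (Fin n) → Prop) :
    0 ≤ erProb n p A := by
  rw [erProb_eq]
  refine Finset.sum_nonneg fun G _ => ?_
  have := wt_nonneg h0 h1 G
  split_ifs <;> simp [this]

lemma erProb_le_one {n : ℕ} {p : ℝ} (h0 : 0 ≤ p) (h1 : p ≤ 1) (A : SimpleGraph (Fin n) → Prop) :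
    erProb n p A ≤ 1 := by
  rw [erProb_not]; linarith [erProb_nonneg h0 h1 (fun G => ¬ A G)]

lemma erProb_or {n : ℕ} {p : ℝ} (h0 : 0 ≤ p) (h1 : p ≤ 1) (A B : SimpleGraph (Fin n) → Prop) :
    erProb n p (fun G => A G ∨ B G) ≤ erProb n p A + erProb n p B := by
  rw [erProb_eq, erProb_eq, erProb_eq, ← Finset.sum_add_distrib]
  refine Finset.sum_le_sum fun G _ => ?_
  have := wt_nonneg h0 h1 G
  by_cases hA : A G <;> by_cases hB : B G <;> simp [hA, hB, this]

lemma erProb_exists {n : ℕ} {p : ℝ} (h0 : 0 ≤ p) (h1 : p ≤ 1) {ι : Type*} (s : Finset ι)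
    (A : ι → SimpleGraph (Fin n) → Prop) :
    erProb n p (fun G => ∃ i ∈ s, A i G) ≤ ∑ i ∈ s, erProb n p (A i) := by
  simp_rw [erProb_eq]
  rw [Finset.sum_comm]
  refine Finset.sum_le_sum fun G _ => ?_
  have hw := wt_nonneg h0 h1 G
  have hnn : ∀ i ∈ s, 0 ≤ (if A i G then wt n p G else 0) := by
    intro i _; split_ifs <;> simp [hw]
  split_ifs with h
  · obtain ⟨i, hi, hA⟩ := h
    have := Finset.single_le_sum hnn hi
    simpa [hA] using this
  · exact Finset.sum_nonneg hnn

lemma one_sub_pow_le {p : ℝ} (h1 : p ≤ 1) (N : ℕ) : (1 - p) ^ N ≤ Real.exp (-(p * N)) := by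
  have h := Real.add_one_le_exp (-p)
  calc (1 - p) ^ N ≤ (Real.exp (-p)) ^ N :=
        pow_le_pow_left₀ (by linarith) (by linarith) N
    _ = Real.exp (-(p * N)) := by rw [← Real.exp_nat_mul]; ring_nf

/-- Probability that a set of pairs has no edge. -/
lemma erProb_noEdge {n : ℕ} {p : ℝ} (h1 : p ≤ 1) (F : Finset (Sym2 (Fin n)))
    (hF : ∀ e ∈ F, ¬ e.IsDiag) :
    erProb n p (fun G => ∀ e ∈ F, e ∉ G.edgeSet) ≤ Real.exp (-(p * F.card)) := by
  have := mgf n p 0 F hF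
  rw [erProb_eq]
  refine le_trans (le_of_eq ?_) (one_sub_pow_le h1 F.card)
  have h2 : 1 - p + p * 0 = 1 - p := by ring
  rw [h2] at this
  rw [← this]
  refine Finset.sum_congr rfl fun G _ => ?_
  split_ifs with h
  · rw [Finset.filter_false_of_mem h]; simp
  · have : (F.filter (fun e => e ∈ G.edgeSet)).card ≠ 0 := by
      push Not at h
      obtain ⟨e, he, hG⟩ := h
      exact Finset.card_ne_zero_of_mem (Finset.mem_filter.2 ⟨he, hG⟩)
    simp [this]

/-- Chernoff lower tail. -/
lemma erProb_chernoff {n : ℕ} {p : ℝ} (h0 : 0 ≤ p) (h1 : p ≤ 1) (F : Finset (Sym2 (Fin n)))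
    (hF : ∀ e ∈ F, ¬ e.IsDiag) (a l : ℝ) (hl : 0 ≤ l) :
    erProb n p (fun G => ((F.filter (fun e => e ∈ G.edgeSet)).card : ℝ) ≤ a) ≤
      Real.exp (l * a - F.card * p * (l - l ^ 2 / 2)) := by
  have h := mgf n p (Real.exp (-l)) F hF
  have hexp : Real.exp (-l) ≤ 1 - l + l ^ 2 / 2 := by
    have h3 := Real.quadratic_le_exp_of_nonneg hl
    have h4 : Real.exp (-l) = 1 / Real.exp l := by rw [Real.exp_neg]; simp
    rw [h4, div_le_iff₀ (Real.exp_pos l)]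
    have h5 : (1 - l + l ^ 2 / 2) * (1 + l + l ^ 2 / 2) = 1 + l ^ 4 / 4 := by ring
    have h6 : 0 ≤ 1 - l + l ^ 2 / 2 := by nlinarith [sq_nonneg (l - 1)]
    nlinarith [mul_le_mul_of_nonneg_left h3 h6, sq_nonneg (l ^ 2)]
  have h2 : (1 - p + p * Real.exp (-l)) ^ F.card ≤ Real.exp (-(F.card * p * (l - l ^ 2 / 2))) := by
    have h7 : 1 - p + p * Real.exp (-l) ≤ Real.exp (-(p * (l - l ^ 2 / 2))) := by
      have := Real.add_one_le_exp (-(p * (l - l ^ 2 / 2)))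
      nlinarith [mul_le_mul_of_nonneg_left hexp h0]
    have h8 : 0 ≤ 1 - p + p * Real.exp (-l) := by
      have := mul_nonneg h0 (Real.exp_pos (-l)).le
      linarith
    calc _ ≤ (Real.exp (-(p * (l - l ^ 2 / 2)))) ^ F.card := pow_le_pow_left₀ h8 h7 _
      _ = _ := by rw [← Real.exp_nat_mul]; ring_nf
  have h9 : erProb n p (fun G => ((F.filter (fun e => e ∈ G.edgeSet)).card : ℝ) ≤ a) ≤
      Real.exp (l * a) * ∑ G : SimpleGraph (Fin n), wt n p G *
        (Real.exp (-l)) ^ (F.filter (fun e => e ∈ G.edgeSet)).card := by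
    rw [erProb_eq, Finset.mul_sum]
    refine Finset.sum_le_sum fun G _ => ?_
    have hw := wt_nonneg h0 h1 G
    split_ifs with hc
    · have : 1 ≤ Real.exp (l * a) * (Real.exp (-l)) ^ (F.filter (fun e => e ∈ G.edgeSet)).card := by
        rw [← Real.exp_nat_mul, ← Real.exp_add]
        apply Real.one_le_exp
        nlinarith
      nlinarith
    · positivity
  rw [h] at h9
  calc _ ≤ _ := h9
    _ ≤ Real.exp (l * a) * Real.exp (-(F.card * p * (l - l ^ 2 / 2))) := by gcongr
    _ = _ := by rw [← Real.exp_add]; ring_nf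

lemma card_edge_split {n : ℕ} (G K : SimpleGraph (Fin n)) :
    Nat.card (G \ K).edgeSet + Nat.card (G ⊓ K).edgeSet = Nat.card G.edgeSet := by
  rw [SimpleGraph.edgeSet_sdiff, SimpleGraph.edgeSet_inf, Nat.card_coe_set_eq,
    Nat.card_coe_set_eq, Nat.card_coe_set_eq, add_comm]
  exact Set.ncard_inter_add_ncard_sdiff_eq_ncard _ _ (Set.toFinite _)

lemma card_edge_mix {n : ℕ} (G H K : SimpleGraph (Fin n)) :
    Nat.card ((G \ K) ⊔ (H ⊓ K)).edgeSet =
      Nat.card (G \ K).edgeSet + Nat.card (H ⊓ K).edgeSet := by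
  rw [SimpleGraph.edgeSet_sup, SimpleGraph.edgeSet_sdiff, SimpleGraph.edgeSet_inf,
    Nat.card_coe_set_eq, Nat.card_coe_set_eq, Nat.card_coe_set_eq]
  refine Set.ncard_union_eq ?_ (Set.toFinite _) (Set.toFinite _)
  rw [Set.disjoint_left]
  intro e h1 h2
  exact h1.2 h2.2

lemma card_edge_le {n : ℕ} (G : SimpleGraph (Fin n)) : Nat.card G.edgeSet ≤ n.choose 2 := by
  simp only [card_edgeSet_eq]
  have := SimpleGraph.card_edgeFinset_le_card_choose_two (G := G)
  simpa using this

lemma mix_mix {n : ℕ} (G H K : SimpleGraph (Fin n)) :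
    (((G \ K) ⊔ (H ⊓ K)) \ K) ⊔ (((H \ K) ⊔ (G ⊓ K)) ⊓ K) = G := by
  ext a b; simp only [SimpleGraph.sup_adj, SimpleGraph.inf_adj, SimpleGraph.sdiff_adj]; tauto

/-- Conditioning on the part of the graph outside `K`. -/
lemma erProb_cond {n : ℕ} {p : ℝ} (h0 : 0 ≤ p) (h1 : p ≤ 1) (K : SimpleGraph (Fin n))
    (A : SimpleGraph (Fin n) → SimpleGraph (Fin n) → Prop) (c : ℝ)
    (h : ∀ H, erProb n p (fun G => A H (G ⊓ K)) ≤ c) :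
    erProb n p (fun G => A (G \ K) (G ⊓ K)) ≤ c := by
  have e1 : erProb n p (fun G => A (G \ K) (G ⊓ K)) =
      ∑ x : SimpleGraph (Fin n) × SimpleGraph (Fin n),
        wt n p x.1 * wt n p x.2 * (if A (x.1 \ K) (x.1 ⊓ K) then 1 else 0) := by
    rw [erProb_eq, Fintype.sum_prod_type]
    refine Finset.sum_congr rfl fun G _ => ?_
    by_cases hA : A (G \ K) (G ⊓ K)
    · simp only [hA, if_true, mul_one]
      rw [← Finset.mul_sum, wt_sum, mul_one]
    · simp [hA]
  have e2 : ∑ x : SimpleGraph (Fin n) × SimpleGraph (Fin n),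
        wt n p x.1 * wt n p x.2 * (if A (x.1 \ K) (x.1 ⊓ K) then 1 else 0) =
      ∑ x : SimpleGraph (Fin n) × SimpleGraph (Fin n),
        wt n p x.1 * wt n p x.2 * (if A (x.1 \ K) (x.2 ⊓ K) then (1 : ℝ) else 0) := by
    refine Finset.sum_bij' (fun x _ => ((x.1 \ K) ⊔ (x.2 ⊓ K), (x.2 \ K) ⊔ (x.1 ⊓ K)))
      (fun x _ => ((x.1 \ K) ⊔ (x.2 ⊓ K), (x.2 \ K) ⊔ (x.1 ⊓ K))) (by simp) (by simp) ?_ ?_ ?_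
    · rintro ⟨G, H⟩ _; simp only [mix_mix]
    · rintro ⟨G, H⟩ _; simp only [mix_mix]
    · rintro ⟨G, H⟩ _
      have a1 : ((G \ K) ⊔ (H ⊓ K)) \ K = G \ K := by
        ext a b; simp only [SimpleGraph.sup_adj, SimpleGraph.inf_adj, SimpleGraph.sdiff_adj]; tauto
      have a2 : ((H \ K) ⊔ (G ⊓ K)) ⊓ K = G ⊓ K := by
        ext a b; simp only [SimpleGraph.sup_adj, SimpleGraph.inf_adj, SimpleGraph.sdiff_adj]; tauto
      simp only [a1, a2]
      congr 1
      have c1 := card_edge_split G K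
      have c2 := card_edge_split H K
      have c3 := card_edge_mix G H K
      have c4 := card_edge_mix H G K
      have d1 := card_edge_le G
      have d2 := card_edge_le H
      have d3 := card_edge_le ((G \ K) ⊔ (H ⊓ K))
      have d4 := card_edge_le ((H \ K) ⊔ (G ⊓ K))
      unfold wt
      have m : ∀ a b c d : ℕ, p ^ a * (1 - p) ^ b * (p ^ c * (1 - p) ^ d) =
          p ^ (a + c) * (1 - p) ^ (b + d) := by intros; ring
      rw [m, m]
      congr 2 <;> omega
  rw [e1, e2, Fintype.sum_prod_type]
  have e3 : ∀ G : SimpleGraph (Fin n), ∑ H : SimpleGraph (Fin n),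
      wt n p G * wt n p H * (if A (G \ K) (H ⊓ K) then (1 : ℝ) else 0) =
      wt n p G * erProb n p (fun H => A (G \ K) (H ⊓ K)) := by
    intro G
    rw [erProb_eq, Finset.mul_sum]
    refine Finset.sum_congr rfl fun H _ => ?_
    split_ifs <;> ring
  simp only [e3]
  calc _ ≤ ∑ G : SimpleGraph (Fin n), wt n p G * c := by
        refine Finset.sum_le_sum fun G _ => ?_
        exact mul_le_mul_of_nonneg_left (h _) (wt_nonneg h0 h1 G)
    _ = c := by rw [← Finset.sum_mul, wt_sum, one_mul]

end Prob

section Det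
open Classical

lemma exists_tree {V : Type*} [Fintype V] (G : SimpleGraph V) (r : V) (f : V → V) (dep : V → ℕ)
    (h : ∀ v, v ≠ r → G.Adj v (f v) ∧ dep (f v) < dep v) :
    ∃ T : SimpleGraph V, T ≤ G ∧ T.IsTree ∧ ∀ S : Set V, (∀ x ∈ S, x ≠ r → f x ∈ S) →
      ∀ v ∈ S, ∀ p : T.Walk v r, p.IsPath → ∀ x ∈ p.support, x ∈ S := by
  set T : SimpleGraph V := SimpleGraph.fromEdgeSet
    (((Finset.univ.erase r).image (fun v => s(v, f v)) : Finset (Sym2 V)) : Set (Sym2 V)) with hT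
  have hadj : ∀ v, v ≠ r → T.Adj v (f v) := by
    intro v hv
    rw [hT, SimpleGraph.fromEdgeSet_adj]
    refine ⟨?_, (h v hv).1.ne⟩
    simp only [Finset.coe_image, Set.mem_image, Finset.mem_coe, Finset.mem_erase, Finset.mem_univ,
      and_true]
    exact ⟨v, hv, rfl⟩
  have hTG : T ≤ G := by
    intro a b hab
    rw [hT, SimpleGraph.fromEdgeSet_adj] at hab
    obtain ⟨hab, _⟩ := hab
    simp only [Finset.coe_image, Set.mem_image, Finset.mem_coe, Finset.mem_erase, Finset.mem_univ,
      and_true] at hab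
    obtain ⟨v, hv, he⟩ := hab
    have := (h v hv).1
    rw [← SimpleGraph.mem_edgeSet] at this ⊢
    rwa [he] at this
  have hwalk : ∀ (S : Set V), (∀ x ∈ S, x ≠ r → f x ∈ S) → ∀ k : ℕ, ∀ v ∈ S, dep v ≤ k →
      ∃ p : T.Walk v r, ∀ x ∈ p.support, x ∈ S := by
    intro S hS k
    induction k with
    | zero =>
      intro v hv hd
      by_cases hvr : v = r
      · subst hvr; exact ⟨SimpleGraph.Walk.nil, by simpa using hv⟩
      · have := (h v hvr).2; omega
    | succ k ih =>
      intro v hv hd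
      by_cases hvr : v = r
      · subst hvr; exact ⟨SimpleGraph.Walk.nil, by simpa using hv⟩
      · obtain ⟨q, hq⟩ := ih (f v) (hS v hv hvr) (by have := (h v hvr).2; omega)
        refine ⟨SimpleGraph.Walk.cons (hadj v hvr) q, ?_⟩
        intro x hx
        rw [SimpleGraph.Walk.support_cons, List.mem_cons] at hx
        rcases hx with rfl | hx
        · exact hv
        · exact hq x hx
  have hconn : T.Connected := by
    have hr : ∀ v, T.Reachable v r := fun v => by
      obtain ⟨p, _⟩ := hwalk Set.univ (by simp) (dep v) v trivial le_rfl
      exact ⟨p⟩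
    have : Nonempty V := ⟨r⟩
    exact ⟨fun a b => (hr a).trans (hr b).symm⟩
  have htree : T.IsTree := by
    rw [SimpleGraph.isTree_iff_connected_and_card]
    refine ⟨hconn, le_antisymm ?_ hconn.card_vert_le_card_edgeSet_add_one⟩
    have h1 : T.edgeSet.ncard ≤ ((Finset.univ.erase r).image (fun v => s(v, f v))).card := by
      rw [← Set.ncard_coe_finset]
      apply Set.ncard_le_ncard _ (Set.toFinite _)
      rw [hT, SimpleGraph.edgeSet_fromEdgeSet]
      exact Set.sdiff_subset
    have h2 : ((Finset.univ.erase r).image (fun v => s(v, f v))).card ≤ Fintype.card V - 1 := by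
      refine Finset.card_image_le.trans ?_
      rw [Finset.card_erase_of_mem (Finset.mem_univ r), Finset.card_univ]
    have h3 : 0 < Fintype.card V := Fintype.card_pos_iff.2 ⟨r⟩
    rw [Nat.card_eq_fintype_card (α := V), Nat.card_coe_set_eq]
    omega
  refine ⟨T, hTG, htree, ?_⟩
  intro S hS v hv p hp x hx
  obtain ⟨q, hq⟩ := hwalk S hS (dep v) v hv le_rfl
  have := (htree.isAcyclic.subsingleton_path v r).elim ⟨p, hp⟩ q.toPath
  have h2 : p = q.toPath.1 := congrArg Subtype.val this
  rw [h2] at hx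
  exact hq x (SimpleGraph.Walk.support_toPath_subset_support q hx)

lemma exists_parent {V : Type*} (G : SimpleGraph V) (s : Set V) (r : V) (hr : r ∈ s)
    (hc : (G.induce s).Connected) :
    ∃ (f : V → V) (dep : V → ℕ), ∀ v ∈ s, v ≠ r → f v ∈ s ∧ G.Adj v (f v) ∧ dep (f v) < dep v := by
  let dep : V → ℕ := fun v => if h : v ∈ s then (G.induce s).dist ⟨v, h⟩ ⟨r, hr⟩ else 0
  have key : ∀ v, ∃ w, v ∈ s → v ≠ r → w ∈ s ∧ G.Adj v w ∧ dep w < dep v := by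
    intro v
    by_cases hv : v ∈ s
    swap
    · exact ⟨v, fun h => absurd h hv⟩
    by_cases hvr : v = r
    · exact ⟨v, fun _ h => absurd hvr h⟩
    obtain ⟨p, hp⟩ := hc.exists_walk_length_eq_dist ⟨v, hv⟩ ⟨r, hr⟩
    have hd : dep v = p.length := by simp only [dep, hv, dif_pos]; exact hp.symm
    cases p with
    | nil => exact absurd rfl hvr
    | @cons _ w _ hvw q =>
      refine ⟨w.1, fun _ _ => ⟨w.2, by simpa using hvw, ?_⟩⟩
      rw [hd, SimpleGraph.Walk.length_cons]
      have : dep w.1 = (G.induce s).dist w ⟨r, hr⟩ := by simp [dep]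
      rw [this]
      have := SimpleGraph.dist_le q
      omega
  choose f hf using key
  exact ⟨f, dep, fun v hv hvr => hf v hv hvr⟩

lemma hasISTs_of_core {n t : ℕ} (G : SimpleGraph (Fin n)) (r : Fin n)
    (C : Fin t → Set (Fin n))
    (hdisj : ∀ i j, i ≠ j → Disjoint (C i) (C j))
    (hrC : ∀ i, r ∉ C i)
    (hconn : ∀ i, (G.induce (C i ∪ {r})).Connected)
    (hv : ∀ v, v ≠ r → ∃ g : Fin t → Fin n,
      ∀ i, v ∉ C i → (∀ c ∈ C i, ¬ G.Adj v c) →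
        (G.Adj v (g i) ∧ (∀ j, g i ∉ C j) ∧ g i ≠ r ∧ (∃ c ∈ C i, G.Adj (g i) c) ∧
          ∀ j, v ∉ C j → (∀ c ∈ C j, ¬ G.Adj v c) → g i = g j → i = j)) :
    HasISTs G r t := by
  have hpar := fun i => exists_parent G (C i ∪ {r}) r (by simp) (hconn i)
  choose fc dc hfc using hpar
  choose! g hg using hv
  have hdir : ∀ (i : Fin t) (v : Fin n), ∃ c, (∃ c ∈ C i, G.Adj v c) → c ∈ C i ∧ G.Adj v c := by
    intro i v
    by_cases h : ∃ c ∈ C i, G.Adj v c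
    · obtain ⟨c, hc⟩ := h; exact ⟨c, fun _ => hc⟩
    · exact ⟨v, fun h' => absurd h' h⟩
  choose dr hdr using hdir
  let f : Fin t → Fin n → Fin n := fun i v =>
    if v ∈ C i then fc i v else if (∃ c ∈ C i, G.Adj v c) then dr i v else g v i
  let N : Fin t → ℕ := fun i => ∑ v, dc i v
  have hN : ∀ i v, dc i v ≤ N i := fun i v =>
    Finset.single_le_sum (f := dc i) (fun _ _ => Nat.zero_le _) (Finset.mem_univ v)
  let dep : Fin t → Fin n → ℕ := fun i v =>
    if v ∈ C i ∨ v = r then dc i v else if (∃ c ∈ C i, G.Adj v c) then N i + 1 else N i + 2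
  have hf : ∀ i v, v ≠ r → G.Adj v (f i v) ∧ dep i (f i v) < dep i v := by
    intro i v hvr
    by_cases h1 : v ∈ C i
    · have h2 := hfc i v (Or.inl h1) hvr
      have h3 : fc i v ∈ C i ∨ fc i v = r := by simpa [or_comm] using h2.1
      simp only [f, dep, h1, if_true, true_or, h3]
      exact h2.2
    · by_cases h2 : ∃ c ∈ C i, G.Adj v c
      · have h3 := hdr i v h2
        have hle := hN i (dr i v)
        simp only [f, dep, h1, if_false, h2, if_true, hvr, or_self, h3.1, true_or]
        exact ⟨h3.2, by omega⟩
      · have h2' : ∀ c ∈ C i, ¬ G.Adj v c := fun c hc ha => h2 ⟨c, hc, ha⟩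
        obtain ⟨g1, g2, g3, g4, g5⟩ := hg v hvr i h1 h2'
        simp only [f, dep, h1, if_false, h2, hvr, or_self, g2 i, g3, g4, if_true]
        exact ⟨g1, by omega⟩
  have hT := fun i => exists_tree G r (f i) (dep i) (hf i)
  choose T hTG hTt hTp using hT
  refine ⟨T, fun i => ⟨hTG i, hTt i⟩, ?_⟩
  -- the set containing the path
  let S : Fin n → Fin t → Set (Fin n) := fun v i =>
    {x | x = v ∨ x = r ∨ x ∈ C i ∨ (x = g v i ∧ v ∉ C i ∧ (∀ c ∈ C i, ¬ G.Adj v c))}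
  have hS : ∀ v, v ≠ r → ∀ i, ∀ x ∈ S v i, x ≠ r → f i x ∈ S v i := by
    intro v hvr i x hx hxr
    have hC : x ∈ C i → f i x ∈ S v i := by
      intro h1
      have h2 := (hfc i x (Or.inl h1) hxr).1
      have h3 : fc i x ∈ C i ∨ fc i x = r := by simpa [or_comm] using h2
      simp only [f, h1, if_true, S, Set.mem_ofPred_eq]
      tauto
    have hD : x ∉ C i → (∃ c ∈ C i, G.Adj x c) → f i x ∈ S v i := by
      intro h1 h2
      have h3 := hdr i x h2
      simp only [f, h1, if_false, h2, if_true, S, Set.mem_ofPred_eq]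
      tauto
    by_cases h1 : x ∈ C i
    · exact hC h1
    by_cases h2 : ∃ c ∈ C i, G.Adj x c
    · exact hD h1 h2
    have h2' : ∀ c ∈ C i, ¬ G.Adj x c := fun c hc ha => h2 ⟨c, hc, ha⟩
    rcases hx with rfl | hx | hx | ⟨rfl, h3, h4⟩
    · simp only [f, h1, if_false, h2, S, Set.mem_ofPred_eq]
      right; right; right
      exact ⟨trivial, not_false, h2'⟩
    · exact absurd hx hxr
    · exact absurd hx h1
    · exact absurd (hg v hvr i h3 h4).2.2.2.1 h2
  intro v hvr i j hij p q hp hq x hxp hxq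
  have m1 := hTp i (S v i) (hS v hvr i) v (Or.inl rfl) p hp x hxp
  have m2 := hTp j (S v j) (hS v hvr j) v (Or.inl rfl) q hq x hxq
  rcases m1 with m1 | m1 | m1 | ⟨m1, m1', m1''⟩
  · exact Or.inl m1
  · exact Or.inr m1
  · rcases m2 with m2 | m2 | m2 | ⟨m2, m2', m2''⟩
    · exact Or.inl m2
    · exact Or.inr m2
    · exact absurd m2 (Set.disjoint_left.1 (hdisj i j hij) m1)
    · rw [m2] at m1
      exact absurd m1 ((hg v hvr j m2' m2'').2.1 i)
  · rcases m2 with m2 | m2 | m2 | ⟨m2, m2', m2''⟩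
    · exact Or.inl m2
    · exact Or.inr m2
    · rw [m1] at m2
      exact absurd m2 ((hg v hvr i m1' m1'').2.1 j)
    · exact absurd ((hg v hvr i m1' m1'').2.2.2.2 j m2' m2'' (m1.symm.trans m2)) hij

/-- Growing a connected set of prescribed size. -/
lemma exists_conn_subset {n : ℕ} (G : SimpleGraph (Fin n)) (k m : ℕ) (hm : 1 ≤ m) (hmk : m ≤ k)
    (hG : ∀ U1 U2 : Finset (Fin n), Disjoint U1 U2 → U1.card = k → U2.card = k →
      ∃ a ∈ U1, ∃ b ∈ U2, G.Adj a b)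
    (B : Finset (Fin n)) (hB : 3 * k ≤ B.card) :
    ∃ S ⊆ B, S.card = m ∧ (G.induce (S : Set (Fin n))).Connected := by
  by_contra hno
  push Not at hno
  -- closed sets
  let P : Finset (Finset (Fin n)) := B.powerset.filter
    (fun U => U.card ≤ 2 * k ∧ ∀ a ∈ U, ∀ b ∈ B \ U, ¬ G.Adj a b)
  have hP : P.Nonempty := ⟨∅, by simp [P]⟩
  obtain ⟨U, hU, hUmax⟩ := P.exists_max_image Finset.card hP
  simp only [P, Finset.mem_filter, Finset.mem_powerset] at hU
  obtain ⟨hUB, hU2k, hUcl⟩ := hU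
  have hBU : (B \ U).card = B.card - U.card := Finset.card_sdiff_of_subset hUB
  by_cases hUk : k ≤ U.card
  · obtain ⟨U1, h1, h1c⟩ := Finset.exists_subset_card_eq hUk
    obtain ⟨U2, h2, h2c⟩ := Finset.exists_subset_card_eq (s := B \ U) (n := k) (by omega)
    obtain ⟨a, ha, b, hb, hab⟩ := hG U1 U2
      (Finset.disjoint_of_subset_left h1 (Finset.disjoint_of_subset_right h2
        Finset.disjoint_sdiff)) h1c h2c
    exact hUcl a (h1 ha) b (h2 hb) hab
  · push Not at hUk
    have hne : (B \ U).Nonempty := by rw [← Finset.card_pos]; omega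
    obtain ⟨x, hx⟩ := hne
    let Q : Finset (Finset (Fin n)) := (B \ U).powerset.filter
      (fun S => S.card ≤ m ∧ S.Nonempty ∧ (G.induce (S : Set (Fin n))).Connected)
    have hQ : Q.Nonempty := by
      refine ⟨{x}, ?_⟩
      simp only [Q, Finset.mem_filter, Finset.mem_powerset, Finset.singleton_subset_iff, hx,
        Finset.card_singleton, hm, Finset.singleton_nonempty, true_and]
      rw [Finset.coe_singleton, SimpleGraph.induce_singleton_eq_top]
      have : Nonempty ({x} : Set (Fin n)) := ⟨⟨x, rfl⟩⟩
      exact SimpleGraph.connected_top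
    obtain ⟨S, hS, hSmax⟩ := Q.exists_max_image Finset.card hQ
    simp only [Q, Finset.mem_filter, Finset.mem_powerset] at hS
    obtain ⟨hSB, hSm, hSne, hSc⟩ := hS
    have hSlt : S.card < m := lt_of_le_of_ne hSm
      (fun he => hno S (hSB.trans Finset.sdiff_subset) he hSc)
    have hScl : ∀ a ∈ S, ∀ b ∈ (B \ U) \ S, ¬ G.Adj a b := by
      intro a ha b hb hab
      rw [Finset.mem_sdiff] at hb
      have : insert b S ∈ Q := by
        simp only [Q, Finset.mem_filter, Finset.mem_powerset]
        refine ⟨Finset.insert_subset hb.1 hSB, ?_, Finset.insert_nonempty _ _, ?_⟩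
        · rw [Finset.card_insert_of_notMem hb.2]; omega
        · have h2 := SimpleGraph.induce_union_connected (G := G) (s := {a, b}) (t := (S : Set _))
            (SimpleGraph.induce_pair_connected_of_adj hab).preconnected hSc.preconnected
            ⟨a, by simp, ha⟩
          have h3 : (({a, b} : Set (Fin n)) ∪ (S : Set _)) = ((insert b S : Finset (Fin n)) : Set _) := by
            ext y; simp only [Set.mem_union, Set.mem_insert_iff, Set.mem_singleton_iff,
              Finset.mem_coe, Finset.mem_insert]
            constructor
            · rintro ((rfl | rfl) | h) <;> simp_all
            · tauto
          rwa [h3] at h2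
      have := hSmax _ this
      rw [Finset.card_insert_of_notMem hb.2] at this
      omega
    have hdj : Disjoint U S := by
      rw [Finset.disjoint_left]
      intro y hy hyS
      exact (Finset.mem_sdiff.1 (hSB hyS)).2 hy
    have : U ∪ S ∈ P := by
      simp only [P, Finset.mem_filter, Finset.mem_powerset]
      refine ⟨Finset.union_subset hUB (hSB.trans Finset.sdiff_subset), ?_, ?_⟩
      · rw [Finset.card_union_of_disjoint hdj]; omega
      · intro a ha b hb
        rw [Finset.mem_sdiff, Finset.mem_union, not_or] at hb
        rcases Finset.mem_union.1 ha with ha | ha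
        · exact hUcl a ha b (Finset.mem_sdiff.2 ⟨hb.1, hb.2.1⟩)
        · exact hScl a ha b (Finset.mem_sdiff.2 ⟨Finset.mem_sdiff.2 ⟨hb.1, hb.2.1⟩, hb.2.2⟩)
    have := hUmax _ this
    rw [Finset.card_union_of_disjoint hdj] at this
    have := hSne.card_pos
    omega

/-- Many disjoint connected sets. -/
lemma exists_segments {n : ℕ} (G : SimpleGraph (Fin n)) (k m : ℕ) (hm : 1 ≤ m) (hmk : m ≤ k)
    (hG : ∀ U1 U2 : Finset (Fin n), Disjoint U1 U2 → U1.card = k → U2.card = k →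
      ∃ a ∈ U1, ∃ b ∈ U2, G.Adj a b)
    (B : Finset (Fin n)) (t : ℕ) (hB : 3 * k + t * m ≤ B.card) :
    ∃ D : Fin t → Finset (Fin n), (∀ i, D i ⊆ B ∧ (D i).card = m ∧
      (G.induce (D i : Set (Fin n))).Connected) ∧ ∀ i j, i ≠ j → Disjoint (D i) (D j) := by
  induction t generalizing B with
  | zero => exact ⟨fun i => i.elim0, fun i => i.elim0, fun i => i.elim0⟩
  | succ t ih =>
    obtain ⟨S, hSB, hSm, hSc⟩ := exists_conn_subset G k m hm hmk hG B (by omega)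
    have hc := Finset.card_sdiff_of_subset hSB
    obtain ⟨D, hD, hDd⟩ := ih (B \ S) (by
      rw [hc, hSm]; rw [add_mul, one_mul] at hB; omega)
    have hSD : ∀ i, Disjoint S (D i) := fun i => by
      rw [Finset.disjoint_left]
      intro y hy hyD
      exact (Finset.mem_sdiff.1 ((hD i).1 hyD)).2 hy
    refine ⟨Fin.cons S D, ?_, ?_⟩
    · intro i
      refine Fin.cases ?_ (fun i => ?_) i
      · exact ⟨hSB, hSm, hSc⟩
      · simp only [Fin.cons_succ]
        exact ⟨(hD i).1.trans Finset.sdiff_subset, (hD i).2⟩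
    · intro i j
      refine Fin.cases ?_ (fun i => ?_) i <;> refine Fin.cases ?_ (fun j => ?_) j
      · intro h; exact absurd rfl h
      · intro _; simpa using hSD j
      · intro _; simpa using (hSD i).symm
      · intro h; simp only [Fin.cons_succ]
        exact hDd i j (fun he => h (by rw [he]))

end Det

section Hall
open Classical

/-- Failure of Hall condition between the indices in `I` and the vertices in `W`,
where all relevant pairs lie in `K`. -/
def BadHall {n t : ℕ} (K : SimpleGraph (Fin n)) (a m : ℕ) (W : Finset (Fin n))
    (D : Fin t → Finset (Fin n)) (I : Finset (Fin t)) (G : SimpleGraph (Fin n)) : Prop :=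
  (∀ i ∈ I, ∀ w ∈ W, ∀ d ∈ D i, K.Adj w d) ∧
  (∀ i ∈ I, ∀ j ∈ I, i ≠ j → Disjoint (D i) (D j)) ∧
  (∀ i ∈ I, m ≤ (D i).card) ∧
  ∃ X : Finset (Fin t), ∃ Y : Finset (Fin n), X ⊆ I ∧ X.Nonempty ∧ X.card + a ≤ W.card ∧
    Y.card = X.card ∧ ∀ i ∈ X, ∀ d ∈ D i, ∀ w ∈ W \ Y, ¬ G.Adj w d

lemma badHall_inf {n t : ℕ} {K : SimpleGraph (Fin n)} {a m : ℕ} {W : Finset (Fin n)}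
    {D : Fin t → Finset (Fin n)} {I : Finset (Fin t)} {G : SimpleGraph (Fin n)} :
    BadHall K a m W D I (G ⊓ K) ↔ BadHall K a m W D I G := by
  constructor
  · rintro ⟨h1, h2, h3, X, Y, hX, hX0, hXa, hYX, h⟩
    refine ⟨h1, h2, h3, X, Y, hX, hX0, hXa, hYX, fun i hi d hd w hw hG => ?_⟩
    exact h i hi d hd w hw ⟨hG, h1 i (hX hi) w (Finset.mem_sdiff.1 hw).1 d hd⟩
  · rintro ⟨h1, h2, h3, X, Y, hX, hX0, hXa, hYX, h⟩
    exact ⟨h1, h2, h3, X, Y, hX, hX0, hXa, hYX, fun i hi d hd w hw hG => h i hi d hd w hw hG.1⟩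

lemma erProb_badHall {n t : ℕ} {p : ℝ} (h0 : 0 ≤ p) (h1 : p ≤ 1) (hn : 2 ≤ n) (htn : t ≤ n)
    (K : SimpleGraph (Fin n)) (a m : ℕ) (hpma : 6 * Real.log n ≤ p * m * a)
    (W : Finset (Fin n)) (D : Fin t → Finset (Fin n)) (I : Finset (Fin t)) :
    erProb n p (BadHall K a m W D I) ≤ 1 / (n : ℝ) ^ 3 := by
  have hnpos : (0 : ℝ) < n := by positivity
  have hn1 : (1 : ℝ) ≤ n := by exact_mod_cast (by omega : 1 ≤ n)
  by_cases hvalid : (∀ i ∈ I, ∀ w ∈ W, ∀ d ∈ D i, K.Adj w d) ∧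
    (∀ i ∈ I, ∀ j ∈ I, i ≠ j → Disjoint (D i) (D j)) ∧ (∀ i ∈ I, m ≤ (D i).card)
  swap
  · have : ∀ G, ¬ BadHall K a m W D I G := fun G h => hvalid ⟨h.1, h.2.1, h.2.2.1⟩
    rw [erProb_eq]
    simp only [this, if_false, Finset.sum_const_zero]
    positivity
  obtain ⟨v1, v2, v3⟩ := hvalid
  -- index set of the union bound
  let Pairs : ℕ → Finset (Finset (Fin t) × Finset (Fin n)) := fun x =>
    (Finset.univ.powersetCard x) ×ˢ (Finset.univ.powersetCard x)
  let Ev : Finset (Fin t) × Finset (Fin n) → SimpleGraph (Fin n) → Prop := fun XY G =>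
    XY.1 ⊆ I ∧ XY.1.card + a ≤ W.card ∧ XY.2.card = XY.1.card ∧
      ∀ i ∈ XY.1, ∀ d ∈ D i, ∀ w ∈ W \ XY.2, ¬ G.Adj w d
  have hsub : ∀ G, BadHall K a m W D I G →
      ∃ x ∈ Finset.Icc 1 t, ∃ XY ∈ Pairs x, Ev XY G := by
    rintro G ⟨-, -, -, X, Y, hX, hX0, hXa, hYX, h⟩
    refine ⟨X.card, ?_, (X, Y), ?_, hX, hXa, hYX, h⟩
    · rw [Finset.mem_Icc]
      exact ⟨hX0.card_pos, by simpa using Finset.card_le_univ X⟩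
    · simp [Pairs, Finset.mem_powersetCard, hYX]
  have hEv : ∀ x, ∀ XY ∈ Pairs x, erProb n p (Ev XY) ≤ (1 / (n : ℝ) ^ 6) ^ x := by
    rintro x ⟨X, Y⟩ hXY
    simp only [Pairs, Finset.mem_product, Finset.mem_powersetCard, Finset.subset_univ,
      true_and] at hXY
    by_cases hc : X ⊆ I ∧ X.card + a ≤ W.card ∧ Y.card = X.card
    swap
    · have : ∀ G, ¬ Ev (X, Y) G := fun G h => hc ⟨h.1, h.2.1, h.2.2.1⟩
      rw [erProb_eq]
      simp only [this, if_false, Finset.sum_const_zero]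
      positivity
    obtain ⟨c1, c2, c3⟩ := hc
    let F : Finset (Sym2 (Fin n)) := ((W \ Y) ×ˢ (X.biUnion D)).image (fun z => s(z.1, z.2))
    have hK : ∀ w ∈ W \ Y, ∀ d ∈ X.biUnion D, K.Adj w d := by
      intro w hw d hd
      rw [Finset.mem_biUnion] at hd
      obtain ⟨i, hi, hd⟩ := hd
      exact v1 i (c1 hi) w (Finset.mem_sdiff.1 hw).1 d hd
    have hF : ∀ e ∈ F, ¬ e.IsDiag := by
      intro e he
      simp only [F, Finset.mem_image, Finset.mem_product] at he
      obtain ⟨z, ⟨hz1, hz2⟩, rfl⟩ := he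
      simpa using (hK _ hz1 _ hz2).ne
    have hFc : F.card = (W \ Y).card * (X.biUnion D).card := by
      rw [Finset.card_image_of_injOn, Finset.card_product]
      rintro ⟨w, d⟩ hz ⟨w', d'⟩ hz' heq
      simp only [Finset.coe_product, Set.mem_prod, Finset.mem_coe] at hz hz'
      simp only [Sym2.eq_iff] at heq
      rcases heq with ⟨rfl, rfl⟩ | ⟨rfl, rfl⟩
      · rfl
      · exact absurd (hK _ hz.1 _ hz'.2) (K.loopless.irrefl _)
    have hW : a ≤ (W \ Y).card := by
      have := Finset.le_card_sdiff Y W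
      omega
    have hD : x * m ≤ (X.biUnion D).card := by
      rw [Finset.card_biUnion (fun i hi j hj hij => v2 i (c1 hi) j (c1 hj) hij), ← hXY.1]
      rw [← smul_eq_mul]
      exact Finset.card_nsmul_le_sum _ _ _ (fun i hi => v3 i (c1 hi))
    have hle : a * (x * m) ≤ F.card := by rw [hFc]; exact Nat.mul_le_mul hW hD
    calc erProb n p (Ev (X, Y)) ≤ erProb n p (fun G => ∀ e ∈ F, e ∉ G.edgeSet) := by
          refine erProb_mono h0 h1 ?_
          rintro G ⟨-, -, -, h⟩ e he
          simp only [F, Finset.mem_image, Finset.mem_product] at he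
          obtain ⟨z, ⟨hz1, hz2⟩, rfl⟩ := he
          rw [Finset.mem_biUnion] at hz2
          obtain ⟨i, hi, hd⟩ := hz2
          rw [SimpleGraph.mem_edgeSet]
          exact h i hi _ hd _ hz1
      _ ≤ Real.exp (-(p * F.card)) := erProb_noEdge h1 F hF
      _ ≤ Real.exp (x * (-(6 * Real.log n))) := by
          apply Real.exp_le_exp.2
          have hle' : (a : ℝ) * (x * m) ≤ F.card := by exact_mod_cast hle
          have := mul_le_mul_of_nonneg_left hle' h0
          have h5 := mul_le_mul_of_nonneg_left hpma (Nat.cast_nonneg (α := ℝ) x)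
          nlinarith
      _ = (1 / (n : ℝ) ^ 6) ^ x := by
          rw [Real.exp_nat_mul, Real.exp_neg]
          congr 1
          rw [one_div]
          congr 1
          rw [show (6 : ℝ) * Real.log n = ((6 : ℕ) : ℝ) * Real.log n by norm_num,
            Real.exp_nat_mul, Real.exp_log hnpos]
  have hcard : ∀ x, ((Pairs x).card : ℝ) ≤ ((n : ℝ) ^ 2) ^ x := by
    intro x
    simp only [Pairs, Finset.card_product, Finset.card_powersetCard, Finset.card_univ,
      Fintype.card_fin]
    have e1 : t.choose x ≤ n ^ x := (Nat.choose_le_pow t x).trans (Nat.pow_le_pow_left htn x)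
    have e2 : n.choose x ≤ n ^ x := Nat.choose_le_pow n x
    have : t.choose x * n.choose x ≤ (n ^ 2) ^ x := by
      calc _ ≤ n ^ x * n ^ x := Nat.mul_le_mul e1 e2
        _ = _ := by rw [← pow_mul, ← pow_add]; ring_nf
    exact_mod_cast this
  calc erProb n p (BadHall K a m W D I)
      ≤ erProb n p (fun G => ∃ x ∈ Finset.Icc 1 t, ∃ XY ∈ Pairs x, Ev XY G) :=
        erProb_mono h0 h1 hsub
    _ ≤ ∑ x ∈ Finset.Icc 1 t, erProb n p (fun G => ∃ XY ∈ Pairs x, Ev XY G) :=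
        erProb_exists h0 h1 _ _
    _ ≤ ∑ x ∈ Finset.Icc 1 t, ∑ XY ∈ Pairs x, erProb n p (Ev XY) :=
        Finset.sum_le_sum fun x _ => erProb_exists h0 h1 _ _
    _ ≤ ∑ x ∈ Finset.Icc 1 t, 1 / (n : ℝ) ^ 4 := by
        refine Finset.sum_le_sum fun x hx => ?_
        have hx1 := (Finset.mem_Icc.1 hx).1
        calc _ ≤ ∑ XY ∈ Pairs x, (1 / (n : ℝ) ^ 6) ^ x := Finset.sum_le_sum (hEv x)
          _ = (Pairs x).card * (1 / (n : ℝ) ^ 6) ^ x := by rw [Finset.sum_const, nsmul_eq_mul]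
          _ ≤ ((n : ℝ) ^ 2) ^ x * (1 / (n : ℝ) ^ 6) ^ x := by
              gcongr; exact hcard x
          _ = (1 / (n : ℝ) ^ 4) ^ x := by
              rw [← mul_pow]; congr 1; field_simp
          _ ≤ 1 / (n : ℝ) ^ 4 := by
              apply pow_le_of_le_one (by positivity) _ (by omega)
              rw [div_le_one (by positivity)]
              exact one_le_pow₀ hn1
    _ = t * (1 / (n : ℝ) ^ 4) := by simp
    _ ≤ n * (1 / (n : ℝ) ^ 4) := by gcongr
    _ = 1 / (n : ℝ) ^ 3 := by field_simp

lemma erProb_badHall_cond {n t : ℕ} {p : ℝ} (h0 : 0 ≤ p) (h1 : p ≤ 1) (hn : 2 ≤ n) (htn : t ≤ n)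
    (K : SimpleGraph (Fin n)) (a m : ℕ) (hpma : 6 * Real.log n ≤ p * m * a)
    (W : SimpleGraph (Fin n) → Finset (Fin n)) (D : SimpleGraph (Fin n) → Fin t → Finset (Fin n))
    (I : SimpleGraph (Fin n) → Finset (Fin t))
    (hW : ∀ G, W (G \ K) = W G) (hD : ∀ G, D (G \ K) = D G) (hI : ∀ G, I (G \ K) = I G) :
    erProb n p (fun G => BadHall K a m (W G) (D G) (I G) G) ≤ 1 / (n : ℝ) ^ 3 := by
  have := erProb_cond h0 h1 K (fun H L => BadHall K a m (W H) (D H) (I H) L) (1 / (n : ℝ) ^ 3) (by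
    intro H
    refine (erProb_mono h0 h1 fun G h => ?_).trans
      (erProb_badHall h0 h1 hn htn K a m hpma (W H) (D H) (I H))
    exact badHall_inf.1 h)
  refine (erProb_mono h0 h1 fun G h => ?_).trans this
  show BadHall K a m (W (G \ K)) (D (G \ K)) (I (G \ K)) (G ⊓ K)
  rw [hW, hD, hI]
  exact badHall_inf.2 h

/-- Hall theorem. -/
lemma exists_matching {n t : ℕ} {K : SimpleGraph (Fin n)} {a m : ℕ} {W : Finset (Fin n)}
    {D : Fin t → Finset (Fin n)} {I : Finset (Fin t)} {G : SimpleGraph (Fin n)}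
    (h1 : ∀ i ∈ I, ∀ w ∈ W, ∀ d ∈ D i, K.Adj w d)
    (h2 : ∀ i ∈ I, ∀ j ∈ I, i ≠ j → Disjoint (D i) (D j))
    (h3 : ∀ i ∈ I, m ≤ (D i).card)
    (hb : ¬ BadHall K a m W D I G) (M : Finset (Fin t)) (hM : M ⊆ I) (hMa : M.card + a ≤ W.card)
    (x0 : Fin n) :
    ∃ g : Fin t → Fin n, (∀ i ∈ M, g i ∈ W ∧ ∃ d ∈ D i, G.Adj (g i) d) ∧
      ∀ i ∈ M, ∀ j ∈ M, g i = g j → i = j := by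
  let N : M → Finset (Fin n) := fun i => W.filter (fun w => ∃ d ∈ D i, G.Adj w d)
  have hall : ∀ s : Finset M, s.card ≤ (s.biUnion N).card := by
    intro s
    by_contra hlt
    push Not at hlt
    let X : Finset (Fin t) := s.map (Function.Embedding.subtype _)
    have hXc : X.card = s.card := Finset.card_map _
    have hXM : X ⊆ M := by
      intro i hi
      simp only [X, Finset.mem_map, Function.Embedding.coe_subtype] at hi
      obtain ⟨j, _, rfl⟩ := hi
      exact j.2
    have hXn : X.card ≤ Fintype.card (Fin n) := by
      have := Finset.card_le_card hXM
      have := Finset.card_le_univ W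
      omega
    obtain ⟨Y, hNY, hY⟩ := Finset.exists_superset_card_eq (s := s.biUnion N) (n := X.card)
      (by omega) hXn
    refine hb ⟨h1, h2, h3, X, Y, hXM.trans hM, ?_, ?_, hY, ?_⟩
    · rw [← Finset.card_pos]; omega
    · have := Finset.card_le_card hXM
      omega
    · intro i hi d hd w hw hadj
      simp only [X, Finset.mem_map, Function.Embedding.coe_subtype] at hi
      obtain ⟨j, hj, rfl⟩ := hi
      rw [Finset.mem_sdiff] at hw
      apply hw.2
      apply hNY
      rw [Finset.mem_biUnion]
      exact ⟨j, hj, Finset.mem_filter.2 ⟨hw.1, d, hd, hadj⟩⟩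
  obtain ⟨f, hfi, hf⟩ := (Finset.all_card_le_biUnion_card_iff_exists_injective N).1 hall
  refine ⟨fun i => if h : i ∈ M then f ⟨i, h⟩ else x0, ?_, ?_⟩
  · intro i hi
    simp only [hi, dif_pos]
    have := hf ⟨i, hi⟩
    simpa [N] using this
  · intro i hi j hj hij
    simp only [hi, hj, dif_pos] at hij
    simpa using hfi hij

end Hall

section Assembly
open Classical

noncomputable def selSub {n : ℕ} (N : Finset (Fin n)) (s : ℕ) : Finset (Fin n) :=
  if h : s ≤ N.card then Classical.choose (Finset.exists_subset_card_eq h) else ∅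

lemma selSub_spec {n : ℕ} {N : Finset (Fin n)} {s : ℕ} (h : s ≤ N.card) :
    selSub N s ⊆ N ∧ (selSub N s).card = s := by
  unfold selSub
  rw [dif_pos h]
  exact Classical.choose_spec (Finset.exists_subset_card_eq h)

noncomputable def selD {n t : ℕ} (P : (Fin t → Finset (Fin n)) → Prop) : Fin t → Finset (Fin n) :=
  if h : ∃ D, P D then Classical.choose h else fun _ => ∅

lemma selD_spec {n t : ℕ} {P : (Fin t → Finset (Fin n)) → Prop} (h : ∃ D, P D) :
    P (selD P) := by
  unfold selD
  rw [dif_pos h]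
  exact Classical.choose_spec h

noncomputable def nbr {n : ℕ} (G : SimpleGraph (Fin n)) (A : Finset (Fin n)) (v : Fin n) :
    Finset (Fin n) := A.filter (fun w => G.Adj v w)

lemma mem_nbr {n : ℕ} {G : SimpleGraph (Fin n)} {A : Finset (Fin n)} {v w : Fin n} :
    w ∈ nbr G A v ↔ w ∈ A ∧ G.Adj v w := by simp [nbr]

lemma nbr_sdiff {n : ℕ} (G K : SimpleGraph (Fin n)) (A : Finset (Fin n)) (v : Fin n)
    (h : ∀ w, ¬ K.Adj v w) : nbr (G \ K) A v = nbr G A v := by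
  ext w; simp [mem_nbr, h]


def Aset {n : ℕ} (B : Finset (Fin n)) (r : Fin n) : Finset (Fin n) := (Finset.univ \ B).erase r

lemma mem_Aset {n : ℕ} {B : Finset (Fin n)} {r x : Fin n} : x ∈ Aset B r ↔ x ≠ r ∧ x ∉ B := by
  simp [Aset]

/-- Pairs between the two parts avoiding `v`. -/
def Ksp {n : ℕ} (B : Finset (Fin n)) (r v : Fin n) : SimpleGraph (Fin n) where
  Adj x y := ((x ∈ Aset B r ∧ y ∈ B.erase r) ∨ (x ∈ B.erase r ∧ y ∈ Aset B r)) ∧ x ≠ v ∧ y ≠ v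
  symm := ⟨fun x y h => by tauto⟩
  loopless := ⟨fun x h => by
    simp only [mem_Aset, Finset.mem_erase] at h
    tauto⟩

def GoodSeg {n t : ℕ} (B : Finset (Fin n)) (m : ℕ) (G : SimpleGraph (Fin n)) (r : Fin n)
    (D : Fin t → Finset (Fin n)) : Prop :=
  (∀ i, D i ⊆ B.erase r ∧ (D i).card = m + 1 ∧
      (G.induce (D i : Set (Fin n))).Connected) ∧ ∀ i j, i ≠ j → Disjoint (D i) (D j)

noncomputable def Dsp {n : ℕ} (t : ℕ) (B : Finset (Fin n)) (m : ℕ) (r : Fin n)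
    (G : SimpleGraph (Fin n)) : Fin t → Finset (Fin n) := selD (GoodSeg B m G r)

noncomputable def Rsp {n : ℕ} (B : Finset (Fin n)) (s : ℕ) (r : Fin n)
    (G : SimpleGraph (Fin n)) : Finset (Fin n) := selSub (nbr G (Aset B r) r) s

noncomputable def Wsp {n : ℕ} (B : Finset (Fin n)) (s : ℕ) (r v : Fin n)
    (G : SimpleGraph (Fin n)) : Finset (Fin n) :=
  if v = r then Rsp B s r G else nbr G (Aset B r) v \ Rsp B s r G

lemma Ksp_v {n : ℕ} (B : Finset (Fin n)) (r v w : Fin n) : ¬ (Ksp B r v).Adj v w := by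
  intro h; exact h.2.1 rfl

lemma Ksp_r {n : ℕ} (B : Finset (Fin n)) (r v w : Fin n) : ¬ (Ksp B r v).Adj r w := by
  intro h
  have := h.1
  simp only [mem_Aset, Finset.mem_erase] at this
  tauto

lemma Rsp_sdiff {n : ℕ} (B : Finset (Fin n)) (s : ℕ) (r v : Fin n) (G : SimpleGraph (Fin n)) :
    Rsp B s r (G \ Ksp B r v) = Rsp B s r G := by
  unfold Rsp
  rw [nbr_sdiff _ _ _ _ (Ksp_r B r v)]

lemma Wsp_sdiff {n : ℕ} (B : Finset (Fin n)) (s : ℕ) (r v : Fin n) (G : SimpleGraph (Fin n)) :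
    Wsp B s r v (G \ Ksp B r v) = Wsp B s r v G := by
  unfold Wsp
  rw [Rsp_sdiff, nbr_sdiff _ _ _ _ (Ksp_v B r v)]

lemma Dsp_sdiff {n : ℕ} (t : ℕ) (B : Finset (Fin n)) (m : ℕ) (r v : Fin n)
    (G : SimpleGraph (Fin n)) :
    Dsp t B m r (G \ Ksp B r v) = Dsp t B m r G := by
  unfold Dsp
  congr 1
  funext D
  unfold GoodSeg
  refine propext (and_congr_left fun _ => forall_congr' fun i => ?_)
  refine and_congr_right fun hD => and_congr_right fun _ => ?_
  have : (G \ Ksp B r v).induce (D i : Set (Fin n)) = G.induce (D i : Set (Fin n)) := by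
    ext ⟨x, hx⟩ ⟨y, hy⟩
    simp only [SimpleGraph.comap_adj, Function.Embedding.subtype_apply, SimpleGraph.sdiff_adj,
      and_iff_left_iff_imp]
    intro _ hK
    have hx' := hD hx
    have hy' := hD hy
    have := hK.1
    simp only [mem_Aset, Finset.mem_erase] at this hx' hy'
    tauto
  rw [this]

lemma core_conn {n : ℕ} (G : SimpleGraph (Fin n)) (D : Set (Fin n)) (x d r : Fin n)
    (hd : d ∈ D) (hadj : G.Adj x d) (hr : G.Adj r x) (hD : (G.induce D).Connected) :
    (G.induce (insert x D ∪ {r})).Connected := by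
  have c1 := SimpleGraph.induce_union_connected (G := G) (s := {x, d}) (t := D)
    (SimpleGraph.induce_pair_connected_of_adj hadj).preconnected hD.preconnected
    ⟨d, by simp, hd⟩
  have c2 := SimpleGraph.induce_union_connected (G := G) (s := {x, d} ∪ D)
    (t := {r, x}) c1.preconnected
    (SimpleGraph.induce_pair_connected_of_adj hr).preconnected
    ⟨x, by simp, by simp⟩
  have c3 : (({x, d} ∪ D) ∪ {r, x}) = insert x D ∪ {r} := by
    ext y
    simp only [Set.mem_union, Set.mem_insert_iff, Set.mem_singleton_iff]
    constructor
    · rintro (((h | h) | h) | (h | h))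
      · exact Or.inl (Or.inl h)
      · exact Or.inl (Or.inr (h ▸ hd))
      · exact Or.inl (Or.inr h)
      · exact Or.inr h
      · exact Or.inl (Or.inl h)
    · rintro ((h | h) | h)
      · exact Or.inl (Or.inl (Or.inl h))
      · exact Or.inl (Or.inr h)
      · exact Or.inr (Or.inl h)
  rwa [c3] at c2

set_option maxHeartbeats 2000000 in
lemma sparse_det {n t a m k : ℕ} (B : Finset (Fin n)) (G : SimpleGraph (Fin n))
    (hmk : m + 1 ≤ k) (hB : 3 * k + t * (m + 1) + 1 ≤ B.card)
    (hG : ∀ U1 U2 : Finset (Fin n), Disjoint U1 U2 → U1.card = k → U2.card = k →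
      ∃ a ∈ U1, ∃ b ∈ U2, G.Adj a b)
    (hdeg : ∀ r v, t + 2 * a ≤ (nbr G (Aset B r) v).card)
    (hbad : ∀ r v, ¬ BadHall (Ksp B r v) a m (Wsp B (t + a) r v G)
      (fun i => (Dsp t B m r G i).erase v) Finset.univ G) (r : Fin n) :
    HasISTs G r t := by
  have hD : GoodSeg B m G r (Dsp t B m r G) := by
    apply selD_spec
    apply exists_segments G k (m + 1) (by omega) hmk hG (B.erase r) t
    have := Finset.pred_card_le_card_erase (s := B) (a := r)
    omega
  obtain ⟨hD1, hD2⟩ := hD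
  set D := Dsp t B m r G with hDdef
  have hDB : ∀ i, ∀ d ∈ D i, d ∈ B ∧ d ≠ r := by
    intro i d hd
    have := (hD1 i).1 hd
    rw [Finset.mem_erase] at this
    exact ⟨this.2, this.1⟩
  have hR := selSub_spec (N := nbr G (Aset B r) r) (s := t + a) (by have := hdeg r r; omega)
  set R : Finset (Fin n) := Rsp B (t + a) r G with hRdef
  have hRs : R ⊆ nbr G (Aset B r) r := hR.1
  have hRc : R.card = t + a := hR.2
  have hRA : ∀ x ∈ R, x ≠ r ∧ x ∉ B ∧ G.Adj r x := by
    intro x hx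
    have := hRs hx
    rw [mem_nbr, mem_Aset] at this
    exact ⟨this.1.1, this.1.2, this.2⟩
  have hWA : ∀ v, ∀ w ∈ Wsp B (t + a) r v G, w ≠ r ∧ w ∉ B ∧ w ≠ v := by
    intro v w hw
    unfold Wsp at hw
    split_ifs at hw with h
    · have := hRA w hw
      exact ⟨this.1, this.2.1, by rw [h]; exact this.1⟩
    · rw [Finset.mem_sdiff, mem_nbr, mem_Aset] at hw
      exact ⟨hw.1.1.1, hw.1.1.2, hw.1.2.ne'⟩
  have val1 : ∀ v, ∀ i ∈ (Finset.univ : Finset (Fin t)), ∀ w ∈ Wsp B (t + a) r v G,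
      ∀ d ∈ (D i).erase v, (Ksp B r v).Adj w d := by
    intro v i _ w hw d hd
    rw [Finset.mem_erase] at hd
    have h1 := hWA v w hw
    have h2 := hDB i d hd.2
    exact ⟨Or.inl ⟨mem_Aset.2 ⟨h1.1, h1.2.1⟩, Finset.mem_erase.2 ⟨h2.2, h2.1⟩⟩, h1.2.2, hd.1⟩
  have val2 : ∀ v, ∀ i ∈ (Finset.univ : Finset (Fin t)), ∀ j ∈ (Finset.univ : Finset (Fin t)),
      i ≠ j → Disjoint ((D i).erase v) ((D j).erase v) := by
    intro v i _ j _ hij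
    exact Finset.disjoint_of_subset_left (Finset.erase_subset _ _)
      (Finset.disjoint_of_subset_right (Finset.erase_subset _ _) (hD2 i j hij))
  have val3 : ∀ v, ∀ i ∈ (Finset.univ : Finset (Fin t)), m ≤ ((D i).erase v).card := by
    intro v i _
    have := Finset.pred_card_le_card_erase (s := D i) (a := v)
    have := (hD1 i).2.1
    omega
  -- the roots of the cores
  have hWr : Wsp B (t + a) r r G = R := by unfold Wsp; rw [if_pos rfl]
  obtain ⟨ρ, hρ1, hρ2⟩ := exists_matching (val1 r) (val2 r) (val3 r) (hbad r r) Finset.univ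
    (Finset.Subset.refl _) (by rw [hWr, hRc]; simp) r
  rw [hWr] at hρ1
  have hρR : ∀ i, ρ i ∈ R := fun i => (hρ1 i (Finset.mem_univ i)).1
  have hρinj : Function.Injective ρ := fun i j h =>
    hρ2 i (Finset.mem_univ i) j (Finset.mem_univ j) h
  apply hasISTs_of_core G r (fun i => insert (ρ i) (D i : Set (Fin n)))
  · intro i j hij
    rw [Set.disjoint_left]
    intro x hx hx'
    simp only [Set.mem_insert_iff, Finset.mem_coe] at hx hx'
    rcases hx with rfl | hx
    · rcases hx' with hx' | hx'
      · exact hij (hρinj hx')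
      · exact (hRA _ (hρR i)).2.1 (hDB j _ hx').1
    · rcases hx' with rfl | hx'
      · exact (hRA _ (hρR j)).2.1 (hDB i _ hx).1
      · exact Finset.disjoint_left.1 (hD2 i j hij) hx hx'
  · intro i hi
    simp only [Set.mem_insert_iff, Finset.mem_coe] at hi
    rcases hi with hi | hi
    · exact (hRA _ (hρR i)).1 hi.symm
    · exact (hDB i _ hi).2 rfl
  · intro i
    obtain ⟨d, hd, hadj⟩ := (hρ1 i (Finset.mem_univ i)).2
    exact core_conn G (D i : Set (Fin n)) (ρ i) d r (Finset.mem_erase.1 hd).2 hadj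
      (hRA _ (hρR i)).2.2 (hD1 i).2.2
  · intro v hvr
    let M : Finset (Fin t) := Finset.univ.filter (fun i => ¬ G.Adj v (ρ i))
    have hW : Wsp B (t + a) r v G = nbr G (Aset B r) v \ R := by unfold Wsp; rw [if_neg hvr]
    have hcard : M.card + a ≤ (Wsp B (t + a) r v G).card := by
      rw [hW]
      -- neighbours of v in R
      have e1 : M.card + (Finset.univ.filter (fun i => G.Adj v (ρ i))).card = t := by
        have := Finset.card_filter_add_card_filter_not (s := (Finset.univ : Finset (Fin t)))
          (fun i => G.Adj v (ρ i))
        simp only [Finset.card_univ, Fintype.card_fin] at this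
        have h2 : M.card = (Finset.univ.filter (fun i => ¬ G.Adj v (ρ i))).card := rfl
        omega
      have e2 : (R.filter (fun x => G.Adj v x)).card ≤
          (Finset.univ.filter (fun i => G.Adj v (ρ i))).card + a := by
        have hsub : R.filter (fun x => G.Adj v x) ⊆
            (Finset.univ.filter (fun i => G.Adj v (ρ i))).image ρ ∪
              (R \ Finset.univ.image ρ) := by
          intro x hx
          rw [Finset.mem_filter] at hx
          rw [Finset.mem_union]
          by_cases hxi : x ∈ Finset.univ.image ρ
          · left
            rw [Finset.mem_image] at hxi ⊢
            obtain ⟨i, _, rfl⟩ := hxi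
            exact ⟨i, Finset.mem_filter.2 ⟨Finset.mem_univ _, hx.2⟩, rfl⟩
          · right
            exact Finset.mem_sdiff.2 ⟨hx.1, hxi⟩
        have h1 := Finset.card_le_card hsub
        have h2 := Finset.card_union_le
          ((Finset.univ.filter (fun i => G.Adj v (ρ i))).image ρ) (R \ Finset.univ.image ρ)
        have h3 := Finset.card_image_le (s := Finset.univ.filter (fun i => G.Adj v (ρ i))) (f := ρ)
        have h4 : (R \ Finset.univ.image ρ).card = a := by
          rw [Finset.card_sdiff_of_subset, Finset.card_image_of_injective _ hρinj, hRc]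
          · simp
          · intro x hx
            rw [Finset.mem_image] at hx
            obtain ⟨i, _, rfl⟩ := hx
            exact hρR i
        omega
      have e3 : (nbr G (Aset B r) v ∩ R).card ≤ (R.filter (fun x => G.Adj v x)).card := by
        apply Finset.card_le_card
        intro x hx
        rw [Finset.mem_inter, mem_nbr] at hx
        exact Finset.mem_filter.2 ⟨hx.2, hx.1.2⟩
      have e4 := Finset.card_sdiff_add_card_inter (nbr G (Aset B r) v) R
      have e5 := hdeg r v
      omega
    obtain ⟨g, hg1, hg2⟩ := exists_matching (val1 v) (val2 v) (val3 v) (hbad r v) M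
      (Finset.subset_univ _) hcard r
    have hMi : ∀ i, (∀ c ∈ insert (ρ i) (D i : Set (Fin n)), ¬ G.Adj v c) → i ∈ M := by
      intro i hi
      exact Finset.mem_filter.2 ⟨Finset.mem_univ _, hi _ (Set.mem_insert _ _)⟩
    refine ⟨g, fun i _ hi => ?_⟩
    have hiM := hMi i hi
    obtain ⟨hgW, d, hd, hgd⟩ := hg1 i hiM
    have hgA := hWA v _ hgW
    rw [hW, Finset.mem_sdiff, mem_nbr] at hgW
    refine ⟨hgW.1.2, ?_, hgA.1, ⟨d, Set.mem_insert_of_mem _ (Finset.mem_erase.1 hd).2, hgd⟩, ?_⟩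
    · intro j hj
      simp only [Set.mem_insert_iff, Finset.mem_coe] at hj
      rcases hj with hj | hj
      · exact hgW.2 (hj ▸ hρR j)
      · exact hgA.2.1 (hDB j _ hj).1
    · intro j _ hj hij
      exact hg2 i hiM j (hMi j hj) hij


def Kde {n : ℕ} (r v : Fin n) : SimpleGraph (Fin n) where
  Adj x y := x ≠ y ∧ x ≠ r ∧ x ≠ v ∧ y ≠ r ∧ y ≠ v
  symm := ⟨fun x y h => by
    obtain ⟨h1, h2⟩ := h
    exact ⟨h1.symm, by tauto⟩⟩
  loopless := ⟨fun x h => h.1 rfl⟩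

noncomputable def Rde {n : ℕ} (t : ℕ) (r : Fin n) (G : SimpleGraph (Fin n)) : Finset (Fin n) :=
  selSub (nbr G Finset.univ r) t

noncomputable def rhoOf {n : ℕ} (t : ℕ) (R : Finset (Fin n)) (r : Fin n) : Fin t → Fin n :=
  if h : R.card = t then R.orderEmbOfFin h else fun _ => r

noncomputable def Wde {n : ℕ} (t : ℕ) (r v : Fin n) (G : SimpleGraph (Fin n)) : Finset (Fin n) :=
  (nbr G Finset.univ v \ Rde t r G).erase r

noncomputable def Dde {n : ℕ} (t : ℕ) (r : Fin n) (G : SimpleGraph (Fin n)) :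
    Fin t → Finset (Fin n) := fun i => {rhoOf t (Rde t r G) r i}

noncomputable def Ide {n : ℕ} (t : ℕ) (r v : Fin n) (G : SimpleGraph (Fin n)) : Finset (Fin t) :=
  Finset.univ.filter (fun i => rhoOf t (Rde t r G) r i ≠ v)

lemma Kde_r {n : ℕ} (r v w : Fin n) : ¬ (Kde r v).Adj r w := fun h => h.2.1 rfl

lemma Kde_v {n : ℕ} (r v w : Fin n) : ¬ (Kde r v).Adj v w := fun h => h.2.2.1 rfl

lemma Rde_sdiff {n : ℕ} (t : ℕ) (r v : Fin n) (G : SimpleGraph (Fin n)) :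
    Rde t r (G \ Kde r v) = Rde t r G := by
  unfold Rde
  rw [nbr_sdiff _ _ _ _ (Kde_r r v)]

lemma Wde_sdiff {n : ℕ} (t : ℕ) (r v : Fin n) (G : SimpleGraph (Fin n)) :
    Wde t r v (G \ Kde r v) = Wde t r v G := by
  unfold Wde
  rw [Rde_sdiff, nbr_sdiff _ _ _ _ (Kde_v r v)]

lemma dense_det {n t a : ℕ} (G : SimpleGraph (Fin n))
    (hdeg : ∀ v, t + a + 1 ≤ (nbr G Finset.univ v).card)
    (hbad : ∀ r v, ¬ BadHall (Kde r v) a 1 (Wde t r v G) (Dde t r G) (Ide t r v G) G)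
    (r : Fin n) : HasISTs G r t := by
  have hR := selSub_spec (N := nbr G Finset.univ r) (s := t) (by have := hdeg r; omega)
  set R : Finset (Fin n) := Rde t r G with hRdef
  have hRs : R ⊆ nbr G Finset.univ r := hR.1
  have hRc : R.card = t := hR.2
  set ρ := rhoOf t R r with hρdef
  have hρe : ρ = R.orderEmbOfFin hRc := by rw [hρdef]; unfold rhoOf; rw [dif_pos hRc]
  have hρR : ∀ i, ρ i ∈ R := fun i => by rw [hρe]; exact Finset.orderEmbOfFin_mem _ _ _
  have hρinj : Function.Injective ρ := by rw [hρe]; exact (R.orderEmbOfFin hRc).injective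
  have hρadj : ∀ i, G.Adj r (ρ i) := fun i => (mem_nbr.1 (hRs (hρR i))).2
  have hDd : ∀ i, Dde t r G i = {ρ i} := fun i => rfl
  apply hasISTs_of_core G r (fun i => {ρ i})
  · intro i j hij
    rw [Set.disjoint_singleton]
    exact fun h => hij (hρinj h)
  · intro i hi
    exact (hρadj i).ne hi
  · intro i
    have := SimpleGraph.induce_pair_connected_of_adj (hρadj i).symm
    exact this
  · intro v hvr
    have val1 : ∀ i ∈ Ide t r v G, ∀ w ∈ Wde t r v G, ∀ d ∈ Dde t r G i, (Kde r v).Adj w d := by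
      intro i hi w hw d hd
      rw [hDd, Finset.mem_singleton] at hd
      subst hd
      have hiv : ρ i ≠ v := (Finset.mem_filter.1 hi).2
      unfold Wde at hw
      rw [Finset.mem_erase, Finset.mem_sdiff, mem_nbr] at hw
      refine ⟨?_, hw.1, hw.2.1.2.ne', (hρadj i).ne', hiv⟩
      intro h
      exact hw.2.2 (h ▸ hρR i)
    have val2 : ∀ i ∈ Ide t r v G, ∀ j ∈ Ide t r v G, i ≠ j →
        Disjoint (Dde t r G i) (Dde t r G j) := by
      intro i _ j _ hij
      rw [hDd, hDd, Finset.disjoint_singleton]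
      exact fun h => hij (hρinj h)
    have val3 : ∀ i ∈ Ide t r v G, 1 ≤ (Dde t r G i).card := by
      intro i _; rw [hDd]; simp
    let M : Finset (Fin t) := Finset.univ.filter (fun i => ρ i ≠ v ∧ ¬ G.Adj v (ρ i))
    have hMI : M ⊆ Ide t r v G := by
      intro i hi
      exact Finset.mem_filter.2 ⟨Finset.mem_univ _, (Finset.mem_filter.1 hi).2.1⟩
    have hcard : M.card + a ≤ (Wde t r v G).card := by
      have e1 : (Finset.univ.filter (fun i => ¬ G.Adj v (ρ i))).card +
          (Finset.univ.filter (fun i => G.Adj v (ρ i))).card = t := by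
        have := Finset.card_filter_add_card_filter_not (s := (Finset.univ : Finset (Fin t)))
          (fun i => G.Adj v (ρ i))
        simp only [Finset.card_univ, Fintype.card_fin] at this
        omega
      have e0 : M.card ≤ (Finset.univ.filter (fun i => ¬ G.Adj v (ρ i))).card := by
        apply Finset.card_le_card
        intro i hi
        exact Finset.mem_filter.2 ⟨Finset.mem_univ _, (Finset.mem_filter.1 hi).2.2⟩
      have e2 : (nbr G Finset.univ v ∩ R).card ≤
          (Finset.univ.filter (fun i => G.Adj v (ρ i))).card := by
        rw [← Finset.card_image_of_injective _ hρinj]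
        apply Finset.card_le_card
        intro x hx
        rw [Finset.mem_inter, mem_nbr] at hx
        have : x ∈ Set.range ρ := by
          rw [hρe, Finset.range_orderEmbOfFin]; exact hx.2
        obtain ⟨i, rfl⟩ := this
        exact Finset.mem_image_of_mem _ (Finset.mem_filter.2 ⟨Finset.mem_univ _, hx.1.2⟩)
      have e4 := Finset.card_sdiff_add_card_inter (nbr G Finset.univ v) R
      have e5 := hdeg v
      have e6 := Finset.pred_card_le_card_erase (s := nbr G Finset.univ v \ R) (a := r)
      have e7 : Wde t r v G = (nbr G Finset.univ v \ R).erase r := rfl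
      rw [e7]
      omega
    obtain ⟨g, hg1, hg2⟩ := exists_matching val1 val2 val3 (hbad r v) M hMI hcard r
    have hMi : ∀ i, v ∉ ({ρ i} : Set (Fin n)) → (∀ c ∈ ({ρ i} : Set (Fin n)), ¬ G.Adj v c) →
        i ∈ M := by
      intro i h1 h2
      exact Finset.mem_filter.2 ⟨Finset.mem_univ _, fun h => h1 h.symm, h2 _ rfl⟩
    refine ⟨g, fun i hi1 hi => ?_⟩
    have hiM := hMi i hi1 hi
    obtain ⟨hgW, d, hd, hgd⟩ := hg1 i hiM
    rw [hDd, Finset.mem_singleton] at hd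
    unfold Wde at hgW
    rw [Finset.mem_erase, Finset.mem_sdiff, mem_nbr] at hgW
    refine ⟨hgW.2.1.2, ?_, hgW.1, ⟨d, hd, hgd⟩, ?_⟩
    · intro j hj
      exact hgW.2.2 ((show g i = ρ j from hj) ▸ hρR j)
    · intro j hj1 hj hij
      exact hg2 i hiM j (hMi j hj1 hj) hij

end Assembly

section Final
open Classical

lemma deg_bound {n : ℕ} {p ε : ℝ} (h0 : 0 ≤ p) (h1 : p ≤ 1) (he0 : 0 < ε) (he1 : ε ≤ 1)
    (hn : 1 ≤ n) (A : Finset (Fin n)) (v : Fin n) (hA : (1 - ε / 3) * n + 1 ≤ (A.card : ℝ))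
    (hd : 3 * Real.log n ≤ ε ^ 2 * (n * p) / 72) :
    erProb n p (fun G => ((nbr G A v).card : ℝ) ≤ (1 - ε / 2) * (n * p)) ≤ 1 / (n : ℝ) ^ 3 := by
  have hnpos : (0 : ℝ) < n := by exact_mod_cast hn
  set F : Finset (Sym2 (Fin n)) := (A.erase v).image (fun w => s(v, w)) with hF
  have hinj : Function.Injective (fun w : Fin n => s(v, w)) := fun x y h => Sym2.congr_right.1 h
  have hFc : F.card = (A.erase v).card := Finset.card_image_of_injective _ hinj
  have hFd : ∀ e ∈ F, ¬ e.IsDiag := by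
    intro e he
    rw [hF, Finset.mem_image] at he
    obtain ⟨w, hw, rfl⟩ := he
    rw [Sym2.mk_isDiag_iff]
    exact (Finset.mem_erase.1 hw).1.symm
  have hfc : ∀ G : SimpleGraph (Fin n), (F.filter (fun e => e ∈ G.edgeSet)).card ≤
      (nbr G A v).card := by
    intro G
    rw [← Finset.card_image_of_injective (nbr G A v) hinj]
    apply Finset.card_le_card
    intro e he
    rw [Finset.mem_filter, hF, Finset.mem_image] at he
    obtain ⟨⟨w, hw, rfl⟩, he⟩ := he
    exact Finset.mem_image_of_mem _ (mem_nbr.2 ⟨(Finset.mem_erase.1 hw).2, he⟩)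
  have hFc' : (1 - ε / 3) * n ≤ (F.card : ℝ) := by
    have := Finset.pred_card_le_card_erase (s := A) (a := v)
    have h2 : A.card ≤ F.card + 1 := by omega
    have h3 : (A.card : ℝ) ≤ F.card + 1 := by exact_mod_cast h2
    linarith
  have hc := erProb_chernoff h0 h1 F hFd ((1 - ε / 2) * (n * p)) (ε / 6) (by linarith)
  refine (erProb_mono h0 h1 fun G h => ?_).trans (hc.trans ?_)
  · have : ((F.filter (fun e => e ∈ G.edgeSet)).card : ℝ) ≤ ((nbr G A v).card : ℝ) := by
      exact_mod_cast hfc G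
    exact this.trans h
  · have hd0 : 0 ≤ (n : ℝ) * p := by positivity
    have hl : 0 ≤ ε / 6 - (ε / 6) ^ 2 / 2 := by nlinarith
    have e1 : (1 - ε / 3) * n * p * (ε / 6 - (ε / 6) ^ 2 / 2) ≤
        F.card * p * (ε / 6 - (ε / 6) ^ 2 / 2) := by gcongr
    have e2 : ε / 6 * ((1 - ε / 2) * (n * p)) - (1 - ε / 3) * n * p * (ε / 6 - (ε / 6) ^ 2 / 2) ≤
        -(ε ^ 2 * (n * p) / 72) := by
      have : 0 ≤ ε ^ 3 * ((n : ℝ) * p) := by positivity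
      nlinarith
    have e3 : Real.exp (-(3 * Real.log n)) = 1 / (n : ℝ) ^ 3 := by
      rw [Real.exp_neg, show 3 * Real.log n = Real.log ((n : ℝ) ^ 3) by
        rw [Real.log_pow]; norm_num, Real.exp_log (by positivity), one_div]
    rw [← e3]
    apply Real.exp_le_exp.2
    linarith

lemma union_two {n : ℕ} {p : ℝ} (h0 : 0 ≤ p) (h1 : p ≤ 1) (hn : 1 ≤ n)
    (A : Fin n → Fin n → SimpleGraph (Fin n) → Prop)
    (h : ∀ r v, erProb n p (A r v) ≤ 1 / (n : ℝ) ^ 3) :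
    erProb n p (fun G => ∃ r v, A r v G) ≤ 1 / (n : ℝ) := by
  have hnpos : (0 : ℝ) < n := by exact_mod_cast hn
  have := erProb_exists h0 h1 (Finset.univ : Finset (Fin n × Fin n)) (fun x => A x.1 x.2)
  refine (erProb_mono h0 h1 ?_).trans (this.trans ?_)
  · rintro G ⟨r, v, hG⟩
    exact ⟨(r, v), Finset.mem_univ _, hG⟩
  · refine (Finset.sum_le_sum (fun x _ => h x.1 x.2)).trans (le_of_eq ?_)
    simp
    field_simp

lemma kset_bound {n k : ℕ} {p : ℝ} (h0 : 0 ≤ p) (h1 : p ≤ 1) (hn : 1 ≤ n)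
    (hk : 2 * n + Real.log n ≤ p * (k : ℝ) ^ 2) :
    erProb n p (fun G => ∃ U1 U2 : Finset (Fin n), Disjoint U1 U2 ∧ U1.card = k ∧ U2.card = k ∧
      ∀ x ∈ U1, ∀ y ∈ U2, ¬ G.Adj x y) ≤ 1 / (n : ℝ) := by
  have hnpos : (0 : ℝ) < n := by exact_mod_cast hn
  have hex := erProb_exists h0 h1 (Finset.univ : Finset (Finset (Fin n) × Finset (Fin n)))
    (fun U G => Disjoint U.1 U.2 ∧ U.1.card = k ∧ U.2.card = k ∧
      ∀ x ∈ U.1, ∀ y ∈ U.2, ¬ G.Adj x y)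
  refine (erProb_mono h0 h1 ?_).trans (hex.trans ?_)
  · rintro G ⟨U1, U2, hG⟩
    exact ⟨(U1, U2), Finset.mem_univ _, hG⟩
  · have hone : ∀ U : Finset (Fin n) × Finset (Fin n),
        erProb n p (fun G => Disjoint U.1 U.2 ∧ U.1.card = k ∧ U.2.card = k ∧
      ∀ x ∈ U.1, ∀ y ∈ U.2, ¬ G.Adj x y) ≤ Real.exp (-(p * (k : ℝ) ^ 2)) := by
      rintro ⟨U1, U2⟩
      by_cases hU : Disjoint U1 U2 ∧ U1.card = k ∧ U2.card = k
      · obtain ⟨hd, hU1, hU2⟩ := hU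
        set F : Finset (Sym2 (Fin n)) := (U1 ×ˢ U2).image (fun z => s(z.1, z.2)) with hF
        have hFc : F.card = k ^ 2 := by
          rw [hF, Finset.card_image_of_injOn, Finset.card_product, hU1, hU2, sq]
          rintro ⟨x, y⟩ hx ⟨x', y'⟩ hx' he
          simp only [Finset.coe_product, Set.mem_prod, Finset.mem_coe] at hx hx'
          simp only [Sym2.eq_iff] at he
          rcases he with ⟨rfl, rfl⟩ | ⟨rfl, rfl⟩
          · rfl
          · exact absurd hx'.2 (Finset.disjoint_left.1 hd hx.1)
        have hFd : ∀ e ∈ F, ¬ e.IsDiag := by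
          intro e he
          rw [hF, Finset.mem_image] at he
          obtain ⟨⟨x, y⟩, hxy, rfl⟩ := he
          rw [Finset.mem_product] at hxy
          rw [Sym2.mk_isDiag_iff]
          intro hxy'
          exact Finset.disjoint_left.1 hd hxy.1 ((show x = y from hxy').symm ▸ hxy.2)
        have := erProb_noEdge h1 F hFd
        rw [hFc] at this
        push_cast at this
        refine (erProb_mono h0 h1 fun G h => ?_).trans this
        intro e he
        rw [hF, Finset.mem_image] at he
        obtain ⟨⟨x, y⟩, hxy, rfl⟩ := he
        rw [Finset.mem_product] at hxy
        exact h.2.2.2 x hxy.1 y hxy.2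
      · refine le_trans (erProb_mono h0 h1 (B := fun _ => False) fun G h => hU ⟨h.1, h.2.1, h.2.2.1⟩) ?_
        rw [erProb_eq]
        simp
        positivity
    refine (Finset.sum_le_sum fun U _ => hone U).trans ?_
    rw [Finset.sum_const, Finset.card_univ, Fintype.card_prod, Fintype.card_finset,
      Fintype.card_fin, nsmul_eq_mul]
    push_cast
    have e1 : (2 : ℝ) ≤ Real.exp 1 := by
      have := Real.add_one_le_exp (1 : ℝ); linarith
    have e2 : (2 : ℝ) ^ n ≤ Real.exp n := by
      calc (2 : ℝ) ^ n ≤ (Real.exp 1) ^ n := by gcongr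
        _ = Real.exp n := by rw [← Real.exp_nat_mul]; simp
    calc (2 : ℝ) ^ n * 2 ^ n * Real.exp (-(p * (k : ℝ) ^ 2))
        ≤ Real.exp n * Real.exp n * Real.exp (-(2 * n + Real.log n)) := by gcongr
      _ = Real.exp (-Real.log n) := by rw [← Real.exp_add, ← Real.exp_add]; ring_nf
      _ = 1 / (n : ℝ) := by rw [Real.exp_neg, Real.exp_log hnpos, one_div]

lemma dense_prob {n t a : ℕ} {p ε : ℝ} (h0 : 0 ≤ p) (h1 : p ≤ 1) (he0 : 0 < ε) (he1 : ε ≤ 1)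
    (hn : 2 ≤ n) (htn : t ≤ n) (hA : (1 - ε / 3) * n + 1 ≤ (n : ℝ))
    (hd : 3 * Real.log n ≤ ε ^ 2 * (n * p) / 72)
    (hta : ((t + a + 1 : ℕ) : ℝ) ≤ (1 - ε / 2) * (n * p))
    (hpma : 6 * Real.log n ≤ p * (1 : ℕ) * a) :
    1 - 2 / (n : ℝ) ≤ erProb n p (fun G => ∀ r : Fin n, HasISTs G r t) := by
  have b1 := union_two h0 h1 (by omega)
    (fun _ v G => ((nbr G Finset.univ v).card : ℝ) ≤ (1 - ε / 2) * (n * p))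
    (fun r v => deg_bound h0 h1 he0 he1 (by omega) Finset.univ v (by simpa using hA) hd)
  have b2 := union_two h0 h1 (by omega)
    (fun r v G => BadHall (Kde r v) a 1 (Wde t r v G) (Dde t r G) (Ide t r v G) G)
    (fun r v => erProb_badHall_cond h0 h1 hn htn (Kde r v) a 1 hpma (Wde t r v) (Dde t r)
      (Ide t r v) (Wde_sdiff t r v) (fun G => by unfold Dde; rw [Rde_sdiff])
      (fun G => by unfold Ide; rw [Rde_sdiff]))
  rw [erProb_not]
  have b4 : erProb n p (fun G => ¬ ∀ r : Fin n, HasISTs G r t) ≤ 1 / n + 1 / n := by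
    refine le_trans (erProb_mono h0 h1 fun G h => ?_)
      ((erProb_or h0 h1 _ _).trans (add_le_add b1 b2))
    by_contra hcon
    rw [not_or] at hcon
    obtain ⟨c1, c2⟩ := hcon
    push Not at c1 c2
    refine h (dense_det G (a := a) (fun v => ?_) c2)
    have := hta.trans (c1 v v).le
    exact_mod_cast this
  have : 2 / (n : ℝ) = 1 / n + 1 / n := by ring
  linarith

lemma sparse_prob {n t a m k : ℕ} {p ε : ℝ} (h0 : 0 ≤ p) (h1 : p ≤ 1) (he0 : 0 < ε) (he1 : ε ≤ 1)
    (hn : 2 ≤ n) (htn : t ≤ n) (B : Finset (Fin n))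
    (hA : (1 - ε / 3) * n + 2 + B.card ≤ (n : ℝ))
    (hmk : m + 1 ≤ k) (hB : 3 * k + t * (m + 1) + 1 ≤ B.card)
    (hk : 2 * n + Real.log n ≤ p * (k : ℝ) ^ 2)
    (hd : 3 * Real.log n ≤ ε ^ 2 * (n * p) / 72)
    (hta : ((t + 2 * a : ℕ) : ℝ) ≤ (1 - ε / 2) * (n * p))
    (hpma : 6 * Real.log n ≤ p * m * a) :
    1 - 3 / (n : ℝ) ≤ erProb n p (fun G => ∀ r : Fin n, HasISTs G r t) := by
  have hAc : ∀ r, (1 - ε / 3) * n + 1 ≤ ((Aset B r).card : ℝ) := by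
    intro r
    have e1 := Finset.pred_card_le_card_erase (s := Finset.univ \ B) (a := r)
    have e2 := Finset.card_sdiff_add_card_inter Finset.univ B
    rw [Finset.univ_inter, Finset.card_univ, Fintype.card_fin] at e2
    have e3 : n ≤ (Aset B r).card + 1 + B.card := by unfold Aset; omega
    have e4 : (n : ℝ) ≤ (Aset B r).card + 1 + B.card := by exact_mod_cast e3
    linarith
  have b0 := kset_bound h0 h1 (by omega) hk
  have b1 := union_two h0 h1 (by omega)
    (fun r v G => ((nbr G (Aset B r) v).card : ℝ) ≤ (1 - ε / 2) * (n * p))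
    (fun r v => deg_bound h0 h1 he0 he1 (by omega) (Aset B r) v (hAc r) hd)
  have b2 := union_two h0 h1 (by omega)
    (fun r v G => BadHall (Ksp B r v) a m (Wsp B (t + a) r v G)
      (fun i => (Dsp t B m r G i).erase v) Finset.univ G)
    (fun r v => erProb_badHall_cond h0 h1 hn htn (Ksp B r v) a m hpma (Wsp B (t + a) r v)
      (fun G i => (Dsp t B m r G i).erase v)
      (fun _ => Finset.univ) (Wsp_sdiff B (t + a) r v) (fun G => by
        funext i; simp only [Dsp_sdiff])
      (fun G => rfl))
  rw [erProb_not]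
  have b4 : erProb n p (fun G => ¬ ∀ r : Fin n, HasISTs G r t) ≤ 1 / n + (1 / n + 1 / n) := by
    refine le_trans (erProb_mono h0 h1 fun G h => ?_) ((erProb_or h0 h1 _ _).trans
      (add_le_add b0 ((erProb_or h0 h1 _ _).trans (add_le_add b1 b2))))
    by_contra hcon
    rw [not_or, not_or] at hcon
    obtain ⟨c0, c1, c2⟩ := hcon
    push Not at c0 c1 c2
    refine h (sparse_det (a := a) (m := m) (k := k) B G hmk hB c0 (fun r v => ?_) c2)
    have := hta.trans (c1 r v).le
    exact_mod_cast this
  have : 3 / (n : ℝ) = 1 / n + (1 / n + 1 / n) := by ring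
  linarith

set_option maxHeartbeats 1000000 in
lemma main_bound {n : ℕ} {p ε : ℝ} (h0 : 0 ≤ p) (h1 : p ≤ 1) (he0 : 0 < ε) (he1 : ε ≤ 1)
    (hn : 3 ≤ n) (hd : 100000 / ε ^ 2 * Real.log n ≤ n * p) :
    1 - 3 / (n : ℝ) ≤ erProb n p (fun G => ∀ r : Fin n, HasISTs G r ⌊(1 - ε) * n * p⌋₊) := by
  have hn3 : (3 : ℝ) ≤ n := by exact_mod_cast hn
  have hnpos : (0 : ℝ) < n := by linarith
  have hlog : 1 ≤ Real.log n := by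
    rw [Real.le_log_iff_exp_le hnpos]
    have := Real.exp_one_lt_d9
    linarith
  have hlogn : Real.log n ≤ n := by
    have := Real.log_le_sub_one_of_pos hnpos; linarith
  set d : ℝ := n * p with hdd
  have hd2 : 100000 * Real.log n ≤ ε ^ 2 * d := by
    rw [div_mul_eq_mul_div, div_le_iff₀ (by positivity)] at hd
    linarith
  have hd3 : (100000 : ℝ) ≤ ε ^ 2 * d := by linarith
  have hdpos : 0 < d := by
    by_contra hcon
    have : ε ^ 2 * d ≤ 0 := mul_nonpos_of_nonneg_of_nonpos (by positivity) (by linarith)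
    linarith
  have hed : (100000 : ℝ) ≤ ε * d := by
    have : ε ^ 2 * d ≤ ε * d := by nlinarith [mul_pos he0 hdpos]
    linarith
  have hdn : d ≤ n := by rw [hdd]; nlinarith
  have hen : (100000 : ℝ) ≤ ε * n := by nlinarith
  have hdl : (100000 : ℝ) ≤ d := by nlinarith
  have hppos : 0 < p := by
    rcases h0.eq_or_lt with h | h
    · rw [← h, mul_zero] at hdd; linarith
    · exact h
  set t := ⌊(1 - ε) * n * p⌋₊ with ht
  have htd : (t : ℝ) ≤ (1 - ε) * d := by
    have : 0 ≤ (1 - ε) * n * p := by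
      have : 0 ≤ 1 - ε := by linarith
      positivity
    have := Nat.floor_le this
    rw [hdd]; linarith
  have htd' : (t : ℝ) ≤ d := by nlinarith
  have htn : t ≤ n := by
    have : (t : ℝ) ≤ n := by linarith
    exact_mod_cast this
  set a := ⌈ε * d / 10⌉₊ with ha
  have ha1 : ε * d / 10 ≤ a := Nat.le_ceil _
  have ha2 : (a : ℝ) < ε * d / 10 + 1 := Nat.ceil_lt_add_one (by positivity)
  by_cases hp : ε / 40 ≤ p
  · have := dense_prob (t := t) (a := a) h0 h1 he0 he1 (by omega) htn (by linarith) (by linarith)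
      (by push_cast; linarith) (by
        have : ε / 40 * (ε * d / 10) ≤ p * a := by gcongr
        push_cast
        linarith)
    have h3 : 2 / (n : ℝ) ≤ 3 / n := by gcongr; norm_num
    linarith
  · push Not at hp
    set k := ⌈ε * n / 40⌉₊ with hk
    have hk1 : ε * n / 40 ≤ k := Nat.le_ceil _
    have hk2 : (k : ℝ) < ε * n / 40 + 1 := Nat.ceil_lt_add_one (by positivity)
    set M := ⌊ε / (10 * p)⌋₊ with hM
    have hM1 : (M : ℝ) ≤ ε / (10 * p) := Nat.floor_le (by positivity)
    have hM2 : ε / (10 * p) < M + 1 := Nat.lt_floor_add_one _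
    have hMp : (M : ℝ) * p ≤ ε / 10 := by
      rw [le_div_iff₀ (by positivity)] at hM1; linarith
    have hMp2 : ε / 10 < (M + 1) * p := by
      rw [div_lt_iff₀ (by positivity)] at hM2; linarith
    have hM0 : 1 ≤ M := by
      by_contra hc
      have : M = 0 := by omega
      rw [this] at hMp2
      push_cast at hMp2
      linarith
    obtain ⟨m, hm⟩ : ∃ m, M = m + 1 := ⟨M - 1, by omega⟩
    have hMr : (M : ℝ) = m + 1 := by rw [hm]; push_cast; ring
    obtain ⟨B, _, hBc⟩ := Finset.exists_subset_card_eq (s := (Finset.univ : Finset (Fin n)))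
      (n := ⌊ε * n / 4⌋₊) (by
        rw [Finset.card_univ, Fintype.card_fin]
        apply Nat.floor_le_of_le
        nlinarith)
    have hB1 : (B.card : ℝ) ≤ ε * n / 4 := by
      rw [hBc]; exact Nat.floor_le (by positivity)
    have hB2 : ε * n / 4 < B.card + 1 := by
      rw [hBc]; exact Nat.lt_floor_add_one _
    have htM : (t : ℝ) * M ≤ ε * n / 10 := by
      calc (t : ℝ) * M ≤ d * M := by gcongr
        _ = n * (M * p) := by rw [hdd]; ring
        _ ≤ n * (ε / 10) := by gcongr
        _ = ε * n / 10 := by ring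
    apply sparse_prob (a := a) (m := m) (k := k) h0 h1 he0 he1 (by omega) htn B
    · linarith
    · rw [← hm]
      have : (M : ℝ) ≤ k := by
        refine le_trans ?_ hk1
        have : (M : ℝ) * d ≤ ε * n / 10 := by
          calc (M : ℝ) * d = n * (M * p) := by rw [hdd]; ring
            _ ≤ n * (ε / 10) := by gcongr
            _ = ε * n / 10 := by ring
        have h4 : (M : ℝ) * 4 ≤ M * d := by gcongr; linarith
        linarith
      exact_mod_cast this
    · rw [← hm]
      have : (3 * k + t * M + 1 : ℝ) ≤ B.card := by linarith
      exact_mod_cast this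
    · have e1 : p * (ε * n / 40) ^ 2 ≤ p * (k : ℝ) ^ 2 := by gcongr
      have e2 : p * (ε * n / 40) ^ 2 = ε ^ 2 * d * n / 1600 := by rw [hdd]; ring
      have e3 : 100000 * (n : ℝ) ≤ ε ^ 2 * d * n := by gcongr
      linarith
    · linarith
    · push_cast; linarith
    · have e1 : ε / 20 ≤ p * m := by
        rw [hMr] at hMp2
        linarith
      have e2 : ε / 20 * (ε * d / 10) ≤ p * m * a := by gcongr
      linarith

end Final


theorem stmt0 (p : ℕ → ℝ) (hp : ∀ n, 0 ≤ p n ∧ p n ≤ 1)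
    (hgrow : Tendsto (fun n : ℕ => (n : ℝ) * p n / Real.log n) atTop atTop)
    (ε : ℝ) (hε : 0 < ε) :
    Tendsto (fun n : ℕ => erProb n (p n) (fun G =>
      ∀ r : Fin n, HasISTs G r ⌊(1 - ε) * n * p n⌋₊)) atTop (nhds 1) := by
  have hlow : ∀ᶠ n : ℕ in atTop, 1 - 3 / (n : ℝ) ≤ erProb n (p n) (fun G =>
      ∀ r : Fin n, HasISTs G r ⌊(1 - ε) * n * p n⌋₊) := by
    rcases le_or_gt ε 1 with he | he
    · filter_upwards [hgrow.eventually_ge_atTop (100000 / ε ^ 2), eventually_ge_atTop 3]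
        with n h1 h2
      refine main_bound (hp n).1 (hp n).2 hε he h2 ?_
      have hlog : 0 < Real.log n := Real.log_pos (by exact_mod_cast (by omega : 1 < n))
      rwa [le_div_iff₀ hlog] at h1
    · filter_upwards with n
      have ht : ⌊(1 - ε) * n * p n⌋₊ = 0 := by
        apply Nat.floor_of_nonpos
        have := (hp n).1
        rw [mul_assoc]
        exact mul_nonpos_of_nonpos_of_nonneg (by linarith) (by positivity)
      rw [ht, erProb_not]
      have : erProb n (p n) (fun G => ¬ ∀ r : Fin n, HasISTs G r 0) ≤ 0 := by
        refine (erProb_mono (hp n).1 (hp n).2 (B := fun _ => False) fun G h => h fun r =>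
          ⟨fun i => i.elim0, fun i => i.elim0, fun v _ i => i.elim0⟩).trans ?_
        rw [erProb_eq]
        simp
      have h3 : 0 ≤ 3 / (n : ℝ) := by positivity
      linarith
  have hlim : Tendsto (fun n : ℕ => 1 - 3 / (n : ℝ)) atTop (nhds 1) := by
    have := (tendsto_const_div_atTop_nhds_zero_nat (3 : ℝ)).const_sub 1
    simpa using this
  exact tendsto_of_tendsto_of_tendsto_of_le_of_le' hlim tendsto_const_nhds hlow
    (Eventually.of_forall fun n => erProb_le_one (hp n).1 (hp n).2 _)
end

section
/- For every ε ∈ (0,1/2) there exists a constant C = C(ε) > 1 such that for every function p = p(n) with C·(log n)/n ≤ p(n) ≤ 1-ε for all n, with high probability the random graph G ~ G(n, p(n)) has the following property: for every vertex r of G, G contains at least ⌈(1-ε)·n·p(n)⌉ independent spanning trees rooted at r. -/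
open Filter

namespace ISTproof
open Classical Finset

noncomputable section

/-! ### Product Bernoulli space by hand -/

section Prob
variable {E : Type*} [Fintype E]

/-- weight of a configuration -/
def wt (p : ℝ) (ω : E → Bool) : ℝ := ∏ e, if ω e then p else 1 - p

/-- expectation -/
def Ex (p : ℝ) (f : (E → Bool) → ℝ) : ℝ := ∑ ω, wt p ω * f ω

/-- indicator -/
def ind (P : Prop) : ℝ := if P then 1 else 0

/-- probability -/
def Pr (p : ℝ) (A : (E → Bool) → Prop) : ℝ := Ex p (fun ω => ind (A ω))

/-- `f` depends only on the coordinates in `S` -/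
def Dep {α : Type*} (S : Set E) (f : (E → Bool) → α) : Prop :=
  ∀ ω ω', (∀ e ∈ S, ω e = ω' e) → f ω = f ω'

lemma ind_nonneg (P : Prop) : 0 ≤ ind P := by unfold ind; split_ifs <;> norm_num
lemma ind_le_one (P : Prop) : ind P ≤ 1 := by unfold ind; split_ifs <;> norm_num
lemma ind_true {P : Prop} (h : P) : ind P = 1 := by simp [ind, h]
lemma ind_false {P : Prop} (h : ¬ P) : ind P = 0 := by simp [ind, h]

lemma wt_nonneg {p : ℝ} (h0 : 0 ≤ p) (h1 : p ≤ 1) (ω : E → Bool) : 0 ≤ wt p ω := by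
  unfold wt
  apply Finset.prod_nonneg
  intro e _
  split_ifs <;> linarith

lemma Ex_mono {p : ℝ} (h0 : 0 ≤ p) (h1 : p ≤ 1) {f g : (E → Bool) → ℝ} (h : ∀ ω, f ω ≤ g ω) :
    Ex p f ≤ Ex p g :=
  Finset.sum_le_sum fun ω _ => mul_le_mul_of_nonneg_left (h ω) (wt_nonneg h0 h1 ω)

lemma Ex_prod_coord (p : ℝ) (k : E → Bool → ℝ) :
    Ex p (fun ω => ∏ e, k e (ω e)) = ∏ e, (p * k e true + (1 - p) * k e false) := by
  have h := Finset.prod_univ_sum (fun _ : E => (Finset.univ : Finset Bool))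
    (fun e b => (if b then p else 1 - p) * k e b)
  simp only [Fintype.piFinset_univ] at h
  have h2 : ∀ e : E, ∑ b : Bool, (if b then p else 1 - p) * k e b
      = p * k e true + (1 - p) * k e false := by
    intro e; simp
  unfold Ex wt
  rw [← Finset.prod_congr rfl (fun e _ => h2 e), h]
  exact Finset.sum_congr rfl fun ω _ => (Finset.prod_mul_distrib).symm

lemma Ex_one (p : ℝ) : Ex p (fun _ : E → Bool => (1 : ℝ)) = 1 := by
  have := Ex_prod_coord (E := E) p (fun _ _ => 1)
  simpa using this

lemma Ex_const (p c : ℝ) : Ex p (fun _ : E → Bool => c) = c := by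
  have := Ex_one (E := E) p
  unfold Ex at *
  simp only [mul_one] at this
  rw [← Finset.sum_mul, this, one_mul]

lemma Ex_mul_left (p c : ℝ) (f : (E → Bool) → ℝ) :
    Ex p (fun ω => c * f ω) = c * Ex p f := by
  unfold Ex; rw [Finset.mul_sum]; exact Finset.sum_congr rfl fun _ _ => by ring

lemma Ex_add (p : ℝ) (f g : (E → Bool) → ℝ) :
    Ex p (fun ω => f ω + g ω) = Ex p f + Ex p g := by
  unfold Ex; rw [← Finset.sum_add_distrib]; exact Finset.sum_congr rfl fun _ _ => by ring

lemma Ex_sub (p : ℝ) (f g : (E → Bool) → ℝ) :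
    Ex p (fun ω => f ω - g ω) = Ex p f - Ex p g := by
  unfold Ex; rw [← Finset.sum_sub_distrib]; exact Finset.sum_congr rfl fun _ _ => by ring

lemma Ex_sum {ι : Type*} (p : ℝ) (s : Finset ι) (f : ι → (E → Bool) → ℝ) :
    Ex p (fun ω => ∑ i ∈ s, f i ω) = ∑ i ∈ s, Ex p (f i) := by
  unfold Ex; rw [Finset.sum_comm]; exact Finset.sum_congr rfl fun _ _ => by rw [Finset.mul_sum]

/-- swap of two configurations off a set -/
def mix (S : Set E) (ω ω' : E → Bool) : E → Bool := fun e => if e ∈ S then ω e else ω' e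

lemma Ex_indep (p : ℝ) {S T : Set E} (hST : Disjoint S T) {f g : (E → Bool) → ℝ}
    (hf : Dep S f) (hg : Dep T g) : Ex p (fun ω => f ω * g ω) = Ex p f * Ex p g := by
  have h1 : Ex p f * Ex p g = ∑ x : (E → Bool) × (E → Bool),
      wt p x.1 * wt p x.2 * (f x.1 * g x.2) := by
    rw [Fintype.sum_prod_type]; unfold Ex
    rw [Finset.sum_mul_sum]
    exact Finset.sum_congr rfl fun _ _ => Finset.sum_congr rfl fun _ _ => by ring
  have h2 : Ex p (fun ω => f ω * g ω) = ∑ x : (E → Bool) × (E → Bool),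
      wt p x.1 * wt p x.2 * (f x.1 * g x.1) := by
    rw [Fintype.sum_prod_type]
    have := Ex_one (E := E) p
    calc Ex p (fun ω => f ω * g ω) = Ex p (fun ω => f ω * g ω) * Ex p (fun _ : E → Bool => (1:ℝ)) := by
          rw [this, mul_one]
      _ = _ := by
          unfold Ex
          rw [Finset.sum_mul_sum]
          exact Finset.sum_congr rfl fun _ _ => Finset.sum_congr rfl fun _ _ => by ring
  rw [h1, h2]
  have inv : Function.Involutive
      (fun x : (E → Bool) × (E → Bool) => (mix S x.1 x.2, mix S x.2 x.1)) := by
    intro x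
    ext e <;> simp only [mix] <;> split_ifs <;> rfl
  refine (Equiv.sum_comp inv.toPerm _).symm.trans ?_
  refine Finset.sum_congr rfl fun x _ => ?_
  have e1 : wt p (mix S x.1 x.2) * wt p (mix S x.2 x.1) = wt p x.1 * wt p x.2 := by
    unfold wt
    rw [← Finset.prod_mul_distrib, ← Finset.prod_mul_distrib]
    refine Finset.prod_congr rfl fun e _ => ?_
    by_cases he : e ∈ S
    · simp only [mix, he, if_true]
    · simp only [mix, he, if_false]; ring
  have e2 : f (mix S x.1 x.2) = f x.1 := hf _ _ fun e he => by simp [mix, he]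
  have e3 : g (mix S x.1 x.2) = g x.2 := hg _ _ fun e he => by
    have : e ∉ S := fun h => Set.disjoint_left.mp hST h he
    simp [mix, this]
  show wt p (mix S x.1 x.2) * wt p (mix S x.2 x.1) * (f (mix S x.1 x.2) * g (mix S x.1 x.2)) = _
  rw [e1, e2, e3]

lemma Ex_prod_indep {ι : Type*} (p : ℝ) (W : Finset ι) (S : ι → Set E)
    (hS : ∀ i ∈ W, ∀ j ∈ W, i ≠ j → Disjoint (S i) (S j)) (g : ι → (E → Bool) → ℝ)
    (hg : ∀ i ∈ W, Dep (S i) (g i)) :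
    Ex p (fun ω => ∏ i ∈ W, g i ω) = ∏ i ∈ W, Ex p (g i) := by
  induction W using Finset.induction_on with
  | empty => simp [Ex_one]
  | insert a W ha ih =>
    rw [Finset.prod_insert ha, ← ih (fun i hi j hj => hS i (by simp [hi]) j (by simp [hj]))
      (fun i hi => hg i (by simp [hi]))]
    simp only [Finset.prod_insert ha]
    refine Ex_indep p (S := S a) (T := ⋃ i ∈ W, S i) ?_ (hg a (by simp)) ?_
    · rw [Set.disjoint_iUnion₂_right]
      intro i hi
      exact hS a (by simp) i (by simp [hi]) (by rintro rfl; exact ha hi)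
    · intro ω ω' h
      refine Finset.prod_congr rfl fun i hi => hg i (by simp [hi]) _ _ fun e he => h e ?_
      exact Set.mem_biUnion (by exact_mod_cast hi) he

lemma Pr_nonneg {p : ℝ} (h0 : 0 ≤ p) (h1 : p ≤ 1) (A : (E → Bool) → Prop) : 0 ≤ Pr p A := by
  have := Ex_mono h0 h1 (f := fun _ => 0) (g := fun ω => ind (A ω)) (fun ω => ind_nonneg _)
  rwa [Ex_const] at this

lemma Pr_le_one {p : ℝ} (h0 : 0 ≤ p) (h1 : p ≤ 1) (A : (E → Bool) → Prop) : Pr p A ≤ 1 := by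
  have := Ex_mono h0 h1 (f := fun ω => ind (A ω)) (g := fun _ => 1) (fun ω => ind_le_one _)
  rwa [Ex_const] at this

lemma Pr_mono {p : ℝ} (h0 : 0 ≤ p) (h1 : p ≤ 1) {A B : (E → Bool) → Prop}
    (h : ∀ ω, A ω → B ω) : Pr p A ≤ Pr p B := by
  refine Ex_mono h0 h1 fun ω => ?_
  by_cases hA : A ω
  · rw [ind_true hA, ind_true (h ω hA)]
  · rw [ind_false hA]; exact ind_nonneg _

lemma Pr_not (p : ℝ) (A : (E → Bool) → Prop) : Pr p (fun ω => ¬ A ω) = 1 - Pr p A := by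
  unfold Pr
  have : (fun ω => ind (¬ A ω)) = fun ω => (1:ℝ) - ind (A ω) := by
    funext ω; by_cases h : A ω <;> simp [ind, h]
  rw [this, Ex_sub, Ex_one]

lemma Pr_or_le {p : ℝ} (h0 : 0 ≤ p) (h1 : p ≤ 1) (A B : (E → Bool) → Prop) :
    Pr p (fun ω => A ω ∨ B ω) ≤ Pr p A + Pr p B := by
  unfold Pr
  rw [← Ex_add]
  refine Ex_mono h0 h1 fun ω => ?_
  by_cases hA : A ω <;> by_cases hB : B ω <;> simp [ind, hA, hB]

lemma Pr_exists_le {ι : Type*} {p : ℝ} (h0 : 0 ≤ p) (h1 : p ≤ 1) (s : Finset ι)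
    (A : ι → (E → Bool) → Prop) (b : ℝ) (hb : ∀ i ∈ s, Pr p (A i) ≤ b) :
    Pr p (fun ω => ∃ i ∈ s, A i ω) ≤ s.card * b := by
  have : Pr p (fun ω => ∃ i ∈ s, A i ω) ≤ ∑ i ∈ s, Pr p (A i) := by
    unfold Pr
    rw [← Ex_sum]
    refine Ex_mono h0 h1 fun ω => ?_
    by_cases h : ∃ i ∈ s, A i ω
    · obtain ⟨i, hi, hA⟩ := h
      rw [ind_true ⟨i, hi, hA⟩, ← ind_true hA]
      exact Finset.single_le_sum (f := fun i => ind (A i ω)) (fun _ _ => ind_nonneg _) hi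
    · rw [ind_false h]; exact Finset.sum_nonneg fun _ _ => ind_nonneg _
  refine this.trans ((Finset.sum_le_sum hb).trans ?_)
  simp

/-- independent selection: if `sel` and `B d` are independent for all `d` then
`Pr (B (sel ω) ω) ≤ b`. -/
lemma Pr_sel_le {α : Type*} [Fintype α] {p : ℝ} (h0 : 0 ≤ p) (h1 : p ≤ 1) {S T : Set E}
    (hST : Disjoint S T) (Q : (E → Bool) → Prop) (sel : (E → Bool) → α) (hsel : Dep S sel)
    (B : α → (E → Bool) → Prop) (hB : ∀ d, Dep T (B d)) (b : ℝ) (hb0 : 0 ≤ b)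
    (hb : ∀ d, (∃ ω, Q ω ∧ sel ω = d) → Pr p (B d) ≤ b) :
    Pr p (fun ω => Q ω ∧ B (sel ω) ω) ≤ b := by
  have key : Pr p (fun ω => Q ω ∧ B (sel ω) ω) ≤
      ∑ d : α, Ex p (fun ω => ind (sel ω = d)) * b := by
    calc Pr p (fun ω => Q ω ∧ B (sel ω) ω)
        ≤ Ex p (fun ω => ∑ d : α, ind (∃ ω, Q ω ∧ sel ω = d) * (ind (sel ω = d) * ind (B d ω))) := by
          refine Ex_mono h0 h1 fun ω => ?_
          by_cases h : Q ω ∧ B (sel ω) ω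
          · rw [ind_true h]
            have := Finset.single_le_sum (s := Finset.univ) (f := fun d => ind (∃ ω, Q ω ∧ sel ω = d) *
              (ind (sel ω = d) * ind (B d ω)))
              (fun _ _ => mul_nonneg (ind_nonneg _) (mul_nonneg (ind_nonneg _) (ind_nonneg _)))
              (Finset.mem_univ (sel ω))
            refine le_trans (le_of_eq ?_) this
            rw [ind_true ⟨ω, h.1, rfl⟩, ind_true rfl, ind_true h.2]; norm_num
          · rw [ind_false h]
            exact Finset.sum_nonneg fun _ _ =>
              mul_nonneg (ind_nonneg _) (mul_nonneg (ind_nonneg _) (ind_nonneg _))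
      _ ≤ _ := by
          rw [Ex_sum]
          refine Finset.sum_le_sum fun d _ => ?_
          rw [Ex_mul_left, Ex_indep p hST (f := fun ω => ind (sel ω = d)) (g := fun ω => ind (B d ω))
            (fun ω ω' h => by simp only [hsel ω ω' h]) (fun ω ω' h => by simp only [hB d ω ω' h])]
          have hnn : 0 ≤ Ex p (fun ω => ind (sel ω = d)) := Pr_nonneg h0 h1 _
          by_cases hd : ∃ ω, Q ω ∧ sel ω = d
          · rw [ind_true hd, one_mul]
            exact mul_le_mul_of_nonneg_left (hb d hd) hnn
          · rw [ind_false hd, zero_mul]; positivity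
  refine key.trans ?_
  rw [← Finset.sum_mul, ← Ex_sum]
  have : (fun ω : E → Bool => ∑ d : α, ind (sel ω = d)) = fun _ => (1:ℝ) := by
    funext ω; simp [ind]
  rw [this, Ex_one, one_mul]

/-- cylinder probability -/
lemma Pr_cyl (p : ℝ) (F₁ F₂ : Finset E) (h : Disjoint F₁ F₂) :
    Pr p (fun ω : E → Bool => (∀ e ∈ F₁, ω e = true) ∧ (∀ e ∈ F₂, ω e = false)) =
      p ^ F₁.card * (1 - p) ^ F₂.card := by
  have := Ex_prod_coord (E := E) p (fun e b => (if e ∈ F₁ then (if b then 1 else 0) else 1) *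
    (if e ∈ F₂ then (if b then 0 else 1) else 1))
  have h2 : ∀ ω : E → Bool, (∏ e, ((if e ∈ F₁ then (if ω e then 1 else 0) else 1) *
    (if e ∈ F₂ then (if ω e then (0:ℝ) else 1) else 1))) =
      ind ((∀ e ∈ F₁, ω e = true) ∧ (∀ e ∈ F₂, ω e = false)) := by
    intro ω
    by_cases hω : (∀ e ∈ F₁, ω e = true) ∧ (∀ e ∈ F₂, ω e = false)
    · rw [ind_true hω]
      refine Finset.prod_eq_one fun e _ => ?_
      by_cases h1 : e ∈ F₁ <;> by_cases h2 : e ∈ F₂ <;>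
        simp [h1, h2, hω.1 e, hω.2 e] 
      · exact Finset.disjoint_left.mp h h1 h2
    · rw [ind_false hω]
      rw [not_and_or] at hω
      push Not at hω
      rcases hω with ⟨e, he, h1⟩ | ⟨e, he, h1⟩
      · exact Finset.prod_eq_zero (Finset.mem_univ e) (by simp [he, h1])
      · exact Finset.prod_eq_zero (Finset.mem_univ e) (by simp [he, h1])
  unfold Pr
  simp only [← h2]
  rw [this]
  have h3 : ∀ e : E, (p * ((if e ∈ F₁ then (if true then 1 else 0) else 1) *
    (if e ∈ F₂ then (if true then 0 else 1) else 1)) + (1 - p) *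
     ((if e ∈ F₁ then (if false then 1 else 0) else 1) *
    (if e ∈ F₂ then (if false then 0 else 1) else 1))) =
     (if e ∈ F₁ then p else 1) * (if e ∈ F₂ then 1 - p else 1) := by
    intro e
    by_cases h1 : e ∈ F₁ <;> by_cases h2 : e ∈ F₂
    · exact absurd h2 (Finset.disjoint_left.mp h h1)
    all_goals simp [h1, h2]
  rw [← Finset.prod_const, ← Finset.prod_const]
  refine (Finset.prod_congr rfl fun e _ => h3 e).trans ?_
  simp only [Finset.prod_mul_distrib, Finset.prod_ite_mem, Finset.univ_inter]

/-- MGF of a count -/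
lemma Ex_exp_count {ι : Type*} (p : ℝ) (W : Finset ι) (S : ι → Set E)
    (hS : ∀ i ∈ W, ∀ j ∈ W, i ≠ j → Disjoint (S i) (S j)) (Q : ι → (E → Bool) → Prop)
    (hQ : ∀ i ∈ W, Dep (S i) (Q i)) (l : ℝ) :
    Ex p (fun ω => Real.exp (l * (W.filter (fun i => Q i ω)).card)) =
      ∏ i ∈ W, (1 + (Real.exp l - 1) * Pr p (Q i)) := by
  have h1 : ∀ ω : E → Bool, Real.exp (l * (W.filter (fun i => Q i ω)).card) =
      ∏ i ∈ W, (1 + (Real.exp l - 1) * ind (Q i ω)) := by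
    intro ω
    have : ∀ i, (1 + (Real.exp l - 1) * ind (Q i ω)) = if Q i ω then Real.exp l else 1 := by
      intro i; by_cases h : Q i ω <;> simp [ind, h]
    simp only [this]
    rw [← Finset.prod_filter, Finset.prod_const, mul_comm, Real.exp_nat_mul]
  simp only [h1]
  rw [Ex_prod_indep p W S hS]
  · refine Finset.prod_congr rfl fun i _ => ?_
    rw [Ex_add, Ex_mul_left, Ex_one]; rfl
  · intro i hi ω ω' h
    simp only [hQ i hi ω ω' h]

lemma chernoff_upper {ι : Type*} {p : ℝ} (h0 : 0 ≤ p) (h1 : p ≤ 1) (W : Finset ι) (S : ι → Set E)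
    (hS : ∀ i ∈ W, ∀ j ∈ W, i ≠ j → Disjoint (S i) (S j)) (Q : ι → (E → Bool) → Prop)
    (hQ : ∀ i ∈ W, Dep (S i) (Q i)) (q m k : ℝ) (hq : ∀ i ∈ W, Pr p (Q i) ≤ q)
    (hm : W.card * q ≤ m) :
    Pr p (fun ω => k ≤ (W.filter (fun i => Q i ω)).card) ≤ Real.exp (2 * m - k) := by
  have he : Real.exp 1 - 1 ≤ 2 := by linarith [Real.exp_one_lt_d9]
  have he0 : 0 ≤ Real.exp 1 - 1 := by linarith [Real.exp_one_gt_d9]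
  calc Pr p (fun ω => k ≤ (W.filter (fun i => Q i ω)).card)
      ≤ Ex p (fun ω => Real.exp (-k) * Real.exp (1 * (W.filter (fun i => Q i ω)).card)) := by
        refine Ex_mono h0 h1 fun ω => ?_
        rw [← Real.exp_add]
        by_cases h : k ≤ (W.filter (fun i => Q i ω)).card
        · rw [ind_true h]; apply Real.one_le_exp; linarith
        · rw [ind_false h]; positivity
    _ = Real.exp (-k) * ∏ i ∈ W, (1 + (Real.exp 1 - 1) * Pr p (Q i)) := by
        rw [Ex_mul_left, Ex_exp_count p W S hS Q hQ]
    _ ≤ Real.exp (-k) * ∏ i ∈ W, Real.exp (2 * q) := by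
        refine mul_le_mul_of_nonneg_left ?_ (Real.exp_pos _).le
        refine Finset.prod_le_prod (fun i _ => ?_) (fun i hi => ?_)
        · have := Pr_nonneg h0 h1 (Q i); positivity
        · have h3 := Pr_nonneg h0 h1 (Q i)
          have h4 := hq i hi
          have h5 := Real.add_one_le_exp (2 * q)
          nlinarith
    _ = Real.exp (2 * (W.card * q) - k) := by
        rw [Finset.prod_const, ← Real.exp_nat_mul, ← Real.exp_add]; congr 1; ring
    _ ≤ _ := Real.exp_le_exp.mpr (by linarith)

lemma chernoff_lower {ι : Type*} {p : ℝ} (h0 : 0 ≤ p) (h1 : p ≤ 1) (W : Finset ι) (S : ι → Set E)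
    (hS : ∀ i ∈ W, ∀ j ∈ W, i ≠ j → Disjoint (S i) (S j)) (Q : ι → (E → Bool) → Prop)
    (hQ : ∀ i ∈ W, Dep (S i) (Q i)) (q m k l : ℝ) (hl0 : 0 ≤ l) (hl1 : l ≤ 1)
    (hq : ∀ i ∈ W, q ≤ Pr p (Q i))
    (hm : m ≤ W.card * q) :
    Pr p (fun ω => (W.filter (fun i => Q i ω)).card ≤ k) ≤
      Real.exp (l * k - m * (l - l ^ 2 / 2)) := by
  have hexp : Real.exp (-l) ≤ 1 - l + l ^ 2 / 2 := by
    have h2 := Real.quadratic_le_exp_of_nonneg hl0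
    rw [Real.exp_neg, inv_le_comm₀ (Real.exp_pos _) (by nlinarith)]
    refine le_trans ?_ h2
    rw [inv_le_iff_one_le_mul₀ (by nlinarith)]
    nlinarith [sq_nonneg (l ^ 2)]
  have hc : 0 ≤ l - l ^ 2 / 2 := by nlinarith
  calc Pr p (fun ω => (W.filter (fun i => Q i ω)).card ≤ k)
      ≤ Ex p (fun ω => Real.exp (l * k) * Real.exp (-l * (W.filter (fun i => Q i ω)).card)) := by
        refine Ex_mono h0 h1 fun ω => ?_
        rw [← Real.exp_add]
        by_cases h : (W.filter (fun i => Q i ω)).card ≤ k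
        · rw [ind_true h]; apply Real.one_le_exp; nlinarith
        · rw [ind_false h]; positivity
    _ = Real.exp (l * k) * ∏ i ∈ W, (1 + (Real.exp (-l) - 1) * Pr p (Q i)) := by
        rw [Ex_mul_left, Ex_exp_count p W S hS Q hQ]
    _ ≤ Real.exp (l * k) * ∏ i ∈ W, Real.exp (-(l - l ^ 2 / 2) * q) := by
        refine mul_le_mul_of_nonneg_left ?_ (Real.exp_pos _).le
        refine Finset.prod_le_prod (fun i _ => ?_) (fun i hi => ?_)
        · have h3 := Pr_nonneg h0 h1 (Q i)
          have h4 := Pr_le_one h0 h1 (Q i)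
          have := Real.exp_pos (-l)
          nlinarith
        · have h3 := Pr_nonneg h0 h1 (Q i)
          have h4 := hq i hi
          have h5 := Real.add_one_le_exp (-(l - l ^ 2 / 2) * q)
          nlinarith
    _ = Real.exp (l * k - (W.card * q) * (l - l ^ 2 / 2)) := by
        rw [Finset.prod_const, ← Real.exp_nat_mul, ← Real.exp_add]; congr 1; ring
    _ ≤ _ := Real.exp_le_exp.mpr (by nlinarith)

end Prob

/-! ### Deterministic part -/

section Det
variable {n : ℕ}

/-- The graph of a parent function. -/
def parGraph (r : Fin n) (par : Fin n → Fin n) : SimpleGraph (Fin n) where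
  Adj a b := a ≠ b ∧ ((a ≠ r ∧ par a = b) ∨ (b ≠ r ∧ par b = a))
  symm := ⟨fun _ _ h => ⟨h.1.symm, h.2.symm⟩⟩
  loopless := ⟨fun _ h => h.1 rfl⟩

lemma parGraph_walk (r : Fin n) (par : Fin n → Fin n) (h : Fin n → ℕ)
    (hh : ∀ v, v ≠ r → h (par v) < h v) (Q : Set (Fin n)) (hQ : ∀ v ∈ Q, v ≠ r → par v ∈ Q) :
    ∀ k, ∀ v ∈ Q, h v ≤ k → ∃ w : (parGraph r par).Walk v r, ∀ x ∈ w.support, x ∈ Q := by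
  intro k
  induction k with
  | zero =>
    intro v hv hk
    by_cases hvr : v = r
    · subst hvr; exact ⟨SimpleGraph.Walk.nil, by simpa using hv⟩
    · have := hh v hvr; omega
  | succ k ih =>
    intro v hv hk
    by_cases hvr : v = r
    · subst hvr; exact ⟨SimpleGraph.Walk.nil, by simpa using hv⟩
    · have h1 := hh v hvr
      obtain ⟨w, hw⟩ := ih (par v) (hQ v hv hvr) (by omega)
      have hadj : (parGraph r par).Adj v (par v) :=
        ⟨by intro h2; rw [← h2] at h1; omega, Or.inl ⟨hvr, rfl⟩⟩
      refine ⟨SimpleGraph.Walk.cons hadj w, ?_⟩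
      intro x hx
      rw [SimpleGraph.Walk.support_cons, List.mem_cons] at hx
      rcases hx with rfl | hx
      · exact hv
      · exact hw x hx

lemma parGraph_isTree (r : Fin n) (par : Fin n → Fin n) (h : Fin n → ℕ)
    (hh : ∀ v, v ≠ r → h (par v) < h v) : (parGraph r par).IsTree := by
  have hreach : ∀ v, (parGraph r par).Reachable v r := fun v => by
    obtain ⟨w, -⟩ := parGraph_walk r par h hh Set.univ (fun _ _ _ => trivial) (h v) v trivial le_rfl
    exact ⟨w⟩
  have hconn : (parGraph r par).Connected := by
    have : Nonempty (Fin n) := ⟨r⟩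
    exact ⟨fun a b => (hreach a).trans (hreach b).symm⟩
  rw [SimpleGraph.isTree_iff_connected_and_card]
  refine ⟨hconn, ?_⟩
  have h1 := hconn.card_vert_le_card_edgeSet_add_one
  refine le_antisymm ?_ h1
  have hsub : (parGraph r par).edgeSet ⊆
      ((Finset.univ.erase r).image (fun v => s(v, par v)) : Finset (Sym2 (Fin n))) := by
    intro e
    induction e using Sym2.ind with
    | _ a b =>
      intro he
      rw [SimpleGraph.mem_edgeSet] at he
      rw [Finset.mem_coe, Finset.mem_image]
      rcases he.2 with ⟨h1, h2⟩ | ⟨h1, h2⟩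
      · exact ⟨a, by simp [h1], by rw [h2]⟩
      · exact ⟨b, by simp [h1], by rw [h2, Sym2.eq_swap]⟩
  have h2 := Set.ncard_le_ncard hsub (Finset.finite_toSet _)
  rw [Set.ncard_coe_finset] at h2
  have h3 := h2.trans Finset.card_image_le
  rw [Finset.card_erase_of_mem (Finset.mem_univ r)] at h3
  simp only [Finset.card_univ, Fintype.card_fin] at h3
  have h4 : 0 < n := r.pos
  rw [← Nat.card_coe_set_eq] at h3
  simp only [Nat.card_eq_fintype_card, Fintype.card_fin] at h3 ⊢
  omega

lemma parGraph_path (r : Fin n) (par : Fin n → Fin n) (h : Fin n → ℕ)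
    (hh : ∀ v, v ≠ r → h (par v) < h v) (Q : Set (Fin n)) (hQ : ∀ v ∈ Q, v ≠ r → par v ∈ Q)
    (v : Fin n) (hv : v ∈ Q) (q : (parGraph r par).Walk v r) (hq : q.IsPath) :
    ∀ x ∈ q.support, x ∈ Q := by
  obtain ⟨w, hw⟩ := parGraph_walk r par h hh Q hQ (h v) v hv le_rfl
  have huniq := (parGraph_isTree r par h hh).isAcyclic.subsingleton_path v r
  have huniq := huniq.elim ⟨q, hq⟩ w.toPath
  intro x hx
  have : q = w.toPath := congrArg Subtype.val huniq
  rw [this] at hx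
  exact hw x (SimpleGraph.Walk.support_toPath_subset_support w hx)

/-- cut-connectivity of a vertex set -/
def CutConn (G : SimpleGraph (Fin n)) (D : Finset (Fin n)) : Prop :=
  ∀ Y ⊆ D, Y.Nonempty → Y ≠ D → ∃ y ∈ Y, ∃ z ∈ D, z ∉ Y ∧ G.Adj y z

lemma cutConn_singleton (G : SimpleGraph (Fin n)) (x : Fin n) : CutConn G {x} := by
  intro Y hY hne hne2
  rcases Finset.subset_singleton_iff.mp hY with h | h
  · rw [h] at hne; simp at hne
  · exact absurd h hne2

lemma CutConn.ins {G : SimpleGraph (Fin n)} {D : Finset (Fin n)} (hD : CutConn G D)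
    {y z : Fin n} (hy : y ∈ D) (hz : z ∉ D) (hyz : G.Adj y z) : CutConn G (insert z D) := by
  intro Y hY hne hne2
  by_cases hzY : z ∈ Y
  · by_cases hE : (Y.erase z).Nonempty
    · have hsub : Y.erase z ⊆ D := by
        intro x hx
        rw [Finset.mem_erase] at hx
        exact (Finset.mem_insert.mp (hY hx.2)).resolve_left hx.1
      have hne3 : Y.erase z ≠ D := by
        intro h; apply hne2; rw [← h, Finset.insert_erase hzY]
      obtain ⟨a, ha, b, hb, hbY, hab⟩ := hD _ hsub hE hne3
      refine ⟨a, Finset.mem_of_mem_erase ha, b, Finset.mem_insert_of_mem hb, ?_, hab⟩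
      intro h; apply hbY
      rw [Finset.mem_erase]
      exact ⟨by rintro rfl; exact hz hb, h⟩
    · refine ⟨z, hzY, y, Finset.mem_insert_of_mem hy, ?_, hyz.symm⟩
      intro h
      exact hE ⟨y, Finset.mem_erase.mpr ⟨by rintro rfl; exact hz hy, h⟩⟩
  · have hsub : Y ⊆ D := fun x hx =>
      (Finset.mem_insert.mp (hY hx)).resolve_left (by rintro rfl; exact hzY hx)
    by_cases hYD : Y = D
    · subst hYD
      exact ⟨y, hy, z, Finset.mem_insert_self _ _, hz, hyz⟩
    · obtain ⟨a, ha, b, hb, hbY, hab⟩ := hD _ hsub hne hYD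
      exact ⟨a, ha, b, Finset.mem_insert_of_mem hb, hbY, hab⟩

/-- rooted structure -/
def Rooted (G : SimpleGraph (Fin n)) (x : Fin n) (D : Finset (Fin n)) : Prop :=
  ∃ (par : Fin n → Fin n) (h : Fin n → ℕ), ∀ b ∈ D, b ≠ x →
    par b ∈ D ∧ G.Adj b (par b) ∧ h (par b) < h b

lemma CutConn.rooted {G : SimpleGraph (Fin n)} {D : Finset (Fin n)} (hD : CutConn G D)
    {x : Fin n} (hx : x ∈ D) : Rooted G x D := by
  obtain ⟨Y, hY, hmax⟩ := Finset.exists_max_image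
    (D.powerset.filter (fun Y => x ∈ Y ∧ Rooted G x Y)) Finset.card
    ⟨{x}, by
      simp only [Finset.mem_filter, Finset.mem_powerset, Finset.singleton_subset_iff,
        Finset.mem_singleton, true_and]
      refine ⟨hx, id, fun _ => 0, fun b hb hbx => ?_⟩
      exact absurd (Finset.mem_singleton.mp hb) hbx⟩
  simp only [Finset.mem_filter, Finset.mem_powerset] at hY hmax
  obtain ⟨hYD, hxY, par, h, hr⟩ := hY
  by_cases hEq : Y = D
  · subst hEq; exact ⟨par, h, hr⟩
  · exfalso
    obtain ⟨y, hy, z, hz, hzY, hyz⟩ := hD Y hYD ⟨x, hxY⟩ hEq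
    have := hmax (insert z Y) ⟨Finset.insert_subset hz hYD, Finset.mem_insert_of_mem hxY,
      Function.update par z y, Function.update h z (h y + 1), ?_⟩
    · rw [Finset.card_insert_of_notMem hzY] at this; omega
    · intro b hb hbx
      have hyz' : y ≠ z := hyz.ne
      by_cases hbz : b = z
      · subst hbz
        simp only [Function.update_self, Function.update_of_ne hyz']
        exact ⟨Finset.mem_insert_of_mem hy, hyz.symm, by omega⟩
      · have hbY := (Finset.mem_insert.mp hb).resolve_left hbz
        obtain ⟨h1, h2, h3⟩ := hr b hbY hbx
        have : par b ≠ z := by rintro h4; rw [h4] at h1; exact hzY h1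
        simp only [Function.update_of_ne hbz, Function.update_of_ne this]
        exact ⟨Finset.mem_insert_of_mem h1, h2, h3⟩

/-- The construction of ISTs from cores and matchings. -/
lemma ists_of_cores (G : SimpleGraph (Fin n)) (r : Fin n) (t : ℕ) (B : Fin t → Finset (Fin n))
    (u : Fin t → Fin n) (hu : ∀ i, u i ∈ B i) (hru : ∀ i, G.Adj r (u i))
    (hconn : ∀ i, CutConn G (B i)) (hrB : ∀ i, r ∉ B i)
    (hdisj : ∀ i j, i ≠ j → Disjoint (B i) (B j))
    (f : Fin n → Fin t → Fin n)
    (hf : ∀ v, v ≠ r → ∀ i, v ∉ B i → (∀ b ∈ B i, ¬ G.Adj v b) →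
      G.Adj v (f v i) ∧ f v i ≠ r ∧ (∀ j, f v i ∉ B j) ∧ ∃ b ∈ B i, G.Adj (f v i) b)
    (hinj : ∀ v, v ≠ r → ∀ i j, v ∉ B i → (∀ b ∈ B i, ¬ G.Adj v b) → v ∉ B j →
      (∀ b ∈ B j, ¬ G.Adj v b) → f v i = f v j → i = j) :
    HasISTs G r t := by
  choose cpar ch hc using fun i => (hconn i).rooted (hu i)
  let nb : Fin t → Fin n → Fin n := fun i v =>
    if h : ∃ b ∈ B i, G.Adj v b then h.choose else v
  have hnb : ∀ i v, (∃ b ∈ B i, G.Adj v b) → nb i v ∈ B i ∧ G.Adj v (nb i v) := by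
    intro i v h
    simp only [nb, dif_pos h]
    exact h.choose_spec
  let par : Fin t → Fin n → Fin n := fun i v =>
    if v ∈ B i then (if v = u i then r else cpar i v)
    else if ∃ b ∈ B i, G.Adj v b then nb i v else f v i
  let M : Fin t → ℕ := fun i => ∑ b, ch i b
  have hM : ∀ i b, ch i b ≤ M i := fun i b =>
    Finset.single_le_sum (f := ch i) (fun _ _ => Nat.zero_le _) (Finset.mem_univ b)
  let h : Fin t → Fin n → ℕ := fun i v =>
    if v = r then 0 else if v ∈ B i then ch i v + 1
    else if ∃ b ∈ B i, G.Adj v b then M i + 2 else M i + 3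
  have hpar : ∀ i v, v ≠ r → G.Adj v (par i v) ∧ h i (par i v) < h i v := by
    intro i v hv
    by_cases hvB : v ∈ B i
    · by_cases hvu : v = u i
      · subst hvu
        simp only [par, h, hvB, hv, if_true, if_false]
        exact ⟨(hru i).symm, by omega⟩
      · obtain ⟨h1, h2, h3⟩ := hc i v hvB hvu
        have h4 : cpar i v ≠ r := by intro h4; rw [h4] at h1; exact hrB i h1
        simp only [par, h, hvB, hv, hvu, h1, h4, if_true, if_false]
        exact ⟨h2, by omega⟩
    · by_cases hvN : ∃ b ∈ B i, G.Adj v b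
      · obtain ⟨h1, h2⟩ := hnb i v hvN
        have h4 : nb i v ≠ r := by intro h4; rw [h4] at h1; exact hrB i h1
        have h5 := hM i (nb i v)
        simp only [par, h, hvB, hv, hvN, h1, h4, if_true, if_false]
        exact ⟨h2, by omega⟩
      · obtain ⟨h1, h2, h3, h4⟩ := hf v hv i hvB (by push Not at hvN; exact hvN)
        have h5 := h3 i
        simp only [par, h, hvB, hv, hvN, h2, h4, h5, if_true, if_false]
        exact ⟨h1, by omega⟩
  have hh : ∀ i v, v ≠ r → h i (par i v) < h i v := fun i v hv => (hpar i v hv).2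
  refine ⟨fun i => parGraph r (par i), ⟨fun i => ⟨?_, parGraph_isTree r _ (h i) (hh i)⟩, ?_⟩⟩
  · intro a b hab
    rcases hab.2 with ⟨h1, h2⟩ | ⟨h1, h2⟩
    · rw [← h2]; exact (hpar i a h1).1
    · rw [← h2]; exact (hpar i b h1).1.symm
  · intro v hv i j hij p q hp hq x hxp hxq
    let Q : Fin t → Set (Fin n) := fun i =>
      {x | x = v ∨ x = r ∨ x ∈ B i ∨ ((v ∉ B i ∧ ∀ b ∈ B i, ¬ G.Adj v b) ∧ x = f v i)}
    have hQ : ∀ i, ∀ x ∈ Q i, x ≠ r → par i x ∈ Q i := by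
      intro i x hx hxr
      have hBcase : ∀ y, y ∈ B i → par i y ∈ Q i := by
        intro y hy
        by_cases hyu : y = u i
        · right; left
          simp only [par, if_true, hyu]
          simp only [hu, if_true]
        · right; right; left
          simp only [par, hy, hyu, if_true, if_false]
          exact (hc i y hy hyu).1
      have hNcase : ∀ y, y ∉ B i → (∃ b ∈ B i, G.Adj y b) → par i y ∈ Q i := by
        intro y hy hyN
        right; right; left
        simp only [par, hy, hyN, if_true, if_false]
        exact (hnb i y hyN).1
      rcases hx with rfl | rfl | hx | ⟨⟨h1, h2⟩, rfl⟩
      · by_cases hxB : x ∈ B i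
        · exact hBcase x hxB
        · by_cases hxN : ∃ b ∈ B i, G.Adj x b
          · exact hNcase x hxB hxN
          · right; right; right
            refine ⟨⟨hxB, by push Not at hxN; exact hxN⟩, ?_⟩
            simp only [par, hxB, hxN, if_false]
      · exact absurd rfl hxr
      · exact hBcase x hx
      · obtain ⟨_, _, h3, h4⟩ := hf v hv i h1 h2
        exact hNcase _ (h3 i) h4
    have e1 : x ∈ Q i := parGraph_path r _ (h i) (hh i) (Q i) (hQ i) v (Or.inl rfl) p hp x hxp
    have e2 : x ∈ Q j := parGraph_path r _ (h j) (hh j) (Q j) (hQ j) v (Or.inl rfl) q hq x hxq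
    rcases e1 with e1 | e1 | e1 | ⟨⟨h1, h2⟩, e1⟩
    · exact Or.inl e1
    · exact Or.inr e1
    · rcases e2 with e2 | e2 | e2 | ⟨⟨h3, h4⟩, e2⟩
      · exact Or.inl e2
      · exact Or.inr e2
      · exact absurd e2 (Finset.disjoint_left.mp (hdisj i j hij) e1)
      · rw [e2] at e1
        exact absurd e1 ((hf v hv j h3 h4).2.2.1 i)
    · rcases e2 with e2 | e2 | e2 | ⟨⟨h3, h4⟩, e2⟩
      · exact Or.inl e2
      · exact Or.inr e2
      · rw [e1] at e2
        exact absurd e2 ((hf v hv i h1 h2).2.2.1 j)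
      · exact absurd (hinj v hv i j h1 h2 h3 h4 (e1.symm.trans e2)) hij

/-- Hall-type lemma. -/
lemma hall_slack {ι V : Type*} [Fintype ι] [Fintype V] [Nonempty V] (I : Finset ι) (cand : Finset V)
    (rel : ι → V → Prop) (σ slack : ℕ) (hcard : I.card + slack ≤ cand.card)
    (h2 : ∀ S ⊆ I, S.card = σ → (cand.filter (fun w => ∀ j ∈ S, ¬ rel j w)).card ≤ slack)
    (h3 : ∀ j ∈ I, σ ≤ (cand.filter (fun w => rel j w)).card) :
    ∃ f : ι → V, (∀ j ∈ I, f j ∈ cand ∧ rel j (f j)) ∧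
      ∀ i ∈ I, ∀ j ∈ I, f i = f j → i = j := by
  rcases I.eq_empty_or_nonempty with rfl | hIne
  · exact ⟨fun _ => Classical.arbitrary V, by simp, by simp⟩
  · let N : I → Finset V := fun j => cand.filter (fun w => rel j w)
    have hall : ∀ s : Finset I, s.card ≤ (s.biUnion N).card := by
      intro s
      rcases s.eq_empty_or_nonempty with rfl | ⟨j, hj⟩
      · simp
      rcases le_total s.card σ with hs | hs
      · refine hs.trans ((h3 j j.2).trans ?_)
        exact Finset.card_le_card (Finset.subset_biUnion_of_mem N hj)
      · obtain ⟨s', hs', hc⟩ := Finset.exists_subset_card_eq hs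
        have h4 := h2 (s'.map (Function.Embedding.subtype _)) (by
          intro x hx
          simp only [Finset.mem_map, Function.Embedding.coe_subtype] at hx
          obtain ⟨y, _, rfl⟩ := hx
          exact y.2) (by rw [Finset.card_map, hc])
        have h5 : cand ⊆ s.biUnion N ∪
            (cand.filter (fun w => ∀ j ∈ s'.map (Function.Embedding.subtype _), ¬ rel j w)) := by
          intro w hw
          rw [Finset.mem_union]
          by_cases h6 : ∃ j ∈ s', rel j w
          · obtain ⟨j, hj, h7⟩ := h6
            left
            exact Finset.mem_biUnion.mpr ⟨j, hs' hj, Finset.mem_filter.mpr ⟨hw, h7⟩⟩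
          · right
            rw [Finset.mem_filter]
            refine ⟨hw, ?_⟩
            intro j hj hr
            simp only [Finset.mem_map, Function.Embedding.coe_subtype] at hj
            obtain ⟨y, hy, rfl⟩ := hj
            exact h6 ⟨y, hy, hr⟩
        have h6 := (Finset.card_le_card h5).trans (Finset.card_union_le _ _)
        have h7 : s.card ≤ I.card := by
          have := Finset.card_le_univ s
          simpa using this
        omega
    obtain ⟨g, hg, hg2⟩ := (Finset.all_card_le_biUnion_card_iff_exists_injective N).mp hall
    obtain ⟨j0, hj0⟩ := hIne
    refine ⟨fun j => if h : j ∈ I then g ⟨j, h⟩ else g ⟨j0, hj0⟩, ?_, ?_⟩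
    · intro j hj
      simp only [hj, dif_pos]
      have := Finset.mem_filter.mp (hg2 ⟨j, hj⟩)
      exact this
    · intro i hi j hj hij
      simp only [hi, hj, dif_pos] at hij
      exact congrArg Subtype.val (hg hij)

end Det

section Det2
variable {n : ℕ}

/-- any two large disjoint subsets of `R` are joined by an edge -/
def Joined (G : SimpleGraph (Fin n)) (R : Finset (Fin n)) (a : ℕ) : Prop :=
  ∀ X ⊆ R, ∀ Y ⊆ R, Disjoint X Y → a ≤ X.card → a ≤ Y.card → ∃ x ∈ X, ∃ y ∈ Y, G.Adj x y

lemma Joined.mono {G : SimpleGraph (Fin n)} {R R' : Finset (Fin n)} {a : ℕ} (h : Joined G R a)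
    (hR : R' ⊆ R) : Joined G R' a :=
  fun X hX Y hY => h X (hX.trans hR) Y (hY.trans hR)

lemma exists_conn (G : SimpleGraph (Fin n)) (R : Finset (Fin n)) (a s : ℕ) (hJ : Joined G R a)
    (hs1 : 1 ≤ s) (hsa : s ≤ a) (hR : 3 * a ≤ R.card) :
    ∃ D ⊆ R, D.card = s ∧ CutConn G D := by
  -- maximal closed set of size < a
  obtain ⟨X, hX, hmax⟩ := Finset.exists_max_image
    (R.powerset.filter (fun X => X.card < a ∧ ∀ x ∈ X, ∀ y ∈ R \ X, ¬ G.Adj x y)) Finset.card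
    ⟨∅, by simp; omega⟩
  simp only [Finset.mem_filter, Finset.mem_powerset] at hX hmax
  obtain ⟨hXR, hXa, hXc⟩ := hX
  have hne : (R \ X).Nonempty := by
    rw [← Finset.card_pos]
    have := Finset.le_card_sdiff X R
    omega
  obtain ⟨x, hx⟩ := hne
  obtain ⟨Y, hY, hYmax⟩ := Finset.exists_max_image
    ((R \ X).powerset.filter (fun Y => Y.Nonempty ∧ Y.card ≤ s ∧ CutConn G Y)) Finset.card
    ⟨{x}, by
      simp only [Finset.mem_filter, Finset.mem_powerset, Finset.singleton_subset_iff,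
        Finset.card_singleton, Finset.singleton_nonempty, true_and]
      exact ⟨hx, hs1, cutConn_singleton G x⟩⟩
  simp only [Finset.mem_filter, Finset.mem_powerset] at hY hYmax
  obtain ⟨hYR, hYne, hYs, hYc⟩ := hY
  rcases hYs.eq_or_lt with hYs | hYs
  · exact ⟨Y, hYR.trans Finset.sdiff_subset, hYs, hYc⟩
  exfalso
  have hdXY : Disjoint X Y := by
    rw [Finset.disjoint_left]
    intro z hz hz2
    exact (Finset.mem_sdiff.mp (hYR hz2)).2 hz
  have hcl : ∀ y ∈ Y, ∀ z ∈ R \ (X ∪ Y), ¬ G.Adj y z := by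
    intro y hy z hz hyz
    rw [Finset.mem_sdiff, Finset.mem_union, not_or] at hz
    have := hYmax (insert z Y) ⟨Finset.insert_subset (Finset.mem_sdiff.mpr ⟨hz.1, hz.2.1⟩) hYR,
      Finset.insert_nonempty _ _, by rw [Finset.card_insert_of_notMem hz.2.2]; omega,
      hYc.ins hy hz.2.2 hyz⟩
    rw [Finset.card_insert_of_notMem hz.2.2] at this
    omega
  have hcl2 : ∀ y ∈ X ∪ Y, ∀ z ∈ R \ (X ∪ Y), ¬ G.Adj y z := by
    intro y hy z hz
    rcases Finset.mem_union.mp hy with hy | hy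
    · refine hXc y hy z ?_
      rw [Finset.mem_sdiff, Finset.mem_union, not_or] at hz
      exact Finset.mem_sdiff.mpr ⟨hz.1, hz.2.1⟩
    · exact hcl y hy z hz
  have hsub : X ∪ Y ⊆ R := Finset.union_subset hXR (hYR.trans Finset.sdiff_subset)
  have hcard : (X ∪ Y).card = X.card + Y.card := Finset.card_union_of_disjoint hdXY
  have hYpos := Finset.card_pos.mpr hYne
  by_cases hlt : (X ∪ Y).card < a
  · have := hmax (X ∪ Y) ⟨hsub, hlt, hcl2⟩
    omega
  · obtain ⟨y, hy, z, hz, hyz⟩ := hJ (X ∪ Y) hsub (R \ (X ∪ Y)) Finset.sdiff_subset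
      Finset.disjoint_sdiff (by omega) (by
        rw [Finset.card_sdiff_of_subset hsub]; omega)
    exact hcl2 y hy z hz hyz

lemma exists_family (G : SimpleGraph (Fin n)) (A : Finset (Fin n)) (a s : ℕ) (hJ : Joined G A a)
    (hs1 : 1 ≤ s) (hsa : s ≤ a) (m : ℕ) (hA : m * s + 3 * a ≤ A.card) :
    ∃ D : ℕ → Finset (Fin n), (∀ j < m, D j ⊆ A ∧ (D j).card = s ∧ CutConn G (D j)) ∧
      ∀ i < m, ∀ j < m, i ≠ j → Disjoint (D i) (D j) := by
  induction m with
  | zero => exact ⟨fun _ => ∅, by simp, by simp⟩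
  | succ m ih =>
    obtain ⟨D, h1, h2⟩ := ih (by rw [add_mul] at hA; omega)
    have hc : ((Finset.range m).biUnion D).card ≤ m * s := by
      refine (Finset.card_biUnion_le_card_mul _ _ s ?_).trans (by simp)
      intro j hj
      exact (h1 j (Finset.mem_range.mp hj)).2.1.le
    obtain ⟨Y, hY, hYs, hYc⟩ := exists_conn G (A \ (Finset.range m).biUnion D) a s
      (hJ.mono Finset.sdiff_subset) hs1 hsa (by
        have := Finset.le_card_sdiff ((Finset.range m).biUnion D) A
        rw [add_mul] at hA; omega)
    have hYd : ∀ j < m, Disjoint (D j) Y := by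
      intro j hj
      rw [Finset.disjoint_left]
      intro z hz hz2
      exact (Finset.mem_sdiff.mp (hY hz2)).2 (Finset.mem_biUnion.mpr ⟨j, Finset.mem_range.mpr hj, hz⟩)
    refine ⟨Function.update D m Y, ?_, ?_⟩
    · intro j hj
      by_cases hjm : j = m
      · subst hjm
        rw [Function.update_self]
        exact ⟨hY.trans Finset.sdiff_subset, hYs, hYc⟩
      · rw [Function.update_of_ne hjm]; exact h1 j (by omega)
    · intro i hi j hj hij
      by_cases him : i = m
      · subst him
        have hji : j ≠ i := hij.symm
        rw [Function.update_self, Function.update_of_ne hji]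
        exact (hYd j (by omega)).symm
      · by_cases hjm : j = m
        · subst hjm
          rw [Function.update_self, Function.update_of_ne him]
          exact hYd i (by omega)
        · rw [Function.update_of_ne him, Function.update_of_ne hjm]
          exact h2 i (by omega) j (by omega) hij

/-- vertices adjacent to `v` without neighbours in `X` -/
def cnt4 (G : SimpleGraph (Fin n)) (A X : Finset (Fin n)) (v : Fin n) : Finset (Fin n) :=
  (A ∪ X ∪ {v})ᶜ.filter (fun w => G.Adj v w ∧ ∀ x ∈ X, ¬ G.Adj w x)

/-- vertices adjacent to `v`, not to `r`, with a neighbour in `X` -/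
def cnt5 (G : SimpleGraph (Fin n)) (A X : Finset (Fin n)) (v r : Fin n) : Finset (Fin n) :=
  (A ∪ X ∪ {v, r})ᶜ.filter (fun w => G.Adj v w ∧ ¬ G.Adj r w ∧ ∃ x ∈ X, G.Adj w x)

def Good4 {ι : Type*} (G : SimpleGraph (Fin n)) (A : Finset (Fin n)) (D : ι → Finset (Fin n))
    (σ slack : ℕ) : Prop :=
  ∀ v, ∀ S : Finset ι, S.card = σ → (∀ j ∈ S, v ∉ D j) → (cnt4 G A (S.biUnion D) v).card ≤ slack

def Good5 {ι : Type*} (G : SimpleGraph (Fin n)) (A : Finset (Fin n)) (D : ι → Finset (Fin n))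
    (σ : ℕ) : Prop :=
  ∀ v r, ∀ j : ι, v ≠ r → v ∉ D j → r ∉ D j → σ ≤ (cnt5 G A (D j) v r).card

def GoodDeg (G : SimpleGraph (Fin n)) (A : Finset (Fin n)) (t slack : ℕ) : Prop :=
  ∀ v, t + slack + 1 + (A.filter (fun w => G.Adj v w)).card ≤
    (Finset.univ.filter (fun w => G.Adj v w)).card

lemma ists_det (G : SimpleGraph (Fin n)) (r : Fin n) (A : Finset (Fin n)) (t σ slack : ℕ)
    (u : Fin t → Fin n) (X : Fin t → Finset (Fin n)) (hinj : Function.Injective u)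
    (hru : ∀ j, G.Adj r (u j)) (huA : ∀ j, u j ∉ A) (hX : ∀ j, X j ⊆ insert (u j) A)
    (hrX : ∀ j, r ∉ X j) (hXd : ∀ i j, i ≠ j → Disjoint (X i) (X j))
    (hconn : ∀ j, CutConn G (insert (u j) (X j)))
    (hdeg : GoodDeg G A t slack) (h4 : Good4 G A X σ slack)
    (h5 : ∀ v, ∀ j, v ≠ r → v ∉ X j → σ ≤ (cnt5 G A (X j) v r).card) : HasISTs G r t := by
  have : Nonempty (Fin n) := ⟨r⟩
  have key : ∀ v, v ≠ r → ∃ f : Fin t → Fin n,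
      (∀ j ∈ Finset.univ.filter (fun j => v ∉ X j ∧ ¬ G.Adj v (u j)),
        f j ∈ Finset.univ.filter (fun w => G.Adj v w ∧ w ∉ A ∧ w ≠ r ∧ ∀ j, w ≠ u j) ∧
          ∃ x ∈ X j, G.Adj (f j) x) ∧
      ∀ i ∈ Finset.univ.filter (fun j => v ∉ X j ∧ ¬ G.Adj v (u j)),
        ∀ j ∈ Finset.univ.filter (fun j => v ∉ X j ∧ ¬ G.Adj v (u j)), f i = f j → i = j := by
    intro v hv
    refine hall_slack _ _ (fun j w => ∃ x ∈ X j, G.Adj w x) σ slack ?_ ?_ ?_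
    · have hd := hdeg v
      set I := Finset.univ.filter (fun j => v ∉ X j ∧ ¬ G.Adj v (u j))
      set J := Finset.univ.filter (fun j => G.Adj v (u j))
      set cand := Finset.univ.filter (fun w => G.Adj v w ∧ w ∉ A ∧ w ≠ r ∧ ∀ j, w ≠ u j)
      have hIJ : I.card + J.card ≤ t := by
        rw [← Finset.card_union_of_disjoint]
        · simpa using Finset.card_le_univ (I ∪ J)
        · rw [Finset.disjoint_left]
          intro j hj hj2
          exact (Finset.mem_filter.mp hj).2.2 (Finset.mem_filter.mp hj2).2
      have hsub : (Finset.univ.filter (fun w => G.Adj v w)) ⊆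
          cand ∪ (A.filter (fun w => G.Adj v w)) ∪ {r} ∪ J.image u := by
        intro w hw
        have hw := (Finset.mem_filter.mp hw).2
        simp only [Finset.mem_union, Finset.mem_singleton, Finset.mem_image, cand, J,
          Finset.mem_filter, Finset.mem_univ, true_and]
        by_cases h1 : w ∈ A
        · simp [h1, hw]
        by_cases h2 : w = r
        · simp [h2]
        by_cases h3 : ∃ j, w = u j
        · obtain ⟨j, rfl⟩ := h3
          exact Or.inr ⟨j, hw, rfl⟩
        · push Not at h3
          exact Or.inl (Or.inl (Or.inl ⟨hw, h1, h2, h3⟩))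
      have c1 := Finset.card_le_card hsub
      have c2 := Finset.card_union_le (cand ∪ (A.filter (fun w => G.Adj v w)) ∪ {r}) (J.image u)
      have c3 := Finset.card_union_le (cand ∪ (A.filter (fun w => G.Adj v w))) {r}
      have c4 := Finset.card_union_le cand (A.filter (fun w => G.Adj v w))
      have c5 := Finset.card_image_le (s := J) (f := u)
      rw [Finset.card_singleton] at c3
      omega
    · intro S hS hc
      refine le_trans (Finset.card_le_card ?_) (h4 v S hc
        (fun j hj => (Finset.mem_filter.mp (hS hj)).2.1))
      intro w hw
      simp only [Finset.mem_filter, Finset.mem_univ, true_and] at hw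
      obtain ⟨⟨hvw, hwA, hwr, hwu⟩, hwX⟩ := hw
      simp only [cnt4, Finset.mem_filter, Finset.mem_compl, Finset.mem_union, Finset.mem_singleton,
        Finset.mem_biUnion, not_or]
      refine ⟨⟨⟨hwA, ?_⟩, hvw.ne'⟩, hvw, ?_⟩
      · rintro ⟨j, _, hj⟩
        rcases Finset.mem_insert.mp (hX j hj) with h | h
        · exact hwu j h
        · exact hwA h
      · rintro x ⟨j, hj, hx⟩ hwx
        exact hwX j hj ⟨x, hx, hwx⟩
    · intro j hj
      refine le_trans (h5 v j hv (Finset.mem_filter.mp hj).2.1) (Finset.card_le_card ?_)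
      intro w hw
      simp only [cnt5, Finset.mem_filter, Finset.mem_compl, Finset.mem_union, Finset.mem_singleton,
        Finset.mem_insert, not_or] at hw
      obtain ⟨⟨⟨hwA, -⟩, -, hwr⟩, hvw, hrw, hx⟩ := hw
      simp only [Finset.mem_filter, Finset.mem_univ, true_and]
      refine ⟨⟨hvw, hwA, hwr, ?_⟩, hx⟩
      rintro j rfl
      exact hrw (hru j)
  choose! f hf hfi using key
  have hI : ∀ v i, v ∉ insert (u i) (X i) → (∀ b ∈ insert (u i) (X i), ¬ G.Adj v b) →
      i ∈ Finset.univ.filter (fun j => v ∉ X j ∧ ¬ G.Adj v (u j)) := by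
    intro v i h1 h2
    rw [Finset.mem_insert, not_or] at h1
    simp only [Finset.mem_filter, Finset.mem_univ, true_and]
    exact ⟨h1.2, h2 _ (Finset.mem_insert_self _ _)⟩
  refine ists_of_cores G r t (fun j => insert (u j) (X j)) u (fun j => Finset.mem_insert_self _ _)
    hru hconn ?_ ?_ f ?_ ?_
  · intro i h
    rcases Finset.mem_insert.mp h with h | h
    · exact (hru i).ne h
    · exact hrX i h
  · intro i j hij
    rw [Finset.disjoint_left]
    intro z hz hz2
    rcases Finset.mem_insert.mp hz with h | h <;> rcases Finset.mem_insert.mp hz2 with h' | h'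
    · exact hij (hinj (h.symm.trans h'))
    · rcases Finset.mem_insert.mp (hX j h') with h2 | h2
      · exact hij (hinj (h.symm.trans h2))
      · rw [h] at h2; exact huA i h2
    · rcases Finset.mem_insert.mp (hX i h) with h2 | h2
      · exact hij (hinj (h2.symm.trans h'))
      · rw [h'] at h2; exact huA j h2
    · exact Finset.disjoint_left.mp (hXd i j hij) h h'
  · intro v hv i h1 h2
    obtain ⟨h3, x, hx, hfx⟩ := hf v hv i (hI v i h1 h2)
    simp only [Finset.mem_filter, Finset.mem_univ, true_and] at h3
    refine ⟨h3.1, h3.2.2.1, ?_, x, Finset.mem_insert_of_mem hx, hfx⟩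
    intro j hj
    rcases Finset.mem_insert.mp hj with h | h
    · exact h3.2.2.2 j h
    · rcases Finset.mem_insert.mp (hX j h) with h | h
      · exact h3.2.2.2 j h
      · exact h3.2.1 h
  · intro v hv i j h1 h2 h3 h4 h
    exact hfi v hv i (hI v i h1 h2) j (hI v j h3 h4) h

lemma det_dense (G : SimpleGraph (Fin n)) (t σ slack : ℕ) (hdeg : GoodDeg G ∅ t slack)
    (h4 : Good4 G ∅ (fun x : Fin n => {x}) σ slack) (h5 : Good5 G ∅ (fun x : Fin n => {x}) σ)
    (r : Fin n) : HasISTs G r t := by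
  obtain ⟨U, hU, hUc⟩ := Finset.exists_subset_card_eq
    (s := Finset.univ.filter (fun w => G.Adj r w)) (n := t) (by have := hdeg r; omega)
  let e := U.equivFinOfCardEq hUc
  let u : Fin t → Fin n := fun j => (e.symm j : Fin n)
  have hinj : Function.Injective u := fun i j h => e.symm.injective (Subtype.ext h)
  have hru : ∀ j, G.Adj r (u j) := fun j =>
    (Finset.mem_filter.mp (hU (e.symm j).2)).2
  refine ists_det G r ∅ t σ slack u (fun j => {u j}) hinj hru (by simp) (by simp) ?_ ?_ ?_ hdeg ?_ ?_
  · intro j h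
    exact (hru j).ne (Finset.mem_singleton.mp h)
  · intro i j hij
    simpa using fun h => hij (hinj h)
  · intro j
    simpa using cutConn_singleton G (u j)
  · intro v S hS hv
    have := h4 v (S.image u) (by rw [Finset.card_image_of_injective _ hinj, hS]) (by
      intro x hx
      obtain ⟨j, hj, rfl⟩ := Finset.mem_image.mp hx
      exact hv j hj)
    rwa [Finset.image_biUnion] at this
  · intro v j hv hvj
    exact h5 v r (u j) hv hvj (by simpa using (hru j).ne)

lemma det_sparse (G : SimpleGraph (Fin n)) (A : Finset (Fin n)) (t σ slack : ℕ)
    (hdeg : GoodDeg G A t slack) (D : Fin (t + 1) → Finset (Fin n)) (hDA : ∀ j, D j ⊆ A)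
    (hDc : ∀ j, CutConn G (D j)) (hDd : ∀ i j, i ≠ j → Disjoint (D i) (D j))
    (hDn : ∀ j, (D j).card + 2 ≤ n)
    (h4 : Good4 G A D σ slack) (h5 : Good5 G A D σ) (r : Fin n) : HasISTs G r t := by
  have : Nonempty (Fin n) := ⟨r⟩
  obtain ⟨e, he, her⟩ : ∃ e : Fin t → Fin (t + 1), Function.Injective e ∧ ∀ j, r ∉ D (e j) := by
    by_cases h : ∃ i, r ∈ D i
    · obtain ⟨i, hi⟩ := h
      refine ⟨i.succAbove, Fin.succAbove_right_injective, fun j hj => ?_⟩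
      exact Finset.disjoint_left.mp (hDd _ i (Fin.succAbove_ne i j)) hj hi
    · push Not at h
      exact ⟨Fin.castSucc, Fin.castSucc_injective t, fun j => h _⟩
  have h4' : Good4 G A (fun j => D (e j)) σ slack := by
    intro v S hS hv
    have := h4 v (S.image e) (by rw [Finset.card_image_of_injective _ he, hS]) (by
      intro x hx
      obtain ⟨j, hj, rfl⟩ := Finset.mem_image.mp hx
      exact hv j hj)
    rwa [Finset.image_biUnion] at this
  obtain ⟨u, hu, huinj⟩ := hall_slack (Finset.univ : Finset (Fin t))
    (Finset.univ.filter (fun w => G.Adj r w ∧ w ∉ A))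
    (fun j w => ∃ x ∈ D (e j), G.Adj w x) σ slack (by
      have hd := hdeg r
      have hsub : (Finset.univ.filter (fun w => G.Adj r w)) ⊆
          (Finset.univ.filter (fun w => G.Adj r w ∧ w ∉ A)) ∪ A.filter (fun w => G.Adj r w) := by
        intro w hw
        have hw := (Finset.mem_filter.mp hw).2
        by_cases h1 : w ∈ A <;> simp [h1, hw]
      have c1 := Finset.card_le_card hsub
      have c2 := Finset.card_union_le (Finset.univ.filter (fun w => G.Adj r w ∧ w ∉ A))
        (A.filter (fun w => G.Adj r w))
      rw [Finset.card_univ, Fintype.card_fin]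
      omega) (by
      intro S _ hc
      refine le_trans (Finset.card_le_card ?_) (h4' r S hc (fun j _ => her j))
      intro w hw
      simp only [Finset.mem_filter, Finset.mem_univ, true_and] at hw
      obtain ⟨⟨hvw, hwA⟩, hwX⟩ := hw
      simp only [cnt4, Finset.mem_filter, Finset.mem_compl, Finset.mem_union, Finset.mem_singleton,
        Finset.mem_biUnion, not_or]
      refine ⟨⟨⟨hwA, ?_⟩, hvw.ne'⟩, hvw, ?_⟩
      · rintro ⟨j, _, hj⟩
        exact hwA (hDA _ hj)
      · rintro x ⟨j, hj, hx⟩ hwx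
        exact hwX j hj ⟨x, hx, hwx⟩) (by
      intro j _
      obtain ⟨v, hv⟩ : ∃ v, v ∉ insert r (D (e j)) := by
        by_contra hcon
        push Not at hcon
        have h1 : (Finset.univ : Finset (Fin n)) ⊆ insert r (D (e j)) := fun x _ => hcon x
        have h2 := Finset.card_le_card h1
        have h3 := Finset.card_insert_le r (D (e j))
        have h4 := hDn (e j)
        rw [Finset.card_univ, Fintype.card_fin] at h2
        omega
      rw [Finset.mem_insert, not_or] at hv
      refine le_trans (h5 r v (e j) (Ne.symm hv.1) (her j) hv.2) (Finset.card_le_card ?_)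
      intro w hw
      simp only [cnt5, Finset.mem_filter, Finset.mem_compl, Finset.mem_union, Finset.mem_singleton,
        Finset.mem_insert, not_or] at hw
      obtain ⟨⟨⟨hwA, -⟩, -, hwr⟩, hvw, hrw, hx⟩ := hw
      simp only [Finset.mem_filter, Finset.mem_univ, true_and]
      exact ⟨⟨hvw, hwA⟩, hx⟩)
  have hu' : ∀ j, G.Adj r (u j) ∧ u j ∉ A := fun j => by
    simpa using (hu j (Finset.mem_univ _)).1
  refine ists_det G r A t σ slack u (fun j => D (e j))
    (fun i j h => huinj i (Finset.mem_univ _) j (Finset.mem_univ _) h)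
    (fun j => (hu' j).1) (fun j => (hu' j).2)
    (fun j => (hDA _).trans (Finset.subset_insert _ _)) her
    (fun i j hij => hDd _ _ (fun h => hij (he h))) ?_ hdeg h4' ?_
  · intro j
    obtain ⟨x, hx, hux⟩ := (hu j (Finset.mem_univ _)).2
    exact (hDc (e j)).ins hx (fun h => (hu' j).2 (hDA _ h)) hux.symm
  · intro v j hv hvj
    exact h5 v r (e j) hv hvj (her j)

end Det2

section RG
variable {n : ℕ}

/-- graph of a configuration -/
def gr (ω : Sym2 (Fin n) → Bool) : SimpleGraph (Fin n) where
  Adj a b := a ≠ b ∧ ω s(a, b) = true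
  symm := ⟨fun a b h => ⟨h.1.symm, by rw [Sym2.eq_swap]; exact h.2⟩⟩
  loopless := ⟨fun _ h => h.1 rfl⟩

lemma gr_adj (ω : Sym2 (Fin n) → Bool) (a b : Fin n) :
    (gr ω).Adj a b ↔ a ≠ b ∧ ω s(a, b) = true := Iff.rfl

lemma Pr_gr_eq (p : ℝ) (G : SimpleGraph (Fin n)) :
    Pr p (fun ω => gr ω = G) =
      p ^ (Nat.card G.edgeSet) * (1 - p) ^ (n.choose 2 - Nat.card G.edgeSet) := by
  let F₁ : Finset (Sym2 (Fin n)) := Finset.univ.filter (fun e => e ∈ G.edgeSet)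
  let F₂ : Finset (Sym2 (Fin n)) := Finset.univ.filter (fun e => ¬ e.IsDiag ∧ e ∉ G.edgeSet)
  have hd : Disjoint F₁ F₂ := by
    rw [Finset.disjoint_left]
    intro e h1 h2
    exact (Finset.mem_filter.mp h2).2.2 (Finset.mem_filter.mp h1).2
  have hev : (fun ω : Sym2 (Fin n) → Bool => gr ω = G) =
      fun ω => (∀ e ∈ F₁, ω e = true) ∧ (∀ e ∈ F₂, ω e = false) := by
    funext ω
    apply propext
    constructor
    · rintro rfl
      constructor
      · intro e he
        induction e using Sym2.ind with
        | _ a b =>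
          have := (Finset.mem_filter.mp he).2
          rw [SimpleGraph.mem_edgeSet, gr_adj] at this
          exact this.2
      · intro e he
        induction e using Sym2.ind with
        | _ a b =>
          have := (Finset.mem_filter.mp he).2
          rw [SimpleGraph.mem_edgeSet, gr_adj] at this
          simp only [Sym2.mk_isDiag_iff, not_and, Bool.not_eq_true] at this
          exact this.2 this.1
    · rintro ⟨h1, h2⟩
      ext a b
      rw [gr_adj]
      constructor
      · rintro ⟨hab, hω⟩
        by_contra hG
        have := h2 s(a, b) (Finset.mem_filter.mpr ⟨Finset.mem_univ _, by
          simp only [Sym2.mk_isDiag_iff]; exact hab, by rwa [SimpleGraph.mem_edgeSet]⟩)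
        rw [this] at hω; exact absurd hω (by simp)
      · intro hG
        exact ⟨hG.ne, h1 _ (Finset.mem_filter.mpr ⟨Finset.mem_univ _, by rwa [SimpleGraph.mem_edgeSet]⟩)⟩
  have c1 : F₁.card = Nat.card G.edgeSet := by
    rw [Nat.card_coe_set_eq, ← Set.ncard_coe_finset]
    congr 1
    ext e; simp [F₁]
  have c2 : F₁.card + F₂.card = n.choose 2 := by
    rw [← Finset.card_union_of_disjoint hd]
    have h3 : F₁ ∪ F₂ = Finset.univ.filter (fun e : Sym2 (Fin n) => ¬ e.IsDiag) := by
      ext e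
      simp only [F₁, F₂, Finset.mem_union, Finset.mem_filter, Finset.mem_univ, true_and]
      constructor
      · rintro (h | h)
        · exact G.not_isDiag_of_mem_edgeSet h
        · exact h.1
      · intro h
        by_cases h' : e ∈ G.edgeSet
        · exact Or.inl h'
        · exact Or.inr ⟨h, h'⟩
    rw [h3, ← Fintype.card_subtype]
    have := Sym2.card_subtype_not_diag (α := Fin n)
    rw [Fintype.card_fin] at this
    convert this
  rw [hev, Pr_cyl p F₁ F₂ hd, c1, ← c1, ← c2]
  congr 2
  omega

lemma erProb_eq (p : ℝ) (A : SimpleGraph (Fin n) → Prop) :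
    erProb n p A = Pr p (fun ω => A (gr ω)) := by
  unfold erProb
  have h1 : Pr p (fun ω => A (gr ω)) =
      Ex p (fun ω => ∑ G : SimpleGraph (Fin n), (ind (A G)) * ind (gr ω = G)) := by
    unfold Pr
    congr 1
    funext ω
    simp [ind]
  rw [h1, Ex_sum]
  refine Finset.sum_congr (by congr) fun G _ => ?_
  rw [Ex_mul_left]
  have := Pr_gr_eq p G
  unfold Pr at this
  rw [this]
  by_cases h : A G
  · rw [ind_true h, if_pos h, one_mul]
  · rw [ind_false h, if_neg h, zero_mul]

/-- edges between `w` and `A` -/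
def row (A : Finset (Fin n)) (w : Fin n) : Set (Sym2 (Fin n)) := {e | ∃ x ∈ A, e = s(w, x)}

lemma row_disjoint (A : Finset (Fin n)) (w w' : Fin n) (hw : w ∉ A) (h : w ≠ w') :
    Disjoint (row A w) (row A w') := by
  rw [Set.disjoint_left]
  rintro e ⟨x, hx, rfl⟩ ⟨y, hy, h2⟩
  rw [Sym2.eq_iff] at h2
  rcases h2 with ⟨h3, _⟩ | ⟨h3, _⟩
  · exact h h3
  · rw [h3] at hw; exact hw hy

lemma Pr_adj (p : ℝ) {v w : Fin n} (h : v ≠ w) : Pr p (fun ω => (gr ω).Adj v w) = p := by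
  have := Pr_cyl p ({s(v, w)} : Finset (Sym2 (Fin n))) ∅ (by simp)
  simp only [Finset.mem_singleton, forall_eq, Finset.notMem_empty, false_implies, implies_true,
    and_true, Finset.card_singleton, Finset.card_empty, pow_one, pow_zero, mul_one] at this
  simp only [gr_adj, ne_eq, h, not_false_eq_true, true_and]
  exact this

lemma dep_adj (A : Finset (Fin n)) {v w : Fin n} (hv : v ∈ A) :
    ∀ ω ω' : Sym2 (Fin n) → Bool, (∀ e ∈ row A w, ω e = ω' e) →
      ((gr ω).Adj v w ↔ (gr ω').Adj v w) := by
  intro ω ω' h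
  rw [gr_adj, gr_adj, h s(v, w) ⟨v, hv, Sym2.eq_swap⟩]

lemma card_star (X : Finset (Fin n)) (w : Fin n) : (X.image (fun x => s(w, x))).card = X.card := by
  apply Finset.card_image_of_injective
  intro a b h
  have h' : a = b ∨ (w = b ∧ a = w) := by simpa using h
  rcases h' with h' | ⟨h1, h2⟩
  · exact h'
  · exact h2.trans h1

lemma Pr_star {p : ℝ} {v w : Fin n} (X : Finset (Fin n)) (hvw : v ≠ w) (hv : v ∉ X) (hw : w ∉ X) :
    Pr p (fun ω => (gr ω).Adj v w ∧ ∀ x ∈ X, ¬ (gr ω).Adj w x) = p * (1 - p) ^ X.card := by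
  have := Pr_cyl p ({s(v, w)} : Finset (Sym2 (Fin n))) (X.image (fun x => s(w, x))) (by
    rw [Finset.disjoint_singleton_left, Finset.mem_image]
    rintro ⟨x, hx, h⟩
    rw [Sym2.eq_iff] at h
    rcases h with ⟨h1, h2⟩ | ⟨h1, h2⟩
    · exact hvw h1.symm
    · rw [h2] at hx; exact hv hx)
  rw [card_star] at this
  simp only [Finset.mem_singleton, forall_eq, Finset.card_singleton, pow_one,
    Finset.forall_mem_image] at this
  rw [← this]
  congr 1
  funext ω
  simp only [gr_adj, hvw, ne_eq, not_false_eq_true, true_and, not_and, Bool.not_eq_true]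
  apply propext
  refine and_congr_right fun _ => forall₂_congr fun x hx => ?_
  have : w ≠ x := by rintro rfl; exact hw hx
  simp [this]

/-- L1 -/
lemma L1 {p : ℝ} (h0 : 0 ≤ p) (h1 : p ≤ 1) (v : Fin n) (η : ℝ) (hη : 0 ≤ η) (hη1 : η ≤ 1) :
    Pr p (fun ω => ((Finset.univ.filter (fun w => (gr ω).Adj v w)).card : ℝ) ≤ (1 - η) * (n * p)) ≤
      Real.exp (1 - η ^ 2 / 2 * (n * p)) := by
  have key := chernoff_lower h0 h1 (Finset.univ.erase v) (row {v})
    (fun i hi j hj hij => row_disjoint _ _ _ (by simpa using (Finset.ne_of_mem_erase hi)) hij)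
    (fun w ω => (gr ω).Adj v w)
    (fun w _ ω ω' h => propext (dep_adj {v} (by simp) ω ω' h)) p (((n:ℝ) - 1) * p)
    ((1 - η) * (n * p)) η hη hη1
    (fun w hw => (Pr_adj p (Finset.ne_of_mem_erase hw).symm).ge) (by
      rw [Finset.card_erase_of_mem (Finset.mem_univ _), Finset.card_univ, Fintype.card_fin,
        Nat.cast_sub v.pos]; simp)
  have he : ∀ ω : Sym2 (Fin n) → Bool, (Finset.univ.erase v).filter (fun w => (gr ω).Adj v w) =
      Finset.univ.filter (fun w => (gr ω).Adj v w) := by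
    intro ω
    ext w
    simp only [Finset.mem_filter, Finset.mem_erase, Finset.mem_univ, and_true, true_and,
      and_iff_right_iff_imp]
    intro h; exact h.ne'
  simp only [he] at key
  refine key.trans (Real.exp_le_exp.mpr ?_)
  nlinarith [mul_nonneg h0 hη, mul_nonneg h0 (sq_nonneg η), mul_le_mul h1 hη1 hη zero_le_one]

/-- L2 -/
lemma L2 {p : ℝ} (h0 : 0 ≤ p) (h1 : p ≤ 1) (v : Fin n) (A : Finset (Fin n)) (k : ℝ) :
    Pr p (fun ω => k ≤ ((A.filter (fun w => (gr ω).Adj v w)).card : ℝ)) ≤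
      Real.exp (2 * (A.card * p) - k) := by
  have key := chernoff_upper h0 h1 (A.erase v) (row {v})
    (fun i hi j hj hij => row_disjoint _ _ _ (by simpa using (Finset.ne_of_mem_erase hi)) hij)
    (fun w ω => (gr ω).Adj v w)
    (fun w _ ω ω' h => propext (dep_adj {v} (by simp) ω ω' h)) p (A.card * p) k
    (fun w hw => (Pr_adj p (Finset.ne_of_mem_erase hw).symm).le) (by
      refine mul_le_mul_of_nonneg_right ?_ h0
      exact_mod_cast Finset.card_le_card (Finset.erase_subset _ _))
  have he : ∀ ω : Sym2 (Fin n) → Bool, (A.erase v).filter (fun w => (gr ω).Adj v w) =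
      A.filter (fun w => (gr ω).Adj v w) := by
    intro ω
    ext w
    simp only [Finset.mem_filter, Finset.mem_erase]
    constructor
    · rintro ⟨⟨_, h⟩, h'⟩; exact ⟨h, h'⟩
    · rintro ⟨h, h'⟩; exact ⟨⟨h'.ne', h⟩, h'⟩
  simpa only [he] using key

lemma L4 {p : ℝ} (h0 : 0 ≤ p) (h1 : p ≤ 1) (v : Fin n) (A X : Finset (Fin n)) (hv : v ∉ X) (k : ℝ) :
    Pr p (fun ω => k ≤ ((cnt4 (gr ω) A X v).card : ℝ)) ≤
      Real.exp (2 * (n * (p * (1 - p) ^ X.card)) - k) := by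
  have key := chernoff_upper h0 h1 ((A ∪ X ∪ {v})ᶜ) (row (A ∪ X ∪ {v}))
    (fun i hi j hj hij => row_disjoint _ _ _ (Finset.mem_compl.mp hi) hij)
    (fun w ω => (gr ω).Adj v w ∧ ∀ x ∈ X, ¬ (gr ω).Adj w x) ?_ (p * (1 - p) ^ X.card)
    (n * (p * (1 - p) ^ X.card)) k ?_ ?_
  · refine le_trans (le_of_eq ?_) key
    unfold cnt4
    congr! 6
  · intro w _ ω ω' h
    refine propext (and_congr (dep_adj (A ∪ X ∪ {v}) (by simp) ω ω' h)
      (forall₂_congr fun x hx => not_congr ?_))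
    rw [SimpleGraph.adj_comm, SimpleGraph.adj_comm (gr ω')]
    exact dep_adj (A ∪ X ∪ {v}) (by simp [hx]) ω ω' h
  · intro w hw
    simp only [Finset.mem_compl, Finset.mem_union, Finset.mem_singleton, not_or] at hw
    exact (Pr_star X (Ne.symm hw.2) hv hw.1.2).le
  · refine mul_le_mul_of_nonneg_right ?_ (mul_nonneg h0 (pow_nonneg (by linarith) _))
    have := Finset.card_le_univ ((A ∪ X ∪ {v})ᶜ)
    rw [Fintype.card_fin] at this
    exact_mod_cast this

lemma L5 {p : ℝ} (h0 : 0 ≤ p) (h1 : p ≤ 1) (v r : Fin n) (hvr : v ≠ r) (A X : Finset (Fin n))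
    (hv : v ∉ X) (hr : r ∉ X) (k m : ℝ)
    (hm : m ≤ ((A ∪ X ∪ {v, r})ᶜ : Finset (Fin n)).card * (p * (1 - p) * (1 - (1 - p) ^ X.card))) :
    Pr p (fun ω => ((cnt5 (gr ω) A X v r).card : ℝ) ≤ k) ≤ Real.exp (k - m / 2) := by
  have key := chernoff_lower h0 h1 ((A ∪ X ∪ {v, r})ᶜ) (row (A ∪ X ∪ {v, r}))
    (fun i hi j hj hij => row_disjoint _ _ _ (Finset.mem_compl.mp hi) hij)
    (fun w ω => (gr ω).Adj v w ∧ ¬ (gr ω).Adj r w ∧ ∃ x ∈ X, (gr ω).Adj w x) ?_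
    (p * (1 - p) * (1 - (1 - p) ^ X.card)) m k 1 zero_le_one le_rfl ?_ hm
  · have e0 : Pr p (fun ω => ((cnt5 (gr ω) A X v r).card : ℝ) ≤ k) ≤ _ :=
      le_trans (le_of_eq (by unfold cnt5; congr! 6)) key
    refine e0.trans (Real.exp_le_exp.mpr ?_)
    linarith
  · intro w _ ω ω' h
    refine propext (and_congr (dep_adj (A ∪ X ∪ {v, r}) (by simp) ω ω' h)
      (and_congr (not_congr (dep_adj (A ∪ X ∪ {v, r}) (by simp) ω ω' h)) 
      (exists_congr fun x => and_congr_right fun hx => ?_)))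
    rw [SimpleGraph.adj_comm, SimpleGraph.adj_comm (gr ω')]
    exact dep_adj (A ∪ X ∪ {v, r}) (by simp [hx]) ω ω' h
  · intro w hw
    simp only [Finset.mem_compl, Finset.mem_union, Finset.mem_insert, Finset.mem_singleton,
      not_or] at hw
    obtain ⟨⟨hwA, hwX⟩, hwv, hwr⟩ := hw
    have e1 := Pr_star (p := p) (v := v) (w := w) {r} (Ne.symm hwv) (by simpa using hvr)
      (by simpa using hwr)
    have e2 := Pr_star (p := p) (v := v) (w := w) (insert r X) (Ne.symm hwv)
      (by simpa using ⟨hvr, hv⟩) (by simpa using ⟨hwr, hwX⟩)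
    rw [Finset.card_singleton, pow_one] at e1
    rw [Finset.card_insert_of_notMem hr, pow_succ] at e2
    have e3 : p * (1 - p) * (1 - (1 - p) ^ X.card) =
        Pr p (fun ω => (gr ω).Adj v w ∧ ∀ x ∈ ({r} : Finset (Fin n)), ¬ (gr ω).Adj w x) -
        Pr p (fun ω => (gr ω).Adj v w ∧ ∀ x ∈ insert r X, ¬ (gr ω).Adj w x) := by
      rw [e1, e2]; ring
    rw [e3]
    unfold Pr
    rw [← Ex_sub]
    refine Ex_mono h0 h1 fun ω => ?_
    by_cases a1 : (gr ω).Adj v w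
    · by_cases a2 : (gr ω).Adj r w
      · have a3 := a2.symm
        simp [ind, a1, a2, a3]
      · have a3 : ¬ (gr ω).Adj w r := fun h => a2 h.symm
        by_cases a4 : ∃ x ∈ X, (gr ω).Adj w x
        · simp [ind, a1, a2, a3, a4]
          split_ifs <;> norm_num
        · have a5 := a4
          push Not at a5
          simp [ind, a1, a2, a3, a4]
          rw [if_pos a5]
    · simp [ind, a1]

lemma L3 {p : ℝ} (h0 : 0 ≤ p) (h1 : p ≤ 1) (R : Finset (Fin n)) (a : ℕ) :
    Pr p (fun ω => ¬ Joined (gr ω) R a) ≤ (2 ^ n * 2 ^ n) * (1 - p) ^ (a * a) := by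
  have key := Pr_exists_le h0 h1 (Finset.univ : Finset (Finset (Fin n) × Finset (Fin n)))
    (fun P (ω : Sym2 (Fin n) → Bool) => (Disjoint P.1 P.2 ∧ a ≤ P.1.card ∧ a ≤ P.2.card) ∧
      ∀ x ∈ P.1, ∀ y ∈ P.2, ¬ (gr ω).Adj x y) ((1 - p) ^ (a * a)) (by
      rintro ⟨X, Y⟩ -
      by_cases hc : Disjoint X Y ∧ a ≤ X.card ∧ a ≤ Y.card
      · have hcyl := Pr_cyl p ∅ ((X ×ˢ Y).image (fun z => s(z.1, z.2))) (by simp)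
        rw [Finset.card_image_of_injOn, Finset.card_product] at hcyl
        · simp only [Finset.notMem_empty, false_implies, implies_true, true_and,
            Finset.card_empty, pow_zero, one_mul] at hcyl
          refine (Pr_mono h0 h1 ?_).trans (hcyl.le.trans ?_)
          · rintro ω ⟨_, h⟩ e he
            obtain ⟨⟨x, y⟩, hxy, rfl⟩ := Finset.mem_image.mp he
            rw [Finset.mem_product] at hxy
            have h2 := h x hxy.1 y hxy.2
            have h3 : x ≠ y := by
              rintro rfl
              exact Finset.disjoint_left.mp hc.1 hxy.1 hxy.2
            rw [gr_adj] at h2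
            simpa [h3] using h2
          · exact pow_le_pow_of_le_one (by linarith) (by linarith) (Nat.mul_le_mul hc.2.1 hc.2.2)
        · rintro ⟨x, y⟩ hxy ⟨x', y'⟩ hxy' h
          simp only [Finset.coe_product, Set.mem_prod, Finset.mem_coe] at hxy hxy'
          simp only [Sym2.eq_iff] at h
          rcases h with ⟨h, h'⟩ | ⟨h, h'⟩
          · rw [h, h']
          · rw [h] at hxy
            exact absurd hxy'.2 (Finset.disjoint_left.mp hc.1 hxy.1)
      · refine le_trans (le_of_eq ?_) (pow_nonneg (by linarith) _)
        simp only [hc, false_and]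
        unfold Pr
        simp only [ind, if_false]
        exact Ex_const p 0)
  have hcard : ((Finset.univ : Finset (Finset (Fin n) × Finset (Fin n))).card : ℝ) = 2 ^ n * 2 ^ n := by
    simp [Finset.card_univ, Fintype.card_prod, Fintype.card_finset]
  rw [hcard] at key
  refine le_trans (Pr_mono h0 h1 ?_) key
  intro ω h
  unfold Joined at h
  push Not at h
  obtain ⟨X, _, Y, _, hd, hX, hY, h⟩ := h
  exact ⟨(X, Y), Finset.mem_univ _, ⟨hd, hX, hY⟩, h⟩

end RG

section Final
variable {n : ℕ}

lemma B_deg {p ε : ℝ} (h0 : 0 ≤ p) (h1 : p ≤ 1) (hε : 0 < ε) (hε1 : ε < 1 / 2)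
    (A : Finset (Fin n)) (hA : (A.card : ℝ) ≤ ε / 16 * n) (hd : 8 / ε ≤ n * p) :
    Pr p (fun ω => ¬ GoodDeg (gr ω) A ⌈(1 - ε) * n * p⌉₊ ⌊ε / 4 * (n * p)⌋₊) ≤
      n * (Real.exp (1 - ε ^ 2 / 32 * (n * p)) + Real.exp (- (ε / 8 * (n * p)))) := by
  have hd0 : 0 ≤ (n : ℝ) * p := mul_nonneg (Nat.cast_nonneg _) h0
  have key := Pr_exists_le h0 h1 (Finset.univ : Finset (Fin n))
    (fun v (ω : Sym2 (Fin n) → Bool) =>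
      ((Finset.univ.filter (fun w => (gr ω).Adj v w)).card : ℝ) ≤ (1 - ε / 4) * (n * p) ∨
      ε / 4 * (n * p) ≤ ((A.filter (fun w => (gr ω).Adj v w)).card : ℝ))
    (Real.exp (1 - ε ^ 2 / 32 * (n * p)) + Real.exp (- (ε / 8 * (n * p)))) (by
      intro v _
      refine (Pr_or_le h0 h1 _ _).trans (add_le_add ?_ ?_)
      · refine (L1 h0 h1 v (ε / 4) (by linarith) (by linarith)).trans (Real.exp_le_exp.mpr ?_)
        nlinarith
      · refine (L2 h0 h1 v A _).trans (Real.exp_le_exp.mpr ?_)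
        nlinarith [mul_le_mul_of_nonneg_right hA h0])
  rw [Finset.card_univ, Fintype.card_fin] at key
  refine le_trans (Pr_mono h0 h1 ?_) key
  intro ω h
  unfold GoodDeg at h
  push Not at h
  obtain ⟨v, hv⟩ := h
  refine ⟨v, Finset.mem_univ _, ?_⟩
  by_contra hc
  push Not at hc
  obtain ⟨hc1, hc2⟩ := hc
  have e1 : (⌈(1 - ε) * n * p⌉₊ : ℝ) < (1 - ε) * n * p + 1 :=
    Nat.ceil_lt_add_one (mul_nonneg (mul_nonneg (by linarith) (Nat.cast_nonneg _)) h0)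
  have e2 : (⌊ε / 4 * (n * p)⌋₊ : ℝ) ≤ ε / 4 * (n * p) :=
    Nat.floor_le (mul_nonneg (by linarith) hd0)
  have e3 : ((Finset.univ.filter (fun w => (gr ω).Adj v w)).card : ℝ) <
      ⌈(1 - ε) * n * p⌉₊ + ⌊ε / 4 * (n * p)⌋₊ + 1 + (A.filter (fun w => (gr ω).Adj v w)).card := by
    exact_mod_cast hv
  have e4 : 8 ≤ ε * (n * p) := by
    rw [div_le_iff₀ hε] at hd; linarith
  nlinarith

lemma B4 {ι : Type*} [Fintype ι] {p ε : ℝ} (h0 : 0 ≤ p) (h1 : p ≤ 1)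
    (A : Finset (Fin n)) (D : ι → Finset (Fin n)) (hι : Fintype.card ι ≤ n) (σ : ℕ)
    (hq : ∀ S : Finset ι, S.card = σ → (1 - p) ^ (S.biUnion D).card ≤ ε / 16) :
    Pr p (fun ω => ¬ Good4 (gr ω) A D σ ⌊ε / 4 * (n * p)⌋₊) ≤
      (n : ℝ) ^ (σ + 1) * Real.exp (- (ε / 8 * (n * p))) := by
  have key := Pr_exists_le h0 h1
    ((Finset.univ : Finset (Fin n)) ×ˢ (Finset.powersetCard σ (Finset.univ : Finset ι)))
    (fun P (ω : Sym2 (Fin n) → Bool) => (∀ j ∈ P.2, P.1 ∉ D j) ∧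
      ε / 4 * (n * p) ≤ ((cnt4 (gr ω) A (P.2.biUnion D) P.1).card : ℝ))
    (Real.exp (- (ε / 8 * (n * p)))) (by
      rintro ⟨v, S⟩ hP
      have hS := (Finset.mem_powersetCard.mp (Finset.mem_product.mp hP).2).2
      by_cases hc : ∀ j ∈ S, v ∉ D j
      · refine (Pr_mono h0 h1 fun ω h => h.2).trans ?_
        refine (L4 h0 h1 v A (S.biUnion D) (by simpa using hc) _).trans (Real.exp_le_exp.mpr ?_)
        have := mul_le_mul_of_nonneg_left (hq S hS) (mul_nonneg (Nat.cast_nonneg n) h0)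
        nlinarith
      · have : Pr p (fun ω : Sym2 (Fin n) → Bool => (∀ j ∈ S, v ∉ D j) ∧
            ε / 4 * (n * p) ≤ ((cnt4 (gr ω) A (S.biUnion D) v).card : ℝ)) = 0 := by
          unfold Pr
          simp only [hc, false_and, ind, if_false]
          exact Ex_const p 0
        simp only [this]
        exact (Real.exp_pos _).le)
  refine le_trans (Pr_mono h0 h1 ?_) (key.trans ?_)
  · intro ω h
    unfold Good4 at h
    push Not at h
    obtain ⟨v, S, hS, hv, hlt⟩ := h
    refine ⟨(v, S), ?_, hv, ?_⟩
    · simp [hS]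
    · exact (Nat.lt_of_floor_lt hlt).le
  · refine mul_le_mul_of_nonneg_right ?_ (Real.exp_pos _).le
    rw [Finset.card_product, Finset.card_powersetCard, Finset.card_univ, Finset.card_univ,
      Fintype.card_fin]
    have : n * (Fintype.card ι).choose σ ≤ n ^ (σ + 1) := by
      rw [pow_succ, mul_comm]
      refine Nat.mul_le_mul_right _ ((Nat.choose_le_pow _ _).trans (Nat.pow_le_pow_left hι _))
    exact_mod_cast this

lemma B5 {ι : Type*} [Fintype ι] {p ε δ : ℝ} (h0 : 0 ≤ p) (h1 : p ≤ 1 - ε) (hε : 0 < ε)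
    (hδ : 0 < δ)
    (A : Finset (Fin n)) (D : ι → Finset (Fin n)) (hι : Fintype.card ι ≤ n) (σ : ℕ)
    (hA : ∀ j, ((A ∪ D j).card : ℝ) + 2 ≤ n / 2)
    (hq : ∀ j, (1 - p) ^ (D j).card ≤ 1 - δ / 2) :
    Pr p (fun ω => ¬ Good5 (gr ω) A D σ) ≤
      (n : ℝ) ^ 3 * Real.exp (σ - ε * δ / 8 * (n * p)) := by
  have h1' : p ≤ 1 := by linarith
  have key := Pr_exists_le h0 h1'
    (Finset.univ : Finset (Fin n × Fin n × ι))
    (fun P (ω : Sym2 (Fin n) → Bool) => (P.1 ≠ P.2.1 ∧ P.1 ∉ D P.2.2 ∧ P.2.1 ∉ D P.2.2) ∧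
      ((cnt5 (gr ω) A (D P.2.2) P.1 P.2.1).card : ℝ) ≤ σ)
    (Real.exp (σ - ε * δ / 8 * (n * p))) (by
      rintro ⟨v, r, j⟩ -
      by_cases hc : v ≠ r ∧ v ∉ D j ∧ r ∉ D j
      · refine (Pr_mono h0 h1' fun ω h => h.2).trans ?_
        have hcard : (n : ℝ) / 2 ≤ ((A ∪ D j ∪ {v, r})ᶜ : Finset (Fin n)).card := by
          have e1 := Finset.card_union_le (A ∪ D j) {v, r}
          have e2 : ({v, r} : Finset (Fin n)).card ≤ 2 := Finset.card_le_two
          have e3 := Finset.card_add_card_compl (A ∪ D j ∪ {v, r})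
          rw [Fintype.card_fin] at e3
          have e4 : ((A ∪ D j ∪ {v, r}).card : ℝ) ≤ (A ∪ D j).card + 2 := by
            exact_mod_cast e1.trans (by omega)
          have e5 : ((A ∪ D j ∪ {v, r}).card : ℝ) +
            ((A ∪ D j ∪ {v, r})ᶜ : Finset (Fin n)).card = n := by exact_mod_cast e3
          have := hA j
          linarith
        have hm : ε * δ / 4 * (n * p) ≤ ((A ∪ D j ∪ {v, r})ᶜ : Finset (Fin n)).card *
            (p * (1 - p) * (1 - (1 - p) ^ (D j).card)) := by
          have e1 : p * ε * (δ / 2) ≤ p * (1 - p) * (1 - (1 - p) ^ (D j).card) := by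
            have := hq j
            apply mul_le_mul _ (by linarith) (by linarith) (mul_nonneg h0 (by linarith))
            exact mul_le_mul_of_nonneg_left (by linarith) h0
          have e2 := mul_le_mul hcard e1 (by positivity) (by positivity)
          refine le_trans (le_of_eq ?_) e2
          ring
        refine (L5 h0 h1' v r hc.1 A (D j) hc.2.1 hc.2.2 _ _ hm).trans (Real.exp_le_exp.mpr ?_)
        linarith
      · have : Pr p (fun ω : Sym2 (Fin n) → Bool => (v ≠ r ∧ v ∉ D j ∧ r ∉ D j) ∧
            ((cnt5 (gr ω) A (D j) v r).card : ℝ) ≤ σ) = 0 := by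
          unfold Pr
          simp only [hc, false_and, ind, if_false]
          exact Ex_const p 0
        simp only [this]
        exact (Real.exp_pos _).le)
  refine le_trans (Pr_mono h0 h1' ?_) (key.trans ?_)
  · intro ω h
    unfold Good5 at h
    push Not at h
    obtain ⟨v, r, j, hvr, hv, hr, hlt⟩ := h
    exact ⟨(v, r, j), Finset.mem_univ _, ⟨hvr, hv, hr⟩, by exact_mod_cast hlt.le⟩
  · refine mul_le_mul_of_nonneg_right ?_ (Real.exp_pos _).le
    rw [Finset.card_univ, Fintype.card_prod, Fintype.card_prod, Fintype.card_fin]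
    have : n * (n * Fintype.card ι) ≤ n ^ 3 := by
      calc n * (n * Fintype.card ι) ≤ n * (n * n) := by gcongr
        _ = n ^ 3 := by ring
    exact_mod_cast this


lemma pow_le_of {p x y : ℝ} (h1 : p ≤ 1) (k : ℕ) (hx : x ≤ p * k) (hy : Real.exp (-x) ≤ y) :
    (1 - p) ^ k ≤ y := by
  refine le_trans ?_ hy
  calc (1 - p) ^ k ≤ (Real.exp (-p)) ^ k := by
        refine pow_le_pow_left₀ (by linarith) ?_ _
        have := Real.add_one_le_exp (-p)
        linarith
    _ = Real.exp (k * (-p)) := by rw [Real.exp_nat_mul]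
    _ ≤ Real.exp (-x) := Real.exp_le_exp.mpr (by nlinarith)

lemma bound45 {ι : Type*} [Fintype ι] {p ε δ : ℝ} (h0 : 0 ≤ p) (h1 : p ≤ 1 - ε) (hε : 0 < ε)
    (hδ : 0 < δ) (hn : 1 ≤ n)
    (A : Finset (Fin n)) (D : ι → Finset (Fin n)) (hι : Fintype.card ι ≤ n) (σ : ℕ)
    (hq4 : ∀ S : Finset ι, S.card = σ → (1 - p) ^ (S.biUnion D).card ≤ ε / 16)
    (hA : ∀ j, ((A ∪ D j).card : ℝ) + 2 ≤ n / 2)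
    (hq : ∀ j, (1 - p) ^ (D j).card ≤ 1 - δ / 2)
    (H2 : Real.exp (- (ε / 8 * (n * p))) ≤ ((n : ℝ) ^ (σ + 2))⁻¹)
    (H5 : Real.exp (σ - ε * δ / 8 * (n * p)) ≤ ((n : ℝ) ^ 4)⁻¹) :
    Pr p (fun ω => ¬ Good4 (gr ω) A D σ ⌊ε / 4 * (n * p)⌋₊ ∨ ¬ Good5 (gr ω) A D σ) ≤ 2 / n := by
  have hn0 : (0 : ℝ) < n := by exact_mod_cast hn
  refine (Pr_or_le h0 (by linarith) _ _).trans ?_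
  have e4 := B4 h0 (by linarith) A D hι σ hq4
  have e5 := B5 h0 h1 hε hδ A D hι σ hA hq
  have f4 := e4.trans (mul_le_mul_of_nonneg_left H2 (by positivity))
  have f5 := e5.trans (mul_le_mul_of_nonneg_left H5 (by positivity))
  have g4 : (n : ℝ) ^ (σ + 1) * ((n : ℝ) ^ (σ + 2))⁻¹ = 1 / n := by
    field_simp
    ring
  have g5 : (n : ℝ) ^ 3 * ((n : ℝ) ^ 4)⁻¹ = 1 / n := by
    field_simp
  rw [g4] at f4
  rw [g5] at f5
  refine (add_le_add f4 f5).trans (le_of_eq ?_)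
  ring

lemma boundDeg {p ε : ℝ} (h0 : 0 ≤ p) (h1 : p ≤ 1) (hε : 0 < ε) (hε1 : ε < 1 / 2) (hn : 1 ≤ n)
    (A : Finset (Fin n)) (hA : (A.card : ℝ) ≤ ε / 16 * n) (hd : 8 / ε ≤ n * p) (σ : ℕ)
    (H1 : Real.exp (1 - ε ^ 2 / 32 * (n * p)) ≤ ((n : ℝ) ^ 2)⁻¹)
    (H2 : Real.exp (- (ε / 8 * (n * p))) ≤ ((n : ℝ) ^ (σ + 2))⁻¹) :
    Pr p (fun ω => ¬ GoodDeg (gr ω) A ⌈(1 - ε) * n * p⌉₊ ⌊ε / 4 * (n * p)⌋₊) ≤ 2 / n := by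
  have hn0 : (0 : ℝ) < n := by exact_mod_cast hn
  have hn1 : (1 : ℝ) ≤ n := by exact_mod_cast hn
  refine (B_deg h0 h1 hε hε1 A hA hd).trans ?_
  have H2' : Real.exp (- (ε / 8 * (n * p))) ≤ ((n : ℝ) ^ 2)⁻¹ := by
    refine H2.trans (inv_anti₀ (by positivity) (pow_le_pow_right₀ hn1 (by omega)))
  refine (mul_le_mul_of_nonneg_left (add_le_add H1 H2') hn0.le).trans (le_of_eq ?_)
  field_simp
  norm_num

lemma dense_case {p ε δ : ℝ} (h1 : p ≤ 1 - ε) (hε : 0 < ε) (hε1 : ε < 1 / 2)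
    (hδ : 0 < δ) (hn : 6 ≤ n) (hp : δ ≤ p) (σ : ℕ) (hσ : Real.exp (-(σ * δ)) ≤ ε / 16)
    (hd : 8 / ε ≤ n * p)
    (H1 : Real.exp (1 - ε ^ 2 / 32 * (n * p)) ≤ ((n : ℝ) ^ 2)⁻¹)
    (H2 : Real.exp (- (ε / 8 * (n * p))) ≤ ((n : ℝ) ^ (σ + 2))⁻¹)
    (H5 : Real.exp (σ - ε * δ / 8 * (n * p)) ≤ ((n : ℝ) ^ 4)⁻¹) :
    Pr p (fun ω : Sym2 (Fin n) → Bool => ¬ ∀ r, HasISTs (gr ω) r ⌈(1 - ε) * n * p⌉₊) ≤ 5 / n := by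
  have h0 : 0 ≤ p := by linarith
  have h1' : p ≤ 1 := by linarith
  have hn6 : (6 : ℝ) ≤ n := by exact_mod_cast hn
  have hb := boundDeg h0 h1' hε hε1 (by omega) (∅ : Finset (Fin n)) (by simp; positivity) hd σ H1 H2
  have hc := bound45 h0 h1 hε hδ (by omega) ∅ (fun x : Fin n => ({x} : Finset (Fin n))) (by simp) σ
    (by
      intro S hS
      rw [Finset.biUnion_singleton_eq_self, hS]
      refine pow_le_of h1' σ ?_ hσ
      nlinarith [Nat.cast_nonneg (α := ℝ) σ])
    (by intro j; simp; linarith)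
    (by intro j; simp; linarith) H2 H5
  have hor := Pr_or_le h0 h1' (fun ω => ¬ GoodDeg (gr ω) ∅ ⌈(1 - ε) * n * p⌉₊ ⌊ε / 4 * (n * p)⌋₊)
    (fun ω => ¬ Good4 (gr ω) ∅ (fun x : Fin n => ({x} : Finset (Fin n))) σ ⌊ε / 4 * (n * p)⌋₊ ∨
      ¬ Good5 (gr ω) ∅ (fun x : Fin n => ({x} : Finset (Fin n))) σ)
  refine le_trans (Pr_mono h0 h1' ?_) (hor.trans ((add_le_add hb hc).trans ?_))
  · intro ω h
    by_contra hcon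
    push Not at hcon
    exact h fun r => det_dense (gr ω) _ σ _ hcon.1 hcon.2.1 hcon.2.2 r
  · rw [← add_div]
    gcongr
    norm_num

/-- edges inside `A` -/
def inner (A : Finset (Fin n)) : Set (Sym2 (Fin n)) := {e | ∀ x ∈ e, x ∈ A}

lemma gr_inner (A : Finset (Fin n)) {ω ω' : Sym2 (Fin n) → Bool}
    (h : ∀ e ∈ inner A, ω e = ω' e) {a b : Fin n} (ha : a ∈ A) (hb : b ∈ A) :
    (gr ω).Adj a b ↔ (gr ω').Adj a b := by
  rw [gr_adj, gr_adj, h]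
  intro x hx
  rcases Sym2.mem_iff.mp hx with rfl | rfl <;> assumption

lemma gr_outer (A : Finset (Fin n)) {ω ω' : Sym2 (Fin n) → Bool}
    (h : ∀ e ∈ (inner A)ᶜ, ω e = ω' e) {a b : Fin n} (hb : b ∉ A) :
    (gr ω).Adj a b ↔ (gr ω').Adj a b := by
  rw [gr_adj, gr_adj, h]
  intro hx
  exact hb (hx b (Sym2.mem_mk_right _ _))

lemma cnt4_congr (A X : Finset (Fin n)) (v : Fin n) {ω ω' : Sym2 (Fin n) → Bool}
    (h : ∀ e ∈ (inner A)ᶜ, ω e = ω' e) : cnt4 (gr ω) A X v = cnt4 (gr ω') A X v := by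
  unfold cnt4
  apply Finset.filter_congr
  intro w hw
  simp only [Finset.mem_compl, Finset.mem_union, Finset.mem_singleton, not_or] at hw
  refine and_congr (gr_outer A h hw.1.1) (forall₂_congr fun x _ => not_congr ?_)
  rw [SimpleGraph.adj_comm, SimpleGraph.adj_comm (gr ω')]
  exact gr_outer A h hw.1.1

lemma cnt5_congr (A X : Finset (Fin n)) (v r : Fin n) {ω ω' : Sym2 (Fin n) → Bool}
    (h : ∀ e ∈ (inner A)ᶜ, ω e = ω' e) : cnt5 (gr ω) A X v r = cnt5 (gr ω') A X v r := by
  unfold cnt5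
  apply Finset.filter_congr
  intro w hw
  simp only [Finset.mem_compl, Finset.mem_union, not_or] at hw
  refine and_congr (gr_outer A h hw.1.1) (and_congr (not_congr (gr_outer A h hw.1.1))
    (exists_congr fun x => and_congr_right fun _ => ?_))
  rw [SimpleGraph.adj_comm, SimpleGraph.adj_comm (gr ω')]
  exact gr_outer A h hw.1.1

/-- a valid family of cores -/
def Fam (G : SimpleGraph (Fin n)) (A : Finset (Fin n)) (s m : ℕ) (D : Fin m → Finset (Fin n)) :
    Prop :=
  (∀ j, D j ⊆ A ∧ (D j).card = s ∧ CutConn G (D j)) ∧ ∀ i j, i ≠ j → Disjoint (D i) (D j)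

lemma fam_congr (A : Finset (Fin n)) (s m : ℕ) {ω ω' : Sym2 (Fin n) → Bool}
    (h : ∀ e ∈ inner A, ω e = ω' e) : Fam (gr ω) A s m = Fam (gr ω') A s m := by
  funext D
  apply propext
  unfold Fam
  refine and_congr_left fun _ => forall_congr' fun j => and_congr_right fun hj =>
    and_congr_right fun _ => ?_
  unfold CutConn
  refine forall₂_congr fun Y hY => forall₂_congr fun _ _ => exists_congr fun y =>
    and_congr_right fun hy => exists_congr fun z => and_congr_right fun hz =>
    and_congr_right fun _ => ?_
  exact gr_inner A h (hj (hY hy)) (hj hz)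

/-- choice of a valid family -/
def selFam (m : ℕ) (P : (Fin m → Finset (Fin n)) → Prop) : Fin m → Finset (Fin n) :=
  if h : ∃ D, P D then h.choose else fun _ => ∅

lemma selFam_spec {m : ℕ} {P : (Fin m → Finset (Fin n)) → Prop} (h : ∃ D, P D) :
    P (selFam m P) := by
  unfold selFam
  rw [dif_pos h]
  exact h.choose_spec

lemma sparse_core {p ε δ : ℝ} (h0 : 0 ≤ p) (h1 : p ≤ 1 - ε) (hε : 0 < ε) (hε1 : ε < 1 / 2)
    (hδ : 0 < δ) (hδ1 : δ ≤ 1) (hn : 6 ≤ n) (σ : ℕ) (hσ : Real.exp (-(σ * δ)) ≤ ε / 16)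
    (hd : 8 / ε ≤ n * p)
    (H1 : Real.exp (1 - ε ^ 2 / 32 * (n * p)) ≤ ((n : ℝ) ^ 2)⁻¹)
    (H2 : Real.exp (- (ε / 8 * (n * p))) ≤ ((n : ℝ) ^ (σ + 2))⁻¹)
    (H5 : Real.exp (σ - ε * δ / 8 * (n * p)) ≤ ((n : ℝ) ^ 4)⁻¹)
    (A : Finset (Fin n)) (hA : (A.card : ℝ) ≤ ε / 16 * n) (a s : ℕ) (hs1 : 1 ≤ s) (hsa : s ≤ a)
    (hcard : (⌈(1 - ε) * n * p⌉₊ + 1) * s + 3 * a ≤ A.card)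
    (htn : ⌈(1 - ε) * n * p⌉₊ + 1 ≤ n)
    (hps : δ ≤ p * s)
    (H3 : (2 ^ n * 2 ^ n) * (1 - p) ^ (a * a) ≤ 1 / n) :
    Pr p (fun ω : Sym2 (Fin n) → Bool => ¬ ∀ r, HasISTs (gr ω) r ⌈(1 - ε) * n * p⌉₊) ≤ 5 / n := by
  have h1' : p ≤ 1 := by linarith
  have hn6 : (6 : ℝ) ≤ n := by exact_mod_cast hn
  have hA2 : (A.card : ℝ) + 2 ≤ n / 2 := by nlinarith
  have hb := boundDeg h0 h1' hε hε1 (by omega) A hA hd σ H1 H2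
  have hj := (L3 h0 h1' A a).trans H3
  generalize htt : ⌈(1 - ε) * n * p⌉₊ = t at *
  have hsel := Pr_sel_le h0 h1' (S := inner A) (T := (inner A)ᶜ) disjoint_compl_right
    (fun ω => Fam (gr ω) A s (t + 1) (selFam (t + 1) (Fam (gr ω) A s (t + 1))))
    (fun ω => selFam (t + 1) (Fam (gr ω) A s (t + 1)))
    (fun ω ω' h => by simp only [fam_congr A s (t + 1) h])
    (fun D ω => ¬ Good4 (gr ω) A D σ ⌊ε / 4 * (n * p)⌋₊ ∨ ¬ Good5 (gr ω) A D σ)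
    (fun D ω ω' h => by
      unfold Good4 Good5
      simp only [cnt4_congr A _ _ h, cnt5_congr A _ _ _ h])
    (2 / n) (by positivity) (by
      rintro D ⟨ω, hF, rfl⟩
      set D := selFam (t + 1) (Fam (gr ω) A s (t + 1)) with hD
      refine bound45 h0 h1 hε hδ (by omega) A D (by simpa using htn) σ ?_ ?_ ?_ H2 H5
      · intro S hS
        rw [Finset.card_biUnion (fun i _ j _ hij => hF.2 i j hij),
          Finset.sum_congr rfl (fun j _ => (hF.1 j).2.1), Finset.sum_const, hS, smul_eq_mul]
        refine pow_le_of h1' _ ?_ hσ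
        push_cast
        nlinarith [Nat.cast_nonneg (α := ℝ) σ]
      · intro j
        rw [Finset.union_eq_left.mpr (hF.1 j).1]
        exact hA2
      · intro j
        rw [(hF.1 j).2.1]
        refine pow_le_of h1' _ hps ?_
        have e1 := Real.add_one_le_exp δ
        have e2 : Real.exp (-δ) * Real.exp δ = 1 := by rw [← Real.exp_add]; simp
        have e3 := Real.exp_pos (-δ)
        by_contra hcon
        push Not at hcon
        have : (1 - δ / 2) * (δ + 1) < Real.exp (-δ) * Real.exp δ := by
          apply mul_lt_mul hcon e1 (by linarith) e3.le
        nlinarith)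
  have hor := Pr_or_le h0 h1' (fun ω => ¬ GoodDeg (gr ω) A t ⌊ε / 4 * (n * p)⌋₊)
    (fun ω => ¬ Joined (gr ω) A a)
  have hor2 := Pr_or_le h0 h1' (fun ω => ¬ GoodDeg (gr ω) A t ⌊ε / 4 * (n * p)⌋₊ ∨
    ¬ Joined (gr ω) A a) _ |>.trans (add_le_add (hor.trans (add_le_add hb hj)) hsel)
  refine le_trans (Pr_mono h0 h1' ?_) (hor2.trans (le_of_eq ?_))
  · intro ω h
    by_contra hcon
    push Not at hcon
    obtain ⟨⟨hg, hJ⟩, hs⟩ := hcon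
    have hF : Fam (gr ω) A s (t + 1) (selFam (t + 1) (Fam (gr ω) A s (t + 1))) := by
      apply selFam_spec
      obtain ⟨D, hD1, hD2⟩ := exists_family (gr ω) A a s hJ hs1 hsa (t + 1) hcard
      exact ⟨fun j => D j, fun j => hD1 j j.2, fun i j hij => hD2 i i.2 j j.2 (by
        intro h; exact hij (Fin.ext h))⟩
    obtain ⟨g4, g5⟩ := hs hF
    refine h fun r => det_sparse (gr ω) A t σ _ hg _ (fun j => (hF.1 j).1)
      (fun j => (hF.1 j).2.2) hF.2 (fun j => ?_) g4 g5 r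
    have e1 := Finset.card_le_card (hF.1 j).1
    have e2 : (A.card : ℝ) + 2 ≤ n := by linarith
    have e3 : A.card + 2 ≤ n := by exact_mod_cast e2
    omega
  · ring

set_option maxHeartbeats 1000000 in
lemma sparse_case {p ε δ : ℝ} (h0 : 0 < p) (h1 : p ≤ 1 - ε) (hε : 0 < ε) (hε1 : ε < 1 / 2)
    (hδ : δ = ε / 128) (hp : p < δ) (hn : 256 ≤ ε * n) (σ : ℕ)
    (hσ : Real.exp (-(σ * δ)) ≤ ε / 16)
    (hd : 8 / ε ≤ n * p) (hd3 : 768 / (ε / 16) ^ 2 ≤ n * p)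
    (H1 : Real.exp (1 - ε ^ 2 / 32 * (n * p)) ≤ ((n : ℝ) ^ 2)⁻¹)
    (H2 : Real.exp (- (ε / 8 * (n * p))) ≤ ((n : ℝ) ^ (σ + 2))⁻¹)
    (H5 : Real.exp (σ - ε * δ / 8 * (n * p)) ≤ ((n : ℝ) ^ 4)⁻¹) :
    Pr p (fun ω : Sym2 (Fin n) → Bool => ¬ ∀ r, HasISTs (gr ω) r ⌈(1 - ε) * n * p⌉₊) ≤ 5 / n := by
  have hδ0 : 0 < δ := by rw [hδ]; linarith
  have h1' : p ≤ 1 := by linarith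
  have hnR : (512 : ℝ) ≤ n := by nlinarith [Nat.cast_nonneg (α := ℝ) n]
  have hn6 : 6 ≤ n := by
    have : (6 : ℝ) ≤ n := by linarith
    exact_mod_cast this
  have hd8 : 8 ≤ ε * (n * p) := by rw [div_le_iff₀ hε] at hd; linarith
  have hd4 : 4 ≤ n * p := by nlinarith
  have ht : (⌈(1 - ε) * n * p⌉₊ : ℝ) + 1 ≤ n * p := by
    have := Nat.ceil_lt_add_one (a := (1 - ε) * n * p)
      (mul_nonneg (mul_nonneg (by linarith) (Nat.cast_nonneg _)) h0.le)
    nlinarith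
  have hs_lo : δ / p ≤ (⌈δ / p⌉₊ : ℝ) := Nat.le_ceil _
  have hdp : 1 < δ / p := (one_lt_div h0).mpr hp
  have hs_hi : (⌈δ / p⌉₊ : ℝ) < δ / p + 1 := Nat.ceil_lt_add_one (by linarith)
  have hpd : p * (δ / p) = δ := by field_simp
  have ha_hi : (⌊ε * n / 128⌋₊ : ℝ) ≤ ε * n / 128 := Nat.floor_le (by linarith)
  have ha_lo : ε * n / 128 < (⌊ε * n / 128⌋₊ : ℝ) + 1 := Nat.lt_floor_add_one _
  have hA_hi : (⌊ε * n / 16⌋₊ : ℝ) ≤ ε * n / 16 := Nat.floor_le (by linarith)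
  have hA_lo : ε * n / 16 < (⌊ε * n / 16⌋₊ : ℝ) + 1 := Nat.lt_floor_add_one _
  have hps2 : p * (⌈δ / p⌉₊ : ℝ) ≤ 2 * δ := by nlinarith
  obtain ⟨A, -, hAc⟩ := Finset.exists_subset_card_eq
    (s := (Finset.univ : Finset (Fin n))) (n := ⌊ε * n / 16⌋₊) (by
      rw [Finset.card_univ, Fintype.card_fin]
      have : (⌊ε * n / 16⌋₊ : ℝ) ≤ n := by nlinarith
      exact_mod_cast this)
  refine sparse_core h0.le h1 hε hε1 hδ0 (by linarith) hn6 σ hσ hd H1 H2 H5 A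
    (by rw [hAc]; linarith) ⌊ε * n / 128⌋₊ ⌈δ / p⌉₊ ?_ ?_ ?_ ?_ ?_ ?_
  · have : (1 : ℝ) ≤ ⌈δ / p⌉₊ := by linarith
    exact_mod_cast this
  · have e1 : (4 : ℝ) * ⌈δ / p⌉₊ ≤ n * (2 * δ) := by
      calc (4 : ℝ) * ⌈δ / p⌉₊ ≤ (n * p) * ⌈δ / p⌉₊ := by gcongr
        _ = n * (p * ⌈δ / p⌉₊) := by ring
        _ ≤ n * (2 * δ) := by gcongr
    have : (⌈δ / p⌉₊ : ℝ) ≤ ⌊ε * n / 128⌋₊ := by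
      rw [hδ] at e1 ⊢
      nlinarith
    exact_mod_cast this
  · rw [hAc]
    have e1 : ((⌈(1 - ε) * n * p⌉₊ : ℝ) + 1) * ⌈δ / p⌉₊ ≤ n * (2 * δ) := by
      calc ((⌈(1 - ε) * n * p⌉₊ : ℝ) + 1) * ⌈δ / p⌉₊ ≤ (n * p) * ⌈δ / p⌉₊ := by gcongr
        _ = n * (p * ⌈δ / p⌉₊) := by ring
        _ ≤ n * (2 * δ) := by gcongr
    have : ((⌈(1 - ε) * n * p⌉₊ : ℝ) + 1) * ⌈δ / p⌉₊ + 3 * ⌊ε * n / 128⌋₊ ≤ ⌊ε * n / 16⌋₊ := by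
      have e2 : (n : ℝ) * (2 * δ) = ε * n / 64 := by rw [hδ]; ring
      linarith
    exact_mod_cast this
  · have : (⌈(1 - ε) * n * p⌉₊ : ℝ) + 1 ≤ n := by nlinarith
    exact_mod_cast this
  · exact hpd.symm.le.trans (mul_le_mul_of_nonneg_left hs_lo h0.le)
  · have hn0 : (0 : ℝ) < n := by linarith
    have e1 : (1 - p) ^ (⌊ε * n / 128⌋₊ * ⌊ε * n / 128⌋₊) ≤ Real.exp (-(3 * n)) := by
      refine pow_le_of h1' _ ?_ le_rfl
      push_cast
      have e2 : ε * n / 256 ≤ (⌊ε * n / 128⌋₊ : ℝ) := by linarith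
      have e3 : (ε * n / 256) * (ε * n / 256) ≤ (⌊ε * n / 128⌋₊ : ℝ) * ⌊ε * n / 128⌋₊ := by
        have : 0 ≤ ε * n / 256 := by positivity
        gcongr
      have e4 := mul_le_mul_of_nonneg_left e3 h0.le
      rw [div_le_iff₀ (by positivity)] at hd3
      nlinarith
    have e2 : (2 : ℝ) ^ n ≤ Real.exp n := by
      have : (2 : ℝ) ≤ Real.exp 1 := by have := Real.add_one_le_exp 1; linarith
      calc (2 : ℝ) ^ n ≤ (Real.exp 1) ^ n := by gcongr
        _ = Real.exp n := by rw [← Real.exp_nat_mul, mul_one]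
    calc (2 ^ n * 2 ^ n) * (1 - p) ^ (⌊ε * n / 128⌋₊ * ⌊ε * n / 128⌋₊)
        ≤ (Real.exp n * Real.exp n) * Real.exp (-(3 * n)) := by
          refine mul_le_mul (mul_le_mul e2 e2 (by positivity) (by positivity)) e1
            (pow_nonneg (by linarith) _) (by positivity)
      _ = Real.exp (-n) := by rw [← Real.exp_add, ← Real.exp_add]; congr 1; ring
      _ ≤ 1 / n := by
          rw [Real.exp_neg, one_div]
          refine inv_anti₀ hn0 ?_
          have := Real.add_one_le_exp (n : ℝ)
          linarith

lemma exp_le_inv_pow {x : ℝ} (hn : 1 ≤ n) (k : ℕ) (h : x ≤ -(k * Real.log n)) :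
    Real.exp x ≤ ((n : ℝ) ^ k)⁻¹ := by
  have hn0 : (0 : ℝ) < n := by exact_mod_cast hn
  refine (Real.exp_le_exp.mpr h).trans (le_of_eq ?_)
  rw [Real.exp_neg, Real.exp_nat_mul, Real.exp_log hn0]

lemma main_bound (ε : ℝ) (hε : 0 < ε) (hε1 : ε < 1 / 2) :
    ∃ C : ℝ, 1 < C ∧ ∃ N : ℕ, ∀ n : ℕ, N ≤ n → ∀ p : ℝ, C * Real.log n / n ≤ p → p ≤ 1 - ε →
      0 ≤ p ∧ Pr p (fun ω : Sym2 (Fin n) → Bool =>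
        ¬ ∀ r, HasISTs (gr ω) r ⌈(1 - ε) * n * p⌉₊) ≤ 5 / n := by
  obtain ⟨δ, hδ⟩ : ∃ δ, δ = ε / 128 := ⟨_, rfl⟩
  have hδ0 : 0 < δ := by rw [hδ]; linarith
  obtain ⟨σ, hσ'⟩ := exists_nat_ge (Real.log (16 / ε) / δ)
  have hσ : Real.exp (-(σ * δ)) ≤ ε / 16 := by
    rw [div_le_iff₀ hδ0] at hσ'
    calc Real.exp (-(σ * δ)) ≤ Real.exp (- Real.log (16 / ε)) := Real.exp_le_exp.mpr (by linarith)
      _ = ε / 16 := by rw [Real.exp_neg, Real.exp_log (by positivity), inv_div]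
  obtain ⟨N, hN⟩ := exists_nat_ge (256 / ε)
  have c1 : 0 < 96 / ε ^ 2 := by positivity
  have c2 : 0 < 8 * (σ + 2) / ε := by positivity
  have c3 : 0 < 8 * (2 * σ + 4) / (ε * δ) := by positivity
  have c4 : 0 < 768 / (ε / 16) ^ 2 := by positivity
  have c5 : 0 < 8 / ε := by positivity
  obtain ⟨C, hC⟩ : ∃ C, C = 96 / ε ^ 2 + 8 * (σ + 2) / ε + 8 * (2 * σ + 4) / (ε * δ) +
    768 / (ε / 16) ^ 2 + 8 / ε + 2 := ⟨_, rfl⟩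
  refine ⟨C, by linarith, max 6 N, fun n hn p hp1 hp2 => ?_⟩
  have hn6 : 6 ≤ n := (le_max_left _ _).trans hn
  have hnN : N ≤ n := (le_max_right _ _).trans hn
  have hn6' : (6 : ℝ) ≤ n := by exact_mod_cast hn6
  have hn0 : (0 : ℝ) < n := by linarith
  have hlog : 1 ≤ Real.log n := by
    rw [Real.le_log_iff_exp_le hn0]
    have := Real.exp_one_lt_d9
    linarith
  have hd : C * Real.log n ≤ n * p := by
    rw [div_le_iff₀ hn0] at hp1; linarith
  have hdC : C ≤ n * p := by nlinarith
  have hp0 : 0 < p := by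
    have : 0 < n * p := by linarith
    exact pos_of_mul_pos_right this hn0.le
  have hεn : 256 ≤ ε * n := by
    rw [div_le_iff₀ hε] at hN
    have : (N : ℝ) ≤ n := by exact_mod_cast hnN
    nlinarith
  have aux : ∀ x κ : ℝ, 0 < κ → x / κ ≤ C → x * Real.log n ≤ κ * (n * p) := by
    intro x κ hκ hx
    rw [div_le_iff₀ hκ] at hx
    calc x * Real.log n ≤ (C * κ) * Real.log n := by gcongr
      _ = κ * (C * Real.log n) := by ring
      _ ≤ κ * (n * p) := by gcongr
  have H1 : Real.exp (1 - ε ^ 2 / 32 * (n * p)) ≤ ((n : ℝ) ^ 2)⁻¹ := by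
    apply exp_le_inv_pow (by omega)
    have := aux 3 (ε ^ 2 / 32) (by positivity) (by
      have : 3 / (ε ^ 2 / 32) = 96 / ε ^ 2 := by field_simp; norm_num
      rw [this]; linarith)
    push_cast
    linarith
  have H2 : Real.exp (- (ε / 8 * (n * p))) ≤ ((n : ℝ) ^ (σ + 2))⁻¹ := by
    apply exp_le_inv_pow (by omega)
    have := aux (σ + 2) (ε / 8) (by positivity) (by
      have : (σ + 2) / (ε / 8) = 8 * (σ + 2) / ε := by field_simp
      rw [this]; linarith)
    push_cast
    linarith
  have H5 : Real.exp (σ - ε * δ / 8 * (n * p)) ≤ ((n : ℝ) ^ 4)⁻¹ := by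
    apply exp_le_inv_pow (by omega)
    have := aux (2 * σ + 4) (ε * δ / 8) (by positivity) (by
      have : (2 * σ + 4) / (ε * δ / 8) = 8 * (2 * σ + 4) / (ε * δ) := by field_simp
      rw [this]; linarith)
    push_cast
    nlinarith [Nat.cast_nonneg (α := ℝ) σ]
  refine ⟨hp0.le, ?_⟩
  rcases lt_or_ge p δ with h | h
  · exact sparse_case hp0 hp2 hε hε1 hδ h hεn σ hσ (by linarith) (by linarith) H1 H2 H5
  · exact dense_case hp2 hε hε1 hδ0 hn6 h σ hσ (by linarith) H1 H2 H5

end Final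

end
end ISTproof

/-- For every `ε ∈ (0,1/2)` there is a constant `C > 1` such that whenever
`C log n / n ≤ p(n) ≤ 1 - ε`, with high probability `G(n, p(n))` contains, for every
vertex `r`, at least `⌈(1-ε) n p(n)⌉` independent spanning trees rooted at `r`. -/
theorem stmt3 (ε : ℝ) (hε₀ : 0 < ε) (hε₁ : ε < 1/2) :
    ∃ C : ℝ, 1 < C ∧ ∀ p : ℕ → ℝ,
      (∀ᶠ n : ℕ in Filter.atTop, C * Real.log n / n ≤ p n ∧ p n ≤ 1 - ε) →
      Filter.Tendsto
        (fun n : ℕ => erProb n (p n)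
          (fun G => ∀ r : Fin n, HasISTs G r ⌈(1 - ε) * n * p n⌉₊))
        Filter.atTop (nhds 1) := by
  obtain ⟨C, hC, N, hN⟩ := ISTproof.main_bound ε hε₀ hε₁
  refine ⟨C, hC, fun p hp => ?_⟩
  have hlim : Filter.Tendsto (fun n : ℕ => 1 - (5 : ℝ) / n) Filter.atTop (nhds 1) := by
    have := tendsto_const_div_atTop_nhds_zero_nat (5 : ℝ)
    simpa using tendsto_const_nhds (x := (1 : ℝ)).sub this
  refine tendsto_of_tendsto_of_tendsto_of_le_of_le' hlim tendsto_const_nhds ?_ ?_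
  · filter_upwards [hp, Filter.eventually_ge_atTop N] with n h1 h2
    obtain ⟨h3, h4⟩ := hN n h2 (p n) h1.1 h1.2
    rw [ISTproof.Pr_not] at h4
    rw [ISTproof.erProb_eq]
    linarith
  · filter_upwards [hp, Filter.eventually_ge_atTop N] with n h1 h2
    obtain ⟨h3, h4⟩ := hN n h2 (p n) h1.1 h1.2
    rw [ISTproof.erProb_eq]
    exact ISTproof.Pr_le_one h3 (by linarith [h1.2]) _
end
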